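/- arXiv:2505.24364 — 2 statements merged into one kernel-verified Lean document; each statement's English description precedes it below -/
import Mathlib

section
/- Let G be a simple graph on n ≥ 3 vertices that is outer 5-planar, i.e., its vertices can be arranged in a cyclic order (equivalently, placed in convex position with straight-line edges) such that every edge is crossed by at most 5 other edges. Then G has at most (389/98)·(n − 2) edges. -/
/-- `x` lies strictly between `a` and `b` in the cyclic order of `Fin n`
(going forward from `a` to `b` along the cycle). -/
def cycBtw (n : ℕ) (a b x : Fin n) : Prop :=
  0 < (x.val + n - a.val) % n ∧ (x.val + n - a.val) % n < (b.val + n - a.val) % n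

/-- Two edges `e` and `f` cross in the cyclic order determined by the positions `σ`:
they have four distinct endpoints and the endpoints interleave, i.e. exactly one
endpoint of `f` lies strictly between the endpoints of `e`. -/
def crossing (n : ℕ) (σ : Fin n → Fin n) (e f : Sym2 (Fin n)) : Prop :=
  ∃ a b c d : Fin n, e = s(a, b) ∧ f = s(c, d) ∧
    a ≠ b ∧ c ≠ d ∧ a ≠ c ∧ a ≠ d ∧ b ≠ c ∧ b ≠ d ∧
    (cycBtw n (σ a) (σ b) (σ c) ↔ ¬ cycBtw n (σ a) (σ b) (σ d))

/-- With respect to the cyclic order given by positions `σ`, every edge of `G`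
is crossed by at most `k` other edges. -/
def OuterKPlanarOrd (n k : ℕ) (σ : Fin n → Fin n) (G : SimpleGraph (Fin n)) : Prop :=
  ∀ e ∈ G.edgeSet, ({f ∈ G.edgeSet | crossing n σ e f}).ncard ≤ k

/-- `G` is outer `k`-planar: its vertices can be arranged in a cyclic order such
that every edge is crossed by at most `k` other edges. -/
def IsOuterKPlanar (n k : ℕ) (G : SimpleGraph (Fin n)) : Prop :=
  ∃ σ : Fin n ≃ Fin n, OuterKPlanarOrd n k (⇑σ) G

/-!
Take a minimal counterexample and add the edges of the outer cycle, which are not crossed. By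
minimality, for no chord `{a, b}` may the vertices behind it be replaced by an edge, so that many
edges end behind the chord. A chord that is crossed at most five times and has a vertex behind it
is a side of a triangle whose other two sides are crossed at most five times as well; hence,
starting from an edge of the outer cycle, the drawing is cut into triangles along such chords.

What the graph looks like behind a chord matters only through a record: the number of vertices and
edges there, and the sequence of vertices there from which edges leave across the chord, with the
numbers of these edges and the numbers of edges that they cross on their way to the chord.
Irremovability leaves finitely many records, and `sideTable` dominates all of them: it contains the
record of an edge of the outer cycle, and the kernel checks that, if two sides of a triangle are
described by the table, then so is the third. The edge of the outer cycle reached last is the only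
exception: all other vertices lie behind it and it is not crossed. There the check yields the bound
itself, unless `n = 7`, where the graph misses two edges of `K₇`.
-/

namespace OuterPlanar

open Finset

/-! ### Edges between intervals of vertices -/

/-- The number of edges between the intervals `[p, q)` and `[r, s)` of vertices, where `A` is the
adjacency function of a graph on `ℕ`. -/
def blockSum (A : ℕ → ℕ → ℕ) (p q r s : ℕ) : ℕ := ∑ u ∈ Ico p q, ∑ v ∈ Ico r s, A u v

section blockSum

variable {A : ℕ → ℕ → ℕ} {p q r s m : ℕ}

theorem blockSum_split_left (h₁ : p ≤ m) (h₂ : m ≤ q) :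
    blockSum A p q r s = blockSum A p m r s + blockSum A m q r s :=
  (sum_Ico_consecutive _ h₁ h₂).symm

theorem blockSum_split_right (h₁ : r ≤ m) (h₂ : m ≤ s) :
    blockSum A p q r s = blockSum A p q r m + blockSum A p q m s := by
  simp only [blockSum, ← sum_add_distrib]
  exact sum_congr rfl fun u _ => (sum_Ico_consecutive _ h₁ h₂).symm

theorem blockSum_comm (hA : ∀ i j, A i j = A j i) (p q r s : ℕ) :
    blockSum A p q r s = blockSum A r s p q := by
  rw [blockSum, sum_comm]
  exact sum_congr rfl fun v _ => sum_congr rfl fun u _ => hA u v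

@[simp] theorem blockSum_single (i j : ℕ) : blockSum A i (i + 1) j (j + 1) = A i j := by
  simp [blockSum]

theorem blockSum_eq_zero_of_le_left (h : q ≤ p) : blockSum A p q r s = 0 := by
  simp [blockSum, Ico_eq_empty_of_le h]

theorem blockSum_eq_zero_of_le_right (h : s ≤ r) : blockSum A p q r s = 0 := by
  simp [blockSum, Ico_eq_empty_of_le h]

theorem blockSum_eq_zero (h : ∀ u v, p ≤ u → u < q → r ≤ v → v < s → A u v = 0) :
    blockSum A p q r s = 0 :=
  sum_eq_zero fun u hu => sum_eq_zero fun v hv =>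
    h u v (mem_Ico.1 hu).1 (mem_Ico.1 hu).2 (mem_Ico.1 hv).1 (mem_Ico.1 hv).2

theorem exists_of_blockSum_pos (h : 0 < blockSum A p q r s) :
    ∃ u v, p ≤ u ∧ u < q ∧ r ≤ v ∧ v < s ∧ A u v ≠ 0 := by
  by_contra! hc
  exact h.ne' (blockSum_eq_zero fun u v h₁ h₂ h₃ h₄ => hc u v h₁ h₂ h₃ h₄)

theorem eq_zero_of_blockSum_eq_zero (h : blockSum A p q r s = 0) {u v : ℕ} (h₁ : p ≤ u)
    (h₂ : u < q) (h₃ : r ≤ v) (h₄ : v < s) : A u v = 0 :=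
  sum_eq_zero_iff.1 (sum_eq_zero_iff.1 h u (mem_Ico.2 ⟨h₁, h₂⟩)) v (mem_Ico.2 ⟨h₃, h₄⟩)

theorem blockSum_comp_le {φ : ℕ → ℕ} (hφ : Function.Injective φ) {p' q' r' s' : ℕ}
    (h₁ : ∀ u, p ≤ u → u < q → p' ≤ φ u ∧ φ u < q')
    (h₂ : ∀ v, r ≤ v → v < s → r' ≤ φ v ∧ φ v < s') :
    blockSum (fun i j => A (φ i) (φ j)) p q r s ≤ blockSum A p' q' r' s' := by
  simp only [blockSum, ← sum_product']
  have := sum_image (s := Ico p q ×ˢ Ico r s) (f := fun x : ℕ × ℕ => A x.1 x.2)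
    (g := Prod.map φ φ) (hφ.prodMap hφ).injOn
  simp only [Prod.map_fst, Prod.map_snd] at this
  rw [← this]
  refine sum_le_sum_of_subset fun x hx => ?_
  obtain ⟨⟨u, v⟩, huv, rfl⟩ := mem_image.1 hx
  simp only [mem_product, mem_Ico, Prod.map_apply] at huv ⊢
  exact ⟨h₁ u huv.1.1 huv.1.2, h₂ v huv.2.1 huv.2.2⟩

theorem blockSum_mono {p' q' r' s' : ℕ} (hp : p' ≤ p) (hq : q ≤ q') (hr : r' ≤ r)
    (hs : s ≤ s') : blockSum A p q r s ≤ blockSum A p' q' r' s' :=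
  blockSum_comp_le (φ := id) Function.injective_id
    (fun _ h₁ h₂ => ⟨hp.trans h₁, h₂.trans_le hq⟩) fun _ h₁ h₂ => ⟨hr.trans h₁, h₂.trans_le hs⟩

end blockSum

/-! ### Crossings in a convex drawing -/

/-- The number of edges of `A` on the vertices `0, …, n - 1` that cross the chord `{i, j}`,
where `i < j`. -/
def crossCount (n : ℕ) (A : ℕ → ℕ → ℕ) (i j : ℕ) : ℕ :=
  blockSum A (i + 1) j 0 i + blockSum A (i + 1) j (j + 1) n

/-- The number of edges from `[p, q)` to the vertices outside `[a, b]`. -/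
def outSum (n : ℕ) (A : ℕ → ℕ → ℕ) (a b p q : ℕ) : ℕ :=
  blockSum A p q 0 a + blockSum A p q (b + 1) n

/-- `A` is the adjacency function of a graph on `0, …, n - 1`, drawn in convex position in this
order, in which every edge is crossed by at most `k` others. -/
structure IsOuterAdj (n k : ℕ) (A : ℕ → ℕ → ℕ) : Prop where
  le_one : ∀ i j, A i j ≤ 1
  symm : ∀ i j, A i j = A j i
  diag : ∀ i, A i i = 0
  cross : ∀ i j, i < j → j < n → A i j ≠ 0 → crossCount n A i j ≤ k

/-- The adjacency function of the mirror image. -/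
def mirror (n : ℕ) (A : ℕ → ℕ → ℕ) (i j : ℕ) : ℕ := A (n - 1 - i) (n - 1 - j)

section crossCount

variable {n k : ℕ} {A : ℕ → ℕ → ℕ} {a b p q r s : ℕ}

theorem sum_Ico_mirror {M : Type*} [AddCommMonoid M] (f : ℕ → M) (hq : q ≤ n) :
    ∑ u ∈ Ico (n - q) (n - p), f (n - 1 - u) = ∑ u ∈ Ico p q, f u := by
  rcases n.eq_zero_or_pos with rfl | hn
  · rw [Ico_eq_empty_of_le (by omega), Ico_eq_empty_of_le (by omega), sum_empty, sum_empty]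
  have := sum_Ico_reflect (fun u => f (n - 1 - u)) p (m := q) (n := n - 1) (by omega)
  rw [Nat.sub_add_cancel hn] at this
  rw [← this]
  refine sum_congr rfl fun u hu => congrArg f ?_
  have := (mem_Ico.1 hu).2
  omega

theorem blockSum_mirror (hq : q ≤ n) (hs : s ≤ n) :
    blockSum (mirror n A) (n - q) (n - p) (n - s) (n - r) = blockSum A p q r s := by
  simp only [blockSum, mirror]
  rw [sum_Ico_mirror (fun u => ∑ v ∈ Ico (n - s) (n - r), A u (n - 1 - v)) hq]
  exact sum_congr rfl fun u _ => sum_Ico_mirror (A u) hs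

theorem outSum_split {m : ℕ} (hpm : p ≤ m) (hmq : m ≤ q) :
    outSum n A a b p q = outSum n A a b p m + outSum n A a b m q := by
  simp only [outSum, blockSum_split_left hpm hmq]
  omega

theorem outSum_self : outSum n A a b p p = 0 := by
  simp only [outSum, blockSum_eq_zero_of_le_left le_rfl]

theorem crossCount_eq_outSum (has : a ≤ s) (hqb : q ≤ b) (hb : b < n) :
    crossCount n A s q = outSum n A a b (s + 1) q + blockSum A (s + 1) q a s +
      blockSum A (s + 1) q (q + 1) (b + 1) := by
  simp only [crossCount, outSum]
  rw [blockSum_split_right (Nat.zero_le a) has,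
    blockSum_split_right (m := b + 1) (r := q + 1) (by omega) hb]
  omega

theorem crossCount_left_eq (hqb : q ≤ b) (hb : b < n) :
    crossCount n A a q = outSum n A a b (a + 1) q + blockSum A (a + 1) q (q + 1) (b + 1) := by
  rw [crossCount_eq_outSum le_rfl hqb hb, blockSum_eq_zero_of_le_right le_rfl, add_zero]

theorem crossCount_right_eq (hA : ∀ i j, A i j = A j i) (has : a ≤ s) (hb : b < n) :
    crossCount n A s b = outSum n A a b (s + 1) b + blockSum A a s (s + 1) b := by
  rw [crossCount_eq_outSum has le_rfl hb, blockSum_eq_zero_of_le_right (r := b + 1) le_rfl,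
    blockSum_comm hA, add_zero]

theorem outSum_mirror (hab : a ≤ b) (hb : b < n) (hq : q ≤ n) :
    outSum n (mirror n A) (n - 1 - b) (n - 1 - a) (n - q) (n - p) = outSum n A a b p q := by
  rw [outSum, outSum, ← blockSum_mirror (A := A) (r := b + 1) hq le_rfl,
    ← blockSum_mirror (A := A) (r := 0) (s := a) hq (by omega), add_comm]
  congr 2 <;> omega

theorem crossCount_mirror {i j : ℕ} (hij : i < j) (hj : j < n) :
    crossCount n (mirror n A) (n - 1 - j) (n - 1 - i) = crossCount n A i j := by
  change outSum n _ _ _ (n - 1 - j + 1) (n - 1 - i) = outSum n A i j (i + 1) j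
  rw [← outSum_mirror hij.le hj hj.le]
  congr 1 <;> omega

theorem crossCount_eq_card {A : ℕ → ℕ → ℕ} (hA : ∀ i j, A i j ≤ 1) (i j : ℕ) :
    crossCount n A i j = #{x ∈ Ico (i + 1) j ×ˢ (Ico 0 i ∪ Ico (j + 1) n) | A x.1 x.2 ≠ 0} := by
  rw [crossCount, blockSum, blockSum, ← sum_add_distrib, card_filter, sum_product]
  refine sum_congr rfl fun p hp => ?_
  have hdisjoint : Disjoint (Ico 0 i) (Ico (j + 1) n) := disjoint_left.2 fun q h₁ h₂ => by
    rw [mem_Ico] at hp h₁ h₂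
    omega
  rw [← sum_union hdisjoint]
  refine sum_congr rfl fun q _ => ?_
  have hpq := hA p q
  change A p q = if A p q ≠ 0 then 1 else 0
  split_ifs <;> omega

theorem IsOuterAdj.mirror (hA : IsOuterAdj n k A) : IsOuterAdj n k (mirror n A) where
  le_one _ _ := hA.le_one _ _
  symm _ _ := hA.symm _ _
  diag _ := hA.diag _
  cross i j hij hj h := by
    have := crossCount_mirror (A := A) (i := n - 1 - j) (j := n - 1 - i) (n := n)
      (by omega) (by omega)
    rw [show n - 1 - (n - 1 - i) = i by omega, show n - 1 - (n - 1 - j) = j by omega] at this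
    rw [this]
    exact hA.cross _ _ (by omega) (by omega) (by rw [hA.symm]; exact h)

end crossCount

/-! ### The third vertex of a triangle -/

theorem exists_last_of_le {P : ℕ → Prop} {m b : ℕ} (hmb : m ≤ b) (hm : P m) :
    ∃ w, m ≤ w ∧ w ≤ b ∧ P w ∧ ∀ v, w < v → v ≤ b → ¬ P v := by
  classical
  exact ⟨_, Nat.le_findGreatest hmb hm, Nat.findGreatest_le b, Nat.findGreatest_spec hmb hm,
    fun _ hv hvb => Nat.findGreatest_is_greatest hv hvb⟩

theorem exists_outermost_edge {A : ℕ → ℕ → ℕ} {p q r t : ℕ} (h : 0 < blockSum A p q r t) :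
    ∃ s z, p ≤ s ∧ s < q ∧ r ≤ z ∧ z < t ∧ A s z ≠ 0 ∧ blockSum A p q (z + 1) t = 0 ∧
      blockSum A p s z (z + 1) = 0 := by
  classical
  obtain ⟨s₀, z₀, hs₀, hs₀', hz₀, hz₀', hsz₀⟩ := exists_of_blockSum_pos h
  obtain ⟨z, hz, hzt, hex, hlast⟩ :=
    exists_last_of_le (P := fun z => ∃ s, p ≤ s ∧ s < q ∧ A s z ≠ 0)
      (Nat.le_sub_one_of_lt hz₀') ⟨s₀, hs₀, hs₀', hsz₀⟩
  obtain ⟨hps, hsq, hsz⟩ := Nat.find_spec hex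
  refine ⟨Nat.find hex, z, hps, hsq, hz₀.trans hz, by omega, hsz,
    blockSum_eq_zero fun u v hpu huq hzv hvt => ?_, blockSum_eq_zero fun u v hpu hus hzv hvz => ?_⟩
  · by_contra huv
    exact hlast v hzv (by omega) ⟨u, hpu, huq, huv⟩
  · obtain rfl : v = z := by omega
    by_contra huv
    exact Nat.find_min hex hus ⟨hpu, by omega, huv⟩

section apex

variable {n k : ℕ} {A : ℕ → ℕ → ℕ} {a b u : ℕ}

/-- At most half of the edges that cross the chord `{a, b}` start on either side of `u`. -/
def IsMedian (n : ℕ) (A : ℕ → ℕ → ℕ) (a b u : ℕ) : Prop :=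
  2 * outSum n A a b (a + 1) u ≤ outSum n A a b (a + 1) b ∧
    2 * outSum n A a b (u + 1) b ≤ outSum n A a b (a + 1) b

theorem exists_isMedian (hab : a + 1 < b) : ∃ u, a < u ∧ u < b ∧ IsMedian n A a b u := by
  obtain ⟨u, hau, hub, hu, hlast⟩ := exists_last_of_le (m := a + 1) (b := b - 1)
    (P := fun u => 2 * outSum n A a b (a + 1) u ≤ outSum n A a b (a + 1) b) (by omega)
    (by rw [outSum_self]; exact Nat.zero_le _)
  refine ⟨u, hau, by omega, hu, ?_⟩
  rcases (show u + 1 ≤ b by omega).eq_or_lt with rfl | hub'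
  · rw [outSum_self]; exact Nat.zero_le _
  · have := hlast (u + 1) u.lt_succ_self (by omega)
    have := outSum_split (n := n) (A := A) (a := a) (b := b) (show a + 1 ≤ u + 1 by omega) hub'.le
    omega

theorem IsMedian.mirror (h : IsMedian n A a b u) (hau : a < u) (hub : u < b) (hb : b < n) :
    IsMedian n (mirror n A) (n - 1 - b) (n - 1 - a) (n - 1 - u) := by
  have hout (p q : ℕ) (hq : q ≤ n) := outSum_mirror (A := A) (p := p) (hau.trans hub).le hb hq
  have hleft := hout (a + 1) u (by omega)
  have hright := hout (u + 1) b hb.le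
  have htotal := hout (a + 1) b hb.le
  rw [show n - (a + 1) = n - 1 - a by omega, show n - b = n - 1 - b + 1 by omega] at htotal
  rw [show n - (a + 1) = n - 1 - a by omega, show n - u = n - 1 - u + 1 by omega] at hleft
  rw [show n - (u + 1) = n - 1 - u by omega, show n - b = n - 1 - b + 1 by omega] at hright
  rw [IsMedian, htotal, hleft, hright]
  exact h.symm

theorem crossCount_right_le_left (hA : ∀ i j, A i j = A j i) (hu : IsMedian n A a b u) {w : ℕ}
    (hau : a < u) (huw : u < w) (hwb : w < b) (hb : b < n)
    (hlast : ∀ v, w < v → v < b → A a v = 0) : crossCount n A w b ≤ crossCount n A a w := by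
  have split {p m q : ℕ} (hpm : p ≤ m) (hmq : m ≤ q) :=
    outSum_split (n := n) (A := A) (a := a) (b := b) hpm hmq
  have hnone : blockSum A a (a + 1) (w + 1) b = 0 := blockSum_eq_zero fun i v _ _ hv hvb => by
    obtain rfl : i = a := by omega
    exact hlast v hv hvb
  have hright := split (show u + 1 ≤ w + 1 by omega) (show w + 1 ≤ b from hwb)
  have htotal := split (show a + 1 ≤ u + 1 by omega) (show u + 1 ≤ b by omega)
  have hleft := split (show a + 1 ≤ u + 1 by omega) (show u + 1 ≤ w from huw)
  have hmono : blockSum A (a + 1) w (w + 1) b ≤ blockSum A (a + 1) w (w + 1) (b + 1) :=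
    blockSum_mono le_rfl le_rfl le_rfl b.le_succ
  have hu₂ := hu.2
  rw [crossCount_left_eq hwb.le hb, crossCount_right_eq hA (show a ≤ w by omega) hb,
    blockSum_split_left (m := a + 1) (by omega) (by omega), hnone]
  omega

theorem crossCount_left_le_right (hA : ∀ i j, A i j = A j i) (hu : IsMedian n A a b u) {s : ℕ}
    (has : a < s) (hsu : s < u) (hub : u < b) (hb : b < n)
    (hmin : blockSum A (a + 1) s b (b + 1) = 0) : crossCount n A a s ≤ crossCount n A s b := by
  have split {p m q : ℕ} (hpm : p ≤ m) (hmq : m ≤ q) :=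
    outSum_split (n := n) (A := A) (a := a) (b := b) hpm hmq
  have htotal := split (show a + 1 ≤ u by omega) hub.le
  have hleft := split (show a + 1 ≤ s from has) hsu.le
  have hright := split (show s + 1 ≤ u from hsu) hub.le
  have hmono : blockSum A (a + 1) s (s + 1) b ≤ blockSum A a s (s + 1) b :=
    blockSum_mono a.le_succ le_rfl le_rfl le_rfl
  have hu₁ := hu.1
  rw [crossCount_left_eq (by omega) hb, crossCount_right_eq hA has.le hb,
    blockSum_split_right (m := b) (by omega) b.le_succ, hmin]
  omega

/-- The edge `{s, z}` passes over `{a, z}` and `{s, b}`, so these two chords together are crossed at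
most as often as `{a, b}` and `{s, z}` together. -/
theorem crossCount_add_crossCount_le (hA : ∀ i j, A i j = A j i) {s z : ℕ} (has : a < s)
    (hsz : s < z) (hzb : z < b) (hb : b < n)
    (hfar : blockSum A (a + 1) (s + 1) (z + 1) (b + 1) = 0)
    (hs : blockSum A a s z b = 0) :
    crossCount n A a z + crossCount n A s b ≤ crossCount n A a b + crossCount n A s z := by
  have split {p m q : ℕ} (hpm : p ≤ m) (hmq : m ≤ q) :=
    outSum_split (n := n) (A := A) (a := a) (b := b) hpm hmq
  have htotal := split (show a + 1 ≤ s + 1 by omega) (show s + 1 ≤ b by omega)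
  have hleft := split (show a + 1 ≤ s + 1 by omega) (show s + 1 ≤ z from hsz)
  rw [crossCount_left_eq (a := a) (q := b) le_rfl hb, crossCount_left_eq (q := z) hzb.le hb,
    crossCount_right_eq hA has.le hb, crossCount_eq_outSum has.le hzb.le hb,
    blockSum_eq_zero_of_le_right (r := b + 1) le_rfl, blockSum_comm hA _ _ a s,
    blockSum_split_left (m := s + 1) (p := a + 1) (q := z) (by omega) hsz, hfar,
    blockSum_split_right (m := z) (s := b) (by omega) hzb.le, hs]
  omega

theorem exists_apex_of_outermost_edge (hA : ∀ i j, A i j = A j i) (hu : IsMedian n A a b u)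
    {s z : ℕ} (has : a < s) (hsu : s < u) (hub : u < b) (hsz : s < z) (hzb : z < b) (hb : b < n)
    (hk : crossCount n A a b ≤ k) (hcross : crossCount n A s z ≤ k)
    (hfar : blockSum A (a + 1) (s + 1) (z + 1) (b + 1) = 0)
    (hmin : blockSum A (a + 1) s z (z + 1) = 0) (ha : ∀ v, z ≤ v → v < b → A a v = 0)
    (hleft : z ≤ u → k < crossCount n A a z) :
    ∃ x, a < x ∧ x < b ∧ crossCount n A a x ≤ k ∧ crossCount n A x b ≤ k := by
  have hfar' : blockSum A (a + 1) s z (b + 1) = 0 := by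
    rw [blockSum_split_right (m := z + 1) (by omega) (by omega), hmin, zero_add]
    exact Nat.le_zero.1 ((blockSum_mono le_rfl s.le_succ le_rfl le_rfl).trans hfar.le)
  have hs : blockSum A a s z b = 0 := blockSum_eq_zero fun i v hi hi' hv hv' => by
    rcases hi.eq_or_lt with rfl | hai
    · exact ha v hv hv'
    · exact eq_zero_of_blockSum_eq_zero hfar' hai hi' hv (by omega)
  have hsum := crossCount_add_crossCount_le hA has hsz hzb hb hfar hs
  have hsb := crossCount_left_le_right hA hu has hsu hub hb
    (Nat.le_zero.1 ((blockSum_mono le_rfl le_rfl hzb.le le_rfl).trans hfar'.le))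
  by_cases hright : crossCount n A s b ≤ k
  · exact ⟨s, has, by omega, hsb.trans hright, hright⟩
  · have huz : u < z := by
      by_contra hzu
      have := hleft (by omega)
      omega
    have haz := crossCount_right_le_left hA hu (has.trans hsu) huz hzb hb
      fun v hv hv' => ha v hv.le hv'
    exact ⟨z, has.trans hsz, hzb, by omega, by omega⟩

theorem exists_apex_of_not_left (hA : IsOuterAdj n k A) (hu : IsMedian n A a b u) (hau : a < u)
    (hub : u < b) (hb : b < n) (hk : crossCount n A a b ≤ k) (hnot : k < crossCount n A a u) :
    ∃ x, a < x ∧ x < b ∧ crossCount n A a x ≤ k ∧ crossCount n A x b ≤ k := by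
  by_cases hw : ∃ w, u < w ∧ w < b ∧ A a w ≠ 0
  · obtain ⟨w₀, huw₀, hw₀b, hw₀⟩ := hw
    obtain ⟨w, hw, hwb, haw, hlast⟩ := exists_last_of_le (P := fun w => A a w ≠ 0) (m := w₀)
      (b := b - 1) (by omega) hw₀
    have haw' := hA.cross a w (by omega) (by omega) haw
    have hwb' := crossCount_right_le_left hA.symm hu hau (huw₀.trans_le hw) (by omega) hb
      fun v hv hvb => not_not.1 (hlast v hv (by omega))
    exact ⟨w, by omega, by omega, haw', hwb'.trans haw'⟩
  push Not at hw
  obtain ⟨y, hay, hyu, hy, hlast⟩ := exists_last_of_le (P := fun y => crossCount n A a y ≤ k)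
    (m := a + 1) (b := u) hau (by simp only [crossCount, blockSum_eq_zero_of_le_left le_rfl]; omega)
  replace hyu : y < u := hyu.lt_of_ne fun h => by rw [h] at hy; omega
  have ha (v : ℕ) (hyv : y < v) (hvb : v < b) : A a v = 0 := by
    by_contra hv
    rcases le_or_gt v u with hvu | huv
    · exact hlast v hyv hvu (hA.cross a v (by omega) (by omega) hv)
    · exact hv (hw v huv hvb)
  obtain ⟨s, z, has, hsy, hyz, hzb, hsz, hfar, hmin⟩ :=
    exists_outermost_edge (A := A) (p := a + 1) (q := y + 1) (r := y + 1 + 1) (t := b + 1) (by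
      have hy' := hlast (y + 1) y.lt_succ_self hyu
      rw [crossCount_left_eq (a := a) (q := b) le_rfl hb,
        blockSum_eq_zero_of_le_right (r := b + 1) le_rfl] at hk
      rw [crossCount_left_eq (by omega) hb] at hy'
      have := outSum_split (n := n) (A := A) (a := a) (b := b) (show a + 1 ≤ y + 1 by omega)
        (show y + 1 ≤ b by omega)
      omega)
  have hcross := hA.cross s z (by omega) (by omega) hsz
  rcases (show z ≤ b by omega).eq_or_lt with rfl | hzb'
  · exact ⟨s, has, by omega,
      (crossCount_left_le_right hA.symm hu has (by omega) hub hb hmin).trans hcross, hcross⟩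
  · exact exists_apex_of_outermost_edge hA.symm hu has (by omega) hub (by omega) hzb' hb hk hcross
      (Nat.le_zero.1 ((blockSum_mono le_rfl (by omega) le_rfl le_rfl).trans hfar.le)) hmin
      (fun v hzv hvb => ha v (by omega) hvb)
      fun hzu => not_le.1 (hlast z (by omega) hzu)

theorem IsOuterAdj.exists_apex (hA : IsOuterAdj n k A) (hab : a + 1 < b) (hb : b < n)
    (hk : crossCount n A a b ≤ k) :
    ∃ x, a < x ∧ x < b ∧ crossCount n A a x ≤ k ∧ crossCount n A x b ≤ k := by
  obtain ⟨u, hau, hub, hu⟩ := exists_isMedian (n := n) (A := A) hab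
  by_cases hleft : crossCount n A a u ≤ k
  · by_cases hright : crossCount n A u b ≤ k
    · exact ⟨u, hau, hub, hleft, hright⟩
    · obtain ⟨x, hbx, hxa, hx₁, hx₂⟩ := exists_apex_of_not_left hA.mirror (hu.mirror hau hub hb)
        (by omega) (by omega) (by omega) (by rwa [crossCount_mirror (hau.trans hub) hb])
        (by rw [crossCount_mirror hub hb]; omega)
      refine ⟨n - 1 - x, by omega, by omega, ?_, ?_⟩
      · rw [← crossCount_mirror (by omega) (by omega), show n - 1 - (n - 1 - x) = x by omega]
        exact hx₂
      · rw [← crossCount_mirror (by omega) (by omega), show n - 1 - (n - 1 - x) = x by omega]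
        exact hx₁
  · exact exists_apex_of_not_left hA hu hau hub hb hk (by omega)

end apex

/-! ### Records of chords and of split chords -/

/-- A port of a chord: a vertex behind the chord with `weight` edges to vertices beyond it, such
that `passing` edges with both ends behind or on the chord pass over this vertex. -/
structure Port where
  weight : ℕ
  passing : ℕ

/-- A port of the side `{a, x}` of a triangle `a, x, b`: `corner` edges end at `b`, `far` edges end
behind the side `{x, b}`, and `exit` edges cross the chord `{a, b}`. -/
structure SplitPort where
  passing : ℕ
  corner : ℕ
  far : ℕ
  exit : ℕ

/-- The port of the side that is split. -/
def SplitPort.port (e : SplitPort) : Port := ⟨e.corner + e.far + e.exit, e.passing⟩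

/-- What has to be known about a chord: the number `size` of the vertices behind it, the number
`inner` of other edges with both ends behind or on it, and its ports in order. -/
structure SideRecord where
  size : ℕ
  inner : ℕ
  ports : List Port

/-- What has to be known about a side of a triangle: here `inner` counts the side itself if it is an
edge, `far`, `exit` and `corner` are totals of the numbers in `SplitPort`, `peak` is the maximal
number of crossings seen from this side of a `corner` edge, `load` is the number of crossings seen
from this side of all `far` edges, `width` is the number of ports with `far` edges, and `ports` are
the ports of the third side of the triangle. -/
structure SplitRecord where
  size : ℕ
  inner : ℕ
  far : ℕ
  exit : ℕ
  corner : ℕ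
  peak : ℕ
  load : ℕ
  width : ℕ
  ports : List Port

-- Functions that the kernel evaluates often are written with bare recursors, which it reduces
-- several times faster than functions compiled from structural recursion.

/-- Application with the argument evaluated first: the kernel reduces call by name. -/
noncomputable def force (n : ℕ) (f : ℕ → Bool) : Bool :=
  Nat.rec (f 0) (fun n _ => f n.succ) n

/-- `(l.map f).sum`, for the kernel. -/
noncomputable def sumOf {α : Type} (f : α → ℕ) (l : List α) : ℕ :=
  List.rec 0 (fun x _ n => f x + n) l

/-- `l.all p`, for the kernel. -/
noncomputable def allOf {α : Type} (p : α → Bool) (l : List α) : Bool :=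
  List.rec true (fun x _ b => p x && b) l

/-- `l.any p`, for the kernel. -/
noncomputable def anyOf {α : Type} (p : α → Bool) (l : List α) : Bool :=
  List.rec false (fun x _ b => p x || b) l

/-- `(List.range n).all p`, for the kernel. -/
noncomputable def allBelow (n : ℕ) (p : ℕ → Bool) : Bool :=
  Nat.rec true (fun i b => p i && b) n

section evaluation

variable {α : Type}

theorem force_eq (n : ℕ) (f : ℕ → Bool) : force n f = f n := by cases n <;> rfl

theorem sumOf_eq (f : α → ℕ) (l : List α) : sumOf f l = (l.map f).sum := by
  induction l with
  | nil => rfl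
  | cons x l ih => rw [List.map_cons, List.sum_cons, ← ih]; rfl

theorem allOf_iff {p : α → Bool} {l : List α} : allOf p l = true ↔ ∀ x ∈ l, p x = true := by
  induction l with
  | nil => simp [allOf]
  | cons x l ih => rw [List.forall_mem_cons, ← ih, ← Bool.and_eq_true]; rfl

theorem anyOf_iff {p : α → Bool} {l : List α} : anyOf p l = true ↔ ∃ x ∈ l, p x = true := by
  induction l with
  | nil => simp [anyOf]
  | cons x l ih => rw [List.exists_mem_cons_iff, ← ih, ← Bool.or_eq_true]; rfl

theorem allBelow_iff {n : ℕ} {p : ℕ → Bool} : allBelow n p = true ↔ ∀ i < n, p i = true := by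
  induction n with
  | zero => simp [allBelow]
  | succ n ih => rw [Nat.forall_lt_succ_right, ← ih, and_comm, ← Bool.and_eq_true]; rfl

end evaluation

/-! ### Comparison of records -/

/-- The ports in `l` have the same weights as those in `m`, and at least as many edges pass over
them. -/
abbrev Dominates : List Port → List Port → Prop :=
  List.Forall₂ fun p q => p.weight = q.weight ∧ q.passing ≤ p.passing

/-- The total number of edges at the ports. -/
noncomputable def weight (l : List Port) : ℕ := sumOf Port.weight l

/-- Lets `d` further edges pass over all ports. -/
def shiftPorts (d : ℕ) (l : List Port) : List Port := l.map fun p => ⟨p.weight, p.passing + d⟩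

theorem Dominates.trans {l m k : List Port} (hlm : Dominates l m) (hmk : Dominates m k) :
    Dominates l k := by
  induction hlm generalizing k with
  | nil => exact hmk
  | cons hpq _ ih =>
    obtain _ | ⟨hqr, hmk⟩ := hmk
    exact .cons ⟨hpq.1.trans hqr.1, hqr.2.trans hpq.2⟩ (ih hmk)

theorem Dominates.shiftPorts {l m : List Port} (h : Dominates l m) (d : ℕ) :
    Dominates (shiftPorts d l) (shiftPorts d m) := by
  rw [Dominates, OuterPlanar.shiftPorts, OuterPlanar.shiftPorts, List.forall₂_map_left_iff,
    List.forall₂_map_right_iff]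
  exact h.imp fun p q hpq => ⟨hpq.1, Nat.add_le_add_right hpq.2 d⟩

theorem Dominates.weight_eq {l m : List Port} (h : Dominates l m) : weight l = weight m := by
  rw [weight, weight, sumOf_eq, sumOf_eq]
  induction h with
  | nil => rfl
  | cons hpq _ ih => rw [List.map_cons, List.map_cons, List.sum_cons, List.sum_cons, hpq.1, ih]

theorem Dominates.forall_passing_le {l m : List Port} (h : Dominates l m) {c d : ℕ}
    (hl : ∀ p ∈ l, p.passing + c ≤ d) : ∀ q ∈ m, q.passing + c ≤ d := by
  induction h with
  | nil => simp
  | cons hpq _ ih =>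
    rw [List.forall_mem_cons] at hl ⊢
    exact ⟨(Nat.add_le_add_right hpq.2 c).trans hl.1, ih hl.2⟩

/-- The side record `r` allows every configuration that `s` allows. -/
structure SideRecord.Covers (r s : SideRecord) : Prop where
  size : r.size = s.size
  inner : s.inner ≤ r.inner
  ports : Dominates s.ports r.ports

/-- `r` allows every configuration that `s` allows. -/
structure SplitRecord.Covers (r s : SplitRecord) : Prop where
  size : r.size = s.size
  inner : s.inner ≤ r.inner
  far : r.far = s.far
  exit : r.exit = s.exit
  corner : r.corner = s.corner
  peak : r.peak ≤ s.peak
  load : r.load ≤ s.load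
  width : s.width ≤ r.width
  ports : Dominates s.ports r.ports

theorem SideRecord.Covers.trans {r s t : SideRecord} (hrs : r.Covers s) (hst : s.Covers t) :
    r.Covers t :=
  ⟨hrs.size.trans hst.size, hst.inner.trans hrs.inner, hst.ports.trans hrs.ports⟩

theorem SplitRecord.Covers.refl (r : SplitRecord) : r.Covers r :=
  ⟨rfl, le_rfl, rfl, rfl, rfl, le_rfl, le_rfl, le_rfl, List.forall₂_same.2 fun _ _ => ⟨rfl, le_rfl⟩⟩

theorem SplitRecord.Covers.trans {r s t : SplitRecord} (hrs : r.Covers s) (hst : s.Covers t) :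
    r.Covers t where
  size := hrs.size.trans hst.size
  inner := hst.inner.trans hrs.inner
  far := hrs.far.trans hst.far
  exit := hrs.exit.trans hst.exit
  corner := hrs.corner.trans hst.corner
  peak := hrs.peak.trans hst.peak
  load := hrs.load.trans hst.load
  width := hst.width.trans hrs.width
  ports := hst.ports.trans hrs.ports

/-! ### Split lists of ports -/

/-- The number of `corner` edges. -/
noncomputable def cornerSum (l : List SplitPort) : ℕ := sumOf SplitPort.corner l

/-- The number of `far` edges. -/
noncomputable def farSum (l : List SplitPort) : ℕ := sumOf SplitPort.far l

/-- The number of `exit` edges. -/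
noncomputable def exitSum (l : List SplitPort) : ℕ := sumOf SplitPort.exit l

/-- The number of pairs of a `far` edge and an edge passing over its port. -/
noncomputable def farLoad (l : List SplitPort) : ℕ := sumOf (fun e => e.far * e.passing) l

/-- The number of ports with `far` edges. -/
noncomputable def farWidth (l : List SplitPort) : ℕ :=
  sumOf (fun e => bif Nat.beq e.far 0 then 0 else 1) l

/-- The maximal number of crossings of a `corner` edge with edges passing over its port, with `far`
edges from earlier ports, including `pre` further ones, and with `exit` edges from later ports. -/
noncomputable def peakCrossing (l : List SplitPort) : ℕ → ℕ :=
  List.rec (fun _ => 0) (fun e l peak pre => bif Nat.beq e.corner 0 then peak (pre + e.far) else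
    max (e.passing + pre + exitSum l) (peak (pre + e.far))) l

/-- The ports with `exit` edges; the `corner` and `far` edges of earlier ports, and `pre` further
ones, pass over them. -/
noncomputable def outPorts (l : List SplitPort) : ℕ → List Port :=
  List.rec (fun _ => []) (fun e _ ports pre => bif Nat.beq e.exit 0 then
    ports (pre + (e.corner + e.far)) else
    ⟨e.exit, e.passing + pre⟩ :: ports (pre + (e.corner + e.far))) l

/-- The record of a side with `size` vertices behind it and split ports `l`. -/
noncomputable def SplitRecord.ofPorts (size inner : ℕ) (l : List SplitPort) : SplitRecord :=
  ⟨size, inner, farSum l, exitSum l, cornerSum l, peakCrossing l 0, farLoad l, farWidth l,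
    outPorts l 0⟩

theorem peakCrossing_cons (e : SplitPort) (l : List SplitPort) (pre : ℕ) :
    peakCrossing (e :: l) pre = if e.corner = 0 then peakCrossing l (pre + e.far) else
      max (e.passing + pre + exitSum l) (peakCrossing l (pre + e.far)) := by
  rw [show peakCrossing (e :: l) pre = bif Nat.beq e.corner 0 then peakCrossing l (pre + e.far) else
    max (e.passing + pre + exitSum l) (peakCrossing l (pre + e.far)) from rfl]
  cases e.corner <;> rfl

theorem outPorts_cons (e : SplitPort) (l : List SplitPort) (pre : ℕ) :
    outPorts (e :: l) pre = if e.exit = 0 then outPorts l (pre + (e.corner + e.far)) else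
      ⟨e.exit, e.passing + pre⟩ :: outPorts l (pre + (e.corner + e.far)) := by
  rw [show outPorts (e :: l) pre = bif Nat.beq e.exit 0 then outPorts l (pre + (e.corner + e.far))
    else ⟨e.exit, e.passing + pre⟩ :: outPorts l (pre + (e.corner + e.far)) from rfl]
  cases e.exit <;> rfl

/-- `l` and `m` are equal up to fewer edges passing over the ports of `l`. -/
abbrev SplitLE : List SplitPort → List SplitPort → Prop :=
  List.Forall₂ fun d e => d.corner = e.corner ∧ d.far = e.far ∧ d.exit = e.exit ∧
    d.passing ≤ e.passing

section SplitLE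

variable {l m : List SplitPort}

theorem SplitLE.sumOf_eq (h : SplitLE l m) {f : SplitPort → ℕ}
    (hf : ∀ d e : SplitPort, d.corner = e.corner → d.far = e.far → d.exit = e.exit → f d = f e) :
    sumOf f l = sumOf f m := by
  induction h with
  | nil => rfl
  | cons h _ ih => exact congrArg₂ (· + ·) (hf _ _ h.1 h.2.1 h.2.2.1) ih

theorem SplitLE.farLoad_le (h : SplitLE l m) : farLoad l ≤ farLoad m := by
  induction h with
  | nil => exact le_rfl
  | @cons d e l m h _ ih =>
    exact Nat.add_le_add (Nat.mul_le_mul h.2.1.le h.2.2.2) ih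

theorem SplitLE.peakCrossing_le (h : SplitLE l m) (pre : ℕ) :
    peakCrossing l pre ≤ peakCrossing m pre := by
  induction h generalizing pre with
  | nil => exact le_rfl
  | @cons d e l m h hlm ih =>
    have hexit : exitSum l = exitSum m := SplitLE.sumOf_eq hlm fun _ _ _ _ h => h
    rw [peakCrossing_cons, peakCrossing_cons, h.1, h.2.1, hexit]
    have hpassing := h.2.2.2
    split_ifs
    · exact ih _
    · gcongr
      exact ih _

theorem SplitLE.dominates_outPorts (h : SplitLE l m) (pre : ℕ) :
    Dominates (outPorts m pre) (outPorts l pre) := by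
  induction h generalizing pre with
  | nil => exact .nil
  | @cons d e l m h _ ih =>
    rw [outPorts_cons, outPorts_cons, h.1, h.2.1, h.2.2.1]
    split_ifs
    · exact ih _
    · exact .cons ⟨rfl, Nat.add_le_add_right h.2.2.2 _⟩ (ih _)

theorem SplitLE.covers_ofPorts (h : SplitLE l m) (size inner : ℕ) :
    (SplitRecord.ofPorts size inner l).Covers (.ofPorts size inner m) where
  size := rfl
  inner := le_rfl
  far := h.sumOf_eq fun _ _ _ h _ => h
  exit := h.sumOf_eq fun _ _ _ _ h => h
  corner := h.sumOf_eq fun _ _ h _ _ => h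
  peak := h.peakCrossing_le 0
  load := h.farLoad_le
  width := (h.sumOf_eq fun _ _ _ h _ => by rw [h]).ge
  ports := h.dominates_outPorts 0

end SplitLE

/-! ### Closed lists of records -/

/-- The ways to divide the edges at a port `p`, of which at most one ends at the corner. -/
def portSplits (p : Port) : List SplitPort :=
  (List.range (p.weight + 1)).map (fun q => ⟨p.passing, 0, q, p.weight - q⟩) ++
    (List.range p.weight).map fun q => ⟨p.passing, 1, q, p.weight - 1 - q⟩

/-- Removing the vertices behind the chord from an extremal graph and adding the chord, which is
already an edge if `c = 1`, would keep too many edges. -/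
def SideRecord.IsRemovable (s : SideRecord) (c : ℕ) : Prop :=
  1 ≤ s.size ∧ 98 * (s.inner + c + weight s.ports) ≤ 389 * s.size + 98

/-- No side of a triangle is described by `s`, where `c` is `1` or `0` according to whether the side
is an edge. -/
noncomputable def SideRecord.isExcluded (s : SideRecord) (c : ℕ) : Bool :=
  (Nat.ble 1 s.size && Nat.ble (98 * (s.inner + c + weight s.ports)) (389 * s.size + 98)) ||
    ((Nat.beq s.size 0 && Nat.beq c 0) || anyOf (fun p => Nat.ble 6 (p.passing + c)) s.ports)

/-- The records of a side of a triangle described by `s`, which is an edge if and only if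
`c = 1`. -/
noncomputable def SideRecord.splits (s : SideRecord) (c : ℕ) : List SplitRecord :=
  bif s.isExcluded c then [] else
    ((shiftPorts c s.ports).map portSplits).sections.map (.ofPorts s.size (s.inner + c))

/-- The records of all sides of triangles described by `S`. -/
noncomputable def allSplits (S : List SideRecord) : List SplitRecord :=
  S.flatMap fun s => s.splits 0 ++ s.splits 1

/-- The side and its edges can occur in an outer `5`-planar graph. -/
structure SplitRecord.IsFeasible (r : SplitRecord) : Prop where
  exit : weight r.ports = r.exit
  peak : r.peak ≤ 5
  load : r.load ≤ 5 * r.far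
  ports : ∀ p ∈ r.ports, p.passing ≤ 5

/-- The sides `r` and `s` of a triangle fit together, if there are `x` edges at the third vertex
that cross the third side. -/
structure SplitRecord.Joinable (r s : SplitRecord) (x : ℕ) : Prop where
  far : r.far = s.far
  exit : r.exit + x + s.exit ≤ 5
  peak_left : r.corner ≠ 0 → r.peak + s.corner + x + s.exit ≤ 5
  peak_right : s.corner ≠ 0 → s.peak + r.corner + x + r.exit ≤ 5
  load : r.load + s.load + r.far * x ≤ 5 * r.far
  width : r.far ≤ r.width * s.width
  apex : x ≠ 0 → r.corner + s.corner + r.far ≤ 5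
  ports_left : ∀ p ∈ r.ports, p.passing + s.corner ≤ 5
  ports_right : ∀ p ∈ s.ports, p.passing + r.corner ≤ 5

/-- The third side of a triangle with the sides `r` and `s`, and with `x` edges at the third vertex
that cross the third side. -/
def SplitRecord.join (r s : SplitRecord) (x : ℕ) : SideRecord where
  size := r.size + s.size + 1
  inner := r.inner + s.inner + (r.corner + s.corner + r.far)
  ports := shiftPorts s.corner r.ports ++
    ((bif Nat.beq x 0 then [] else [⟨x, r.corner + s.corner + r.far⟩]) ++
      (shiftPorts r.corner s.ports).reverse)

/-- A chord with so few edges behind it does not occur in an extremal graph. -/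
def SideRecord.IsSparse (s : SideRecord) : Prop :=
  98 * (s.inner + max 1 (weight s.ports)) ≤ 389 * s.size

/-- A chord in an extremal graph that is not crossed may only have this form. -/
def SideRecord.IsExceptional (s : SideRecord) : Prop :=
  weight s.ports = 0 ∧ s.size = 5 ∧ s.inner ≤ 19

/-- The possible records of a chord in a triangle with sides described by `S`. -/
def SideRecord.IsAdmissible (S : List SideRecord) (s : SideRecord) : Prop :=
  s.IsSparse ∨ s.IsExceptional ∨ weight s.ports ≠ 0 ∧ ∃ r ∈ S, r.Covers s

/-- Triangles do not lead out of `S`. -/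
def IsTriangleClosed (S : List SideRecord) : Prop :=
  ∀ r ∈ allSplits S, ∀ s ∈ allSplits S, r.IsFeasible → s.IsFeasible →
    ∀ x, r.Joinable s x → (r.join s x).IsAdmissible S

theorem exists_splitLE_of_mem_sections {ports : List Port} {l : List SplitPort}
    (hl : Dominates (l.map SplitPort.port) ports) (hcorner : ∀ e ∈ l, e.corner ≤ 1) :
    ∃ m ∈ (ports.map portSplits).sections, SplitLE m l := by
  simp only [List.mem_sections]
  rw [Dominates, List.forall₂_map_left_iff] at hl
  induction hl with
  | nil => exact ⟨[], .nil, .nil⟩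
  | @cons e p l ports hep _ ih =>
    rw [List.forall_mem_cons] at hcorner
    obtain ⟨m, hm, hml⟩ := ih hcorner.2
    have hweight : e.corner + e.far + e.exit = p.weight := hep.1
    refine ⟨⟨p.passing, e.corner, e.far, e.exit⟩ :: m, .cons ?_ hm,
      .cons ⟨rfl, rfl, rfl, hep.2⟩ hml⟩
    simp only [portSplits, List.mem_append, List.mem_map, List.mem_range, SplitPort.mk.injEq,
      true_and]
    rcases Nat.le_one_iff_eq_zero_or_eq_one.1 hcorner.1 with h | h
    · exact .inl ⟨e.far, by omega, h.symm, rfl, by omega⟩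
    · exact .inr ⟨e.far, by omega, h.symm, rfl, by omega⟩

theorem exists_mem_allSplits_covers {S : List SideRecord} {s : SideRecord} (hs : s ∈ S) {c : ℕ}
    (hc : c ≤ 1) (hedge : s.size = 0 → c = 1) (hremovable : ¬ s.IsRemovable c) {l : List SplitPort}
    (hl : Dominates (l.map SplitPort.port) (shiftPorts c s.ports))
    (hcorner : ∀ e ∈ l, e.corner ≤ 1) (hpassing : ∀ e ∈ l, e.passing ≤ 5) :
    ∃ r ∈ allSplits S, r.Covers (.ofPorts s.size (s.inner + c) l) := by
  have hshift : ∀ p ∈ shiftPorts c s.ports, p.passing ≤ 5 :=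
    hl.forall_passing_le (c := 0) (List.forall_mem_map.2 hpassing)
  have hexcluded : s.isExcluded c = false := by
    rw [SideRecord.isExcluded, Bool.or_eq_false_iff, Bool.or_eq_false_iff]
    simp only [← Bool.not_eq_true, anyOf_iff, Bool.and_eq_true, Nat.ble_eq, Nat.beq_eq]
    refine ⟨hremovable, fun h => ?_, fun ⟨p, hp, h⟩ => ?_⟩
    · have := hedge h.1
      omega
    · have : p.passing + c ≤ 5 := hshift _ (List.mem_map_of_mem hp)
      omega
  obtain ⟨m, hm, hml⟩ := exists_splitLE_of_mem_sections hl hcorner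
  refine ⟨.ofPorts s.size (s.inner + c) m, List.mem_flatMap.2 ⟨s, hs, ?_⟩, hml.covers_ofPorts _ _⟩
  have hmem : .ofPorts s.size (s.inner + c) m ∈ s.splits c := by
    rw [SideRecord.splits, hexcluded]
    exact List.mem_map_of_mem hm
  rcases Nat.le_one_iff_eq_zero_or_eq_one.1 hc with rfl | rfl
  · exact List.mem_append_left _ hmem
  · exact List.mem_append_right _ hmem

namespace SplitRecord

variable {r r' s s' : SplitRecord} {x : ℕ}

theorem IsFeasible.of_covers (h : s.IsFeasible) (hr : r.Covers s) : r.IsFeasible where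
  exit := by rw [← hr.ports.weight_eq, hr.exit, h.exit]
  peak := hr.peak.trans h.peak
  load := by rw [hr.far]; exact hr.load.trans h.load
  ports := hr.ports.forall_passing_le (c := 0) h.ports

theorem Joinable.of_covers (h : s.Joinable s' x) (hr : r.Covers s) (hr' : r'.Covers s') :
    r.Joinable r' x where
  far := by rw [hr.far, hr'.far, h.far]
  exit := by rw [hr.exit, hr'.exit]; exact h.exit
  peak_left hc := by
    have := h.peak_left (hr.corner ▸ hc)
    have := hr.peak
    rw [hr'.corner, hr'.exit]
    omega
  peak_right hc := by
    have := h.peak_right (hr'.corner ▸ hc)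
    have := hr'.peak
    rw [hr.corner, hr.exit]
    omega
  load := by
    rw [hr.far]
    exact le_trans (by gcongr; exacts [hr.load, hr'.load]) h.load
  width := hr.far ▸ h.width.trans (Nat.mul_le_mul hr.width hr'.width)
  apex hx := by rw [hr.corner, hr'.corner, hr.far]; exact h.apex hx
  ports_left := by rw [hr'.corner]; exact hr.ports.forall_passing_le h.ports_left
  ports_right := by rw [hr.corner]; exact hr'.ports.forall_passing_le h.ports_right

theorem Covers.join (hr : r.Covers s) (hr' : r'.Covers s') (x : ℕ) :
    (r.join r' x).Covers (s.join s' x) where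
  size := by simp only [SplitRecord.join, hr.size, hr'.size]
  inner := by
    simp only [SplitRecord.join, hr.corner, hr'.corner, hr.far]
    gcongr
    exacts [hr.inner, hr'.inner]
  ports := by
    simp only [SplitRecord.join, hr.corner, hr'.corner, hr.far]
    exact List.rel_append (hr.ports.shiftPorts _) (List.rel_append (List.forall₂_same.2
      fun _ _ => ⟨rfl, le_rfl⟩) (List.rel_reverse (hr'.ports.shiftPorts _)))

end SplitRecord

theorem SideRecord.IsAdmissible.of_covers {S : List SideRecord} {r s : SideRecord}
    (h : r.IsAdmissible S) (hr : r.Covers s) : s.IsAdmissible S := by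
  rw [IsAdmissible, IsSparse, IsExceptional, hr.ports.weight_eq, ← hr.size]
  rcases h with h | h | ⟨h, q, hq, hqr⟩
  · exact .inl (le_trans (by gcongr; exact hr.inner) h)
  · exact .inr (.inl ⟨h.1, h.2.1, hr.inner.trans h.2.2⟩)
  · exact .inr (.inr ⟨h, q, hq, hqr.trans hr⟩)

theorem IsTriangleClosed.isAdmissible_join {S : List SideRecord} (hS : IsTriangleClosed S)
    {r r' s s' : SplitRecord} (hr : r ∈ allSplits S) (hr' : r' ∈ allSplits S) (hrs : r.Covers s)
    (hrs' : r'.Covers s') (hs : s.IsFeasible) (hs' : s'.IsFeasible) {x : ℕ}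
    (hx : s.Joinable s' x) : (s.join s' x).IsAdmissible S :=
  (hS r hr r' hr' (hs.of_covers hrs) (hs'.of_covers hrs') x (hx.of_covers hrs hrs')).of_covers
    (hrs.join hrs' x)

/-! ### Deciding that a list of records is closed -/

/-- Boolean form of `Dominates`. -/
noncomputable def dominatesB (l : List Port) : List Port → Bool :=
  List.rec (fun m => List.rec true (fun _ _ _ => false) m) (fun p _ ih m =>
    List.rec false (fun q m _ => Nat.beq p.weight q.weight && (Nat.ble q.passing p.passing && ih m))
      m) l

/-- Evaluates the spine of a list of ports. -/
def forcePorts : List Port → (List Port → Bool) → Bool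
  | [], f => f []
  | p :: l, f => forcePorts l fun l => f (p :: l)

namespace SplitRecord

/-- Evaluates the entries of a record. -/
noncomputable def force (r : SplitRecord) (f : SplitRecord → Bool) : Bool :=
  OuterPlanar.force r.size fun size => OuterPlanar.force r.inner fun inner =>
  OuterPlanar.force r.far fun far => OuterPlanar.force r.exit fun exit =>
  OuterPlanar.force r.corner fun corner => OuterPlanar.force r.peak fun peak =>
  OuterPlanar.force r.load fun load => OuterPlanar.force r.width fun width =>
  forcePorts r.ports fun ports => f ⟨size, inner, far, exit, corner, peak, load, width, ports⟩

/-- Boolean form of `Covers`. -/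
noncomputable def coversB (r s : SplitRecord) : Bool :=
  Nat.beq r.size s.size && (Nat.ble s.inner r.inner && (Nat.ble r.peak s.peak &&
    (Nat.ble r.load s.load && (Nat.ble s.width r.width && (dominatesB s.ports r.ports &&
    (Nat.beq r.far s.far && (Nat.beq r.exit s.exit && Nat.beq r.corner s.corner)))))))

/-- Boolean form of `IsFeasible`, without the condition on `exit`, which holds for all records of
the form `SplitRecord.ofPorts`. -/
noncomputable def isFeasibleB (r : SplitRecord) : Bool :=
  Nat.ble r.load (5 * r.far) && (Nat.ble r.peak 5 && allOf (fun p => Nat.ble p.passing 5) r.ports)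

/-- Boolean form of the part of `Joinable` that remains after comparing the entries `far` and
`exit`. -/
noncomputable def joinableB (r s : SplitRecord) (x : ℕ) : Bool :=
  (Nat.beq r.corner 0 || Nat.ble (((r.peak.add s.corner).add x).add s.exit) 5) &&
    ((Nat.beq s.corner 0 || Nat.ble (((s.peak.add r.corner).add x).add r.exit) 5) &&
    (Nat.ble (r.load + s.load + r.far * x) (5 * r.far) &&
    ((Nat.beq x 0 || Nat.ble (r.corner + s.corner + r.far) 5) &&
    (allOf (fun p => Nat.ble (p.passing + s.corner) 5) r.ports &&
    allOf (fun p => Nat.ble (p.passing + r.corner) 5) s.ports))))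

end SplitRecord

/-- Boolean form of `SideRecord.IsAdmissible`. -/
noncomputable def SideRecord.isAdmissibleB (S : List SideRecord) (s : SideRecord) : Bool :=
  force s.size fun size => force s.inner fun inner => force (weight s.ports) fun w =>
    bif Nat.beq w 0 then
      Nat.ble (98 * (inner + 1)) (389 * size) || (Nat.beq size 5 && Nat.ble inner 19)
    else Nat.ble (98 * (inner + w)) (389 * size) || anyOf (fun r => Nat.beq r.size size &&
      (Nat.ble inner r.inner && dominatesB s.ports r.ports)) S

/-- Records of sides, grouped by their entries `far`, `exit` and `corner`. -/
abbrev SplitTable : Type := List ((ℕ × ℕ × ℕ) × List SplitRecord)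

/-- The group of a record. -/
def SplitRecord.key (r : SplitRecord) : ℕ × ℕ × ℕ := (r.far, r.exit, r.corner)

/-- Some record of the table, in the group of `r`, covers `r`. -/
def SplitTable.Covers (T : SplitTable) (r : SplitRecord) : Prop :=
  ∃ g ∈ T, g.1 = r.key ∧ ∃ s ∈ g.2, s.Covers r

/-- Equality of groups. -/
noncomputable def keyEq (a b : ℕ × ℕ × ℕ) : Bool :=
  Nat.beq a.1 b.1 && (Nat.beq a.2.1 b.2.1 && Nat.beq a.2.2 b.2.2)

-- The tables are built in continuation-passing style, so that the kernel evaluates each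
-- intermediate table once.

/-- `f (l.filter p)`, with the list evaluated first. -/
noncomputable def filterThen {α : Type} (p : α → Bool) (l : List α) : (List α → Bool) → Bool :=
  List.rec (fun f => f []) (fun x _ ih f => bif p x then ih fun m => f (x :: m) else ih f) l

/-- Inserts a record, unless it is covered already, in place of the records it covers. -/
noncomputable def SplitTable.insertThen (r : SplitRecord) (T : SplitTable) :
    (SplitTable → Bool) → Bool :=
  List.rec (fun f => f [(r.key, [r])]) (fun g T ih f => bif keyEq g.1 r.key then
      bif anyOf (fun s => s.coversB r) g.2 then f (g :: T) else
        filterThen (fun s => !r.coversB s) g.2 fun l => f ((g.1, r :: l) :: T)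
    else ih fun T => f (g :: T)) T

/-- Inserts all feasible records. -/
noncomputable def SplitTable.insertAllThen :
    List SplitRecord → SplitTable → (SplitTable → Bool) → Bool
  | [], T, f => f T
  | r :: l, T, f => r.force fun r =>
      bif r.isFeasibleB then T.insertThen r fun T => insertAllThen l T f else insertAllThen l T f

/-- All third sides of triangles with the sides `r` and `s` are admissible. The first test makes
them sparse because their ports have at most five edges. -/
noncomputable def SplitRecord.pairB (S : List SideRecord) (r s : SplitRecord) : Bool :=
  Nat.ble (Nat.mul 98 (((r.inner.add s.inner).add ((r.corner.add s.corner).add r.far)).add 5))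
      (Nat.mul 389 ((r.size.add s.size).succ)) ||
    (Nat.blt (r.width.mul s.width) r.far || allBelow (6 - (r.exit + s.exit)) fun x =>
      bif r.joinableB s x then (r.join s x).isAdmissibleB S else true)

/-- All pairs of records in the table pass the test `SplitRecord.pairB`. -/
noncomputable def SplitTable.pairsB (S : List SideRecord) (T : SplitTable) : Bool :=
  allOf (fun g => allOf (fun h => !(Nat.beq g.1.1 h.1.1 && Nat.ble (g.1.2.1 + h.1.2.1) 5) ||
    allOf (fun r => allOf (r.pairB S) h.2) g.2) T) T

/-- A sufficient test for `IsTriangleClosed`. -/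
noncomputable def isTriangleClosedB (S : List SideRecord) : Bool :=
  SplitTable.insertAllThen (allSplits S) [] (SplitTable.pairsB S)

theorem dominates_of_dominatesB {l m : List Port} (h : dominatesB l m = true) : Dominates l m := by
  induction l generalizing m with
  | nil =>
    cases m with
    | nil => exact .nil
    | cons => exact absurd h Bool.false_ne_true
  | cons p l ih =>
    cases m with
    | nil => exact absurd h Bool.false_ne_true
    | cons q m =>
      have hpq : (Nat.beq p.weight q.weight && (Nat.ble q.passing p.passing && dominatesB l m)) =
        true := h
      simp only [Bool.and_eq_true, Nat.beq_eq, Nat.ble_eq] at hpq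
      exact .cons ⟨hpq.1, hpq.2.1⟩ (ih hpq.2.2)

theorem forcePorts_eq (l : List Port) (f : List Port → Bool) : forcePorts l f = f l := by
  induction l generalizing f with
  | nil => rfl
  | cons p _ ih => exact ih _

theorem keyEq_iff {a b : ℕ × ℕ × ℕ} : keyEq a b = true ↔ a = b := by
  simp only [keyEq, Bool.and_eq_true, Nat.beq_eq, Prod.ext_iff]

theorem filterThen_eq {α : Type} (p : α → Bool) (l : List α) (f : List α → Bool) :
    filterThen p l f = f (l.filter p) := by
  induction l generalizing f with
  | nil => rfl
  | cons x l ih =>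
    rw [List.filter_cons, show filterThen p (x :: l) f =
      bif p x then filterThen p l fun m => f (x :: m) else filterThen p l f from rfl, ih, ih]
    cases p x <;> rfl

namespace SplitRecord

variable {S : List SideRecord} {r s : SplitRecord} {x : ℕ}

theorem force_eq (r : SplitRecord) (f : SplitRecord → Bool) : r.force f = f r := by
  simp only [force, OuterPlanar.force_eq, forcePorts_eq]

theorem covers_of_coversB (h : r.coversB s = true) : r.Covers s := by
  simp only [coversB, Bool.and_eq_true, Nat.beq_eq, Nat.ble_eq] at h
  obtain ⟨hsize, hinner, hpeak, hload, hwidth, hports, hfar, hexit, hcorner⟩ := h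
  exact ⟨hsize, hinner, hfar, hexit, hcorner, hpeak, hload, hwidth, dominates_of_dominatesB hports⟩

theorem Covers.key_eq (h : r.Covers s) : r.key = s.key := by
  rw [key, h.far, h.exit, h.corner, key]

theorem IsFeasible.isFeasibleB (h : r.IsFeasible) : r.isFeasibleB = true := by
  simp only [SplitRecord.isFeasibleB, Bool.and_eq_true, Nat.ble_eq, allOf_iff]
  exact ⟨h.load, h.peak, h.ports⟩

theorem Joinable.joinableB (h : r.Joinable s x) : r.joinableB s x = true := by
  simp only [SplitRecord.joinableB, Bool.and_eq_true, Bool.or_eq_true, Nat.beq_eq, Nat.ble_eq,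
    allOf_iff, or_iff_not_imp_left]
  exact ⟨h.peak_left, h.peak_right, h.load, h.apex, h.ports_left, h.ports_right⟩

theorem weight_join (r s : SplitRecord) (x : ℕ) :
    weight (r.join s x).ports = weight r.ports + x + weight s.ports := by
  have hshift (c : ℕ) (l : List Port) : ((shiftPorts c l).map Port.weight).sum =
      (l.map Port.weight).sum := by rw [shiftPorts, List.map_map]; rfl
  simp only [weight, sumOf_eq, join, List.map_append, List.map_reverse, List.sum_append,
    List.sum_reverse, hshift]
  cases x <;> simp [Nat.beq, Nat.add_assoc]

theorem isAdmissible_of_isAdmissibleB {t : SideRecord} (h : t.isAdmissibleB S = true) :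
    t.IsAdmissible S := by
  simp only [SideRecord.isAdmissibleB, OuterPlanar.force_eq, Bool.cond_eq_ite, Nat.beq_eq] at h
  rw [SideRecord.IsAdmissible, SideRecord.IsSparse, SideRecord.IsExceptional]
  split_ifs at h with hw
  · simp only [Bool.or_eq_true, Bool.and_eq_true, Nat.beq_eq, Nat.ble_eq] at h
    rw [hw]
    exact h.imp id fun h => .inl ⟨rfl, h⟩
  · simp only [Bool.or_eq_true, Bool.and_eq_true, Nat.beq_eq, Nat.ble_eq, anyOf_iff] at h
    rw [max_eq_right (Nat.one_le_iff_ne_zero.2 hw)]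
    refine h.imp id fun ⟨r, hr, hsize, hinner, hports⟩ => .inr ⟨hw, r, hr, hsize, hinner, ?_⟩
    exact dominates_of_dominatesB hports

theorem isAdmissible_join_of_pairB (h : r.pairB S s = true) (hr : weight r.ports = r.exit)
    (hs : weight s.ports = s.exit) (hx : r.Joinable s x) : (r.join s x).IsAdmissible S := by
  simp only [pairB, Bool.or_eq_true, Nat.ble_eq, allBelow_iff] at h
  have hexit := hx.exit
  rcases h with h | h | h
  · refine .inl ?_
    rw [SideRecord.IsSparse, weight_join, hr, hs]
    simp only [Nat.mul_eq, Nat.add_eq] at h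
    simp only [join]
    omega
  · exact absurd hx.width (Nat.not_le.2 (by simpa [Nat.blt] using h))
  · have := h x (by omega)
    rw [hx.joinableB] at this
    exact isAdmissible_of_isAdmissibleB this

end SplitRecord

namespace SplitTable

variable {T : SplitTable} {r s : SplitRecord} {f : SplitTable → Bool}

theorem covers_cons {g : (ℕ × ℕ × ℕ) × List SplitRecord} :
    Covers (g :: T) r ↔ (g.1 = r.key ∧ ∃ s ∈ g.2, s.Covers r) ∨ T.Covers r :=
  List.exists_mem_cons_iff ..

theorem insertThen_cons (g : (ℕ × ℕ × ℕ) × List SplitRecord) :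
    insertThen r (g :: T) f = if g.1 = r.key then
      if ∃ s ∈ g.2, s.coversB r = true then f (g :: T) else
        f ((g.1, r :: g.2.filter fun s => !r.coversB s) :: T)
    else T.insertThen r fun T => f (g :: T) := by
  simp only [← keyEq_iff, ← anyOf_iff, ← Bool.cond_eq_ite]
  rw [← filterThen_eq _ _ fun l => f ((g.1, r :: l) :: T)]
  rfl

theorem exists_of_insertThen (h : T.insertThen r f = true) :
    ∃ U : SplitTable, f U = true ∧ U.Covers r ∧ ∀ s, T.Covers s → U.Covers s := by
  induction T generalizing f with
  | nil => exact ⟨[(r.key, [r])], h, ⟨_, List.mem_singleton_self _, rfl, r,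
      List.mem_singleton_self _, .refl r⟩, fun s ⟨_, hg, _⟩ => absurd hg List.not_mem_nil⟩
  | cons g T ih =>
    rw [insertThen_cons] at h
    simp only [covers_cons]
    split_ifs at h with hkey hcovered
    · obtain ⟨s, hs, hsr⟩ := hcovered
      refine ⟨g :: T, h, covers_cons.2 (.inl ⟨hkey, s, hs, SplitRecord.covers_of_coversB hsr⟩), ?_⟩
      exact fun _ => covers_cons.2
    · refine ⟨_, h, covers_cons.2 (.inl ⟨hkey, r, List.mem_cons_self, .refl r⟩), fun s => ?_⟩
      rw [covers_cons]
      refine Or.imp_left fun ⟨hgs, q, hq, hqs⟩ => ⟨hgs, ?_⟩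
      by_cases hrq : r.coversB q = true
      · exact ⟨r, List.mem_cons_self, (SplitRecord.covers_of_coversB hrq).trans hqs⟩
      · exact ⟨q, List.mem_cons_of_mem _ (List.mem_filter.2 ⟨hq, by simpa using hrq⟩), hqs⟩
    · obtain ⟨U, hU, hr, hTU⟩ := ih h
      exact ⟨g :: U, hU, covers_cons.2 (.inr hr), fun s => by
        rw [covers_cons]; exact Or.imp_right (hTU s)⟩

theorem exists_of_insertAllThen {l : List SplitRecord} (h : insertAllThen l T f = true) :
    ∃ U : SplitTable, f U = true ∧ (∀ r ∈ l, r.IsFeasible → U.Covers r) ∧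
      ∀ s, T.Covers s → U.Covers s := by
  induction l generalizing T with
  | nil => exact ⟨T, h, by simp, fun _ hs => hs⟩
  | cons r l ih =>
    simp only [insertAllThen, r.force_eq, Bool.cond_eq_ite] at h
    simp only [List.forall_mem_cons]
    split_ifs at h with hfeasible
    · obtain ⟨T', hT', hr, hTT'⟩ := exists_of_insertThen h
      obtain ⟨U, hU, hl, hT'U⟩ := ih hT'
      exact ⟨U, hU, ⟨fun _ => hT'U r hr, hl⟩, fun s hs => hT'U s (hTT' s hs)⟩
    · obtain ⟨U, hU, hl, hTU⟩ := ih h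
      exact ⟨U, hU, ⟨fun hr => absurd hr.isFeasibleB hfeasible, hl⟩, hTU⟩

theorem pairB_of_pairsB {S : List SideRecord} (h : T.pairsB S = true)
    {g k : (ℕ × ℕ × ℕ) × List SplitRecord} (hg : g ∈ T) (hk : k ∈ T) (hr : r ∈ g.2) (hs : s ∈ k.2)
    (hfar : g.1.1 = k.1.1) (hexit : g.1.2.1 + k.1.2.1 ≤ 5) : r.pairB S s = true := by
  have hgroups : (Nat.beq g.1.1 k.1.1 && Nat.ble (g.1.2.1 + k.1.2.1) 5) = true := by
    rw [Bool.and_eq_true, Nat.beq_eq, Nat.ble_eq]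
    exact ⟨hfar, hexit⟩
  simp only [pairsB, allOf_iff, Bool.or_eq_true] at h
  exact (h g hg k hk).resolve_left (by simp [hgroups]) r hr s hs

end SplitTable

theorem isTriangleClosed_of_isTriangleClosedB {S : List SideRecord}
    (h : isTriangleClosedB S = true) : IsTriangleClosed S := by
  obtain ⟨T, hT, hcovers, -⟩ := SplitTable.exists_of_insertAllThen h
  intro r hr s hs hfr hfs x hx
  obtain ⟨g, hg, hgr, r', hr', hrr'⟩ := hcovers r hr hfr
  obtain ⟨k, hk, hks, s', hs', hss'⟩ := hcovers s hs hfs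
  have hx' := hx.of_covers hrr' hss'
  have hexit : r'.exit + s'.exit ≤ 5 := by
    have := hx'.exit
    omega
  have hpair : r'.pairB S s' = true := by
    refine SplitTable.pairB_of_pairsB hT hg hk hr' hs' ?_ ?_
    · rw [hgr, hks, ← hrr'.key_eq, ← hss'.key_eq]
      exact hx'.far
    · rw [hgr, hks, ← hrr'.key_eq, ← hss'.key_eq]
      exact hexit
  exact (SplitRecord.isAdmissible_join_of_pairB hpair (hfr.of_covers hrr').exit
    (hfs.of_covers hss').exit hx').of_covers (hrr'.join hss' x)

/-! ### Ports in a drawing -/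

/-- The number of edges with both ends in `[a, b]`. -/
def edgesWithin (A : ℕ → ℕ → ℕ) (a b : ℕ) : ℕ := ∑ i ∈ Ico a b, blockSum A i (i + 1) (i + 1) (b + 1)

/-- The number of edges with both ends in `[a, b]` that pass over the vertex `u`, including the
chord `{a, b}` if it is an edge. -/
def coverCount (A : ℕ → ℕ → ℕ) (a b u : ℕ) : ℕ := blockSum A a u (u + 1) (b + 1)

/-- The vertex `u` as a port of the chord `{a, b}`. -/
def chordPort (n : ℕ) (A : ℕ → ℕ → ℕ) (a b u : ℕ) : Port :=
  ⟨outSum n A a b u (u + 1), coverCount A a b u - A a b⟩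

/-- The ports of the chord `{a, b}` among the `m` vertices from `p` on. -/
def chordPorts (n : ℕ) (A : ℕ → ℕ → ℕ) (a b p m : ℕ) : List Port :=
  ((List.range' p m).map (chordPort n A a b)).filter (·.weight ≠ 0)

/-- The record of the chord `{a, b}`. -/
def chordRecord (n : ℕ) (A : ℕ → ℕ → ℕ) (a b : ℕ) : SideRecord :=
  ⟨b - a - 1, edgesWithin A a b - A a b, chordPorts n A a b (a + 1) (b - a - 1)⟩

/-- The `m` vertices from `p` on, as possible ports of the side `{a, x}` of the triangle
`a, x, b`. -/
def leftPorts (n : ℕ) (A : ℕ → ℕ → ℕ) (a x b p m : ℕ) : List SplitPort :=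
  (List.range' p m).map fun i =>
    ⟨coverCount A a x i, A i b, blockSum A i (i + 1) (x + 1) b, outSum n A a b i (i + 1)⟩

/-- The `m` vertices from `p` on, in reverse order, as possible ports of the side `{x, b}` of the
triangle `a, x, b`. -/
def rightPorts (n : ℕ) (A : ℕ → ℕ → ℕ) (a x b p m : ℕ) : List SplitPort :=
  ((List.range' p m).map fun j =>
    ⟨coverCount A x b j, A a j, blockSum A (a + 1) x j (j + 1), outSum n A a b j (j + 1)⟩).reverse

/-- The record of the side `{a, x}` of the triangle `a, x, b`. -/
noncomputable def leftRecord (n : ℕ) (A : ℕ → ℕ → ℕ) (a x b : ℕ) : SplitRecord :=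
  .ofPorts (x - a - 1) (edgesWithin A a x) (leftPorts n A a x b (a + 1) (x - a - 1))

/-- The record of the side `{x, b}` of the triangle `a, x, b`, seen in the mirror. -/
noncomputable def rightRecord (n : ℕ) (A : ℕ → ℕ → ℕ) (a x b : ℕ) : SplitRecord :=
  .ofPorts (b - x - 1) (edgesWithin A x b) (rightPorts n A a x b (x + 1) (b - x - 1))

/-- The entries of `l` that are ports. -/
def properPorts (l : List SplitPort) : List SplitPort := l.filter (·.port.weight ≠ 0)

section properPorts

theorem properPorts_cons (e : SplitPort) (l : List SplitPort) :
    properPorts (e :: l) =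
      if e.corner + e.far + e.exit = 0 then properPorts l else e :: properPorts l := by
  split_ifs with h
  · exact List.filter_cons_of_neg (by simp [SplitPort.port, h])
  · exact List.filter_cons_of_pos (decide_eq_true h)

theorem sumOf_properPorts {f : SplitPort → ℕ}
    (hf : ∀ e : SplitPort, e.corner + e.far + e.exit = 0 → f e = 0) (l : List SplitPort) :
    sumOf f (properPorts l) = sumOf f l := by
  simp only [sumOf_eq]
  induction l with
  | nil => rfl
  | cons e l ih =>
    rw [properPorts_cons, List.map_cons, List.sum_cons]
    split_ifs with h
    · rw [ih, hf e h, zero_add]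
    · rw [List.map_cons, List.sum_cons, ih]

theorem peakCrossing_properPorts (l : List SplitPort) (pre : ℕ) :
    peakCrossing (properPorts l) pre = peakCrossing l pre := by
  induction l generalizing pre with
  | nil => rfl
  | cons e l ih =>
    rw [properPorts_cons, peakCrossing_cons]
    split_ifs with h h' h'
    · rw [ih, show e.far = 0 by omega, add_zero]
    · omega
    · rw [peakCrossing_cons, if_pos h', ih]
    · rw [peakCrossing_cons, if_neg h', ih, exitSum, sumOf_properPorts fun _ _ => by omega, exitSum]

theorem outPorts_properPorts (l : List SplitPort) (pre : ℕ) :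
    outPorts (properPorts l) pre = outPorts l pre := by
  induction l generalizing pre with
  | nil => rfl
  | cons e l ih =>
    rw [properPorts_cons, outPorts_cons]
    split_ifs with h h' h'
    · rw [ih, show e.corner + e.far = 0 by omega, add_zero]
    · omega
    · rw [outPorts_cons, if_pos h', ih]
    · rw [outPorts_cons, if_neg h', ih]

theorem ofPorts_properPorts (size inner : ℕ) (l : List SplitPort) :
    SplitRecord.ofPorts size inner (properPorts l) = .ofPorts size inner l := by
  have hfar {e : SplitPort} (h : e.corner + e.far + e.exit = 0) : e.far = 0 := by omega
  rw [SplitRecord.ofPorts, SplitRecord.ofPorts, peakCrossing_properPorts, outPorts_properPorts,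
    farSum, exitSum, cornerSum, farLoad, farWidth, sumOf_properPorts fun _ h => hfar h,
    sumOf_properPorts fun _ _ => by omega, sumOf_properPorts fun _ _ => by omega,
    sumOf_properPorts fun _ h => by rw [hfar h, zero_mul],
    sumOf_properPorts fun _ h => by rw [hfar h]; rfl]
  rfl

theorem weight_outPorts (l : List SplitPort) (pre : ℕ) : weight (outPorts l pre) = exitSum l := by
  simp only [weight, exitSum, sumOf_eq]
  induction l generalizing pre with
  | nil => rfl
  | cons e l ih =>
    rw [outPorts_cons, List.map_cons, List.sum_cons]
    split_ifs with h
    · rw [ih, h, zero_add]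
    · rw [List.map_cons, List.sum_cons, ih]

end properPorts

section sums

variable {n : ℕ} {A : ℕ → ℕ → ℕ} {a x b : ℕ}

theorem sumOf_map_range' {α : Type} (f : α → ℕ) (g : ℕ → α) (p m : ℕ) :
    sumOf f ((List.range' p m).map g) = ∑ i ∈ Ico p (p + m), f (g i) := by
  rw [sumOf_eq]
  induction m generalizing p with
  | zero => simp
  | succ m ih =>
    rw [List.range'_succ, List.map_cons, List.map_cons, List.sum_cons, ih, ← add_assoc,
      add_right_comm, sum_eq_sum_Ico_succ_bot (a := p) (by omega)]

theorem sumOf_reverse {α : Type} (f : α → ℕ) (l : List α) : sumOf f l.reverse = sumOf f l := by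
  rw [sumOf_eq, sumOf_eq, List.map_reverse, List.sum_reverse]

theorem outSum_eq_sum (p q : ℕ) : ∑ i ∈ Ico p q, outSum n A a b i (i + 1) = outSum n A a b p q := by
  simp [outSum, blockSum, sum_add_distrib]

theorem exitSum_leftPorts (p m : ℕ) :
    exitSum (leftPorts n A a x b p m) = outSum n A a b p (p + m) :=
  (sumOf_map_range' ..).trans (outSum_eq_sum _ _)

theorem exitSum_rightPorts (p m : ℕ) :
    exitSum (rightPorts n A a x b p m) = outSum n A a b p (p + m) :=
  ((sumOf_reverse ..).trans (sumOf_map_range' ..)).trans (outSum_eq_sum _ _)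

theorem cornerSum_leftPorts (p m : ℕ) :
    cornerSum (leftPorts n A a x b p m) = blockSum A p (p + m) b (b + 1) :=
  (sumOf_map_range' ..).trans (by simp [blockSum])

theorem cornerSum_rightPorts (p m : ℕ) :
    cornerSum (rightPorts n A a x b p m) = blockSum A a (a + 1) p (p + m) :=
  ((sumOf_reverse ..).trans (sumOf_map_range' ..)).trans (by simp [blockSum])

theorem farSum_leftPorts (p m : ℕ) :
    farSum (leftPorts n A a x b p m) = blockSum A p (p + m) (x + 1) b :=
  (sumOf_map_range' ..).trans (by simp [blockSum])

theorem farSum_rightPorts (p m : ℕ) :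
    farSum (rightPorts n A a x b p m) = blockSum A (a + 1) x p (p + m) :=
  ((sumOf_reverse ..).trans (sumOf_map_range' ..)).trans (by simpa [blockSum] using sum_comm)

theorem farLoad_leftPorts (p m : ℕ) : farLoad (leftPorts n A a x b p m) =
    ∑ i ∈ Ico p (p + m), blockSum A i (i + 1) (x + 1) b * coverCount A a x i :=
  sumOf_map_range' ..

theorem farLoad_rightPorts (p m : ℕ) : farLoad (rightPorts n A a x b p m) =
    ∑ j ∈ Ico p (p + m), blockSum A (a + 1) x j (j + 1) * coverCount A x b j :=
  (sumOf_reverse ..).trans (sumOf_map_range' ..)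

theorem farWidth_leftPorts (p m : ℕ) : farWidth (leftPorts n A a x b p m) =
    ∑ i ∈ Ico p (p + m), bif Nat.beq (blockSum A i (i + 1) (x + 1) b) 0 then 0 else 1 :=
  sumOf_map_range' ..

theorem farWidth_rightPorts (p m : ℕ) : farWidth (rightPorts n A a x b p m) =
    ∑ j ∈ Ico p (p + m), bif Nat.beq (blockSum A (a + 1) x j (j + 1)) 0 then 0 else 1 :=
  (sumOf_reverse ..).trans (sumOf_map_range' ..)

theorem weight_chordPorts (p m : ℕ) :
    weight (chordPorts n A a b p m) = outSum n A a b p (p + m) := by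
  have h := sumOf_map_range' Port.weight (chordPort n A a b) p m
  rw [weight, ← outSum_eq_sum, ← show _ = ∑ i ∈ _, outSum n A a b i (i + 1) from h, chordPorts,
    sumOf_eq, sumOf_eq]
  induction (List.range' p m).map (chordPort n A a b) with
  | nil => rfl
  | cons q l ih =>
    rw [List.map_cons, List.sum_cons, ← ih]
    by_cases h : q.weight = 0
    · rw [List.filter_cons_of_neg (by simp [h]), h, zero_add]
    · rw [List.filter_cons_of_pos (by simp [h]), List.map_cons, List.sum_cons]

theorem weight_chordRecord (hab : a < b) :
    weight (chordRecord n A a b).ports = crossCount n A a b := by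
  rw [chordRecord, weight_chordPorts, show a + 1 + (b - a - 1) = b by omega]
  rfl

end sums

section edgesWithin

variable {n : ℕ} {A : ℕ → ℕ → ℕ} {a x b : ℕ}

theorem edgesWithin_split (hax : a ≤ x) (hxb : x ≤ b) :
    edgesWithin A a b =
      edgesWithin A a x + edgesWithin A x b + blockSum A a x (x + 1) (b + 1) := by
  have hleft : ∑ i ∈ Ico a x, blockSum A i (i + 1) (i + 1) (b + 1) =
      edgesWithin A a x + blockSum A a x (x + 1) (b + 1) := by
    rw [edgesWithin, blockSum, ← sum_add_distrib]
    refine sum_congr rfl fun i hi => ?_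
    rw [blockSum_split_right (m := x + 1) (by have := mem_Ico.1 hi; omega) (by omega)]
    simp [blockSum]
  rw [edgesWithin, ← sum_Ico_consecutive _ hax hxb, hleft, add_right_comm]
  rfl

theorem edgesWithin_self_succ : edgesWithin A a (a + 1) = A a (a + 1) := by
  simp [edgesWithin]

theorem two_mul_edgesWithin (hA : ∀ i j, A i j = A j i) (hdiag : ∀ i, A i i = 0) (hab : a ≤ b) :
    2 * edgesWithin A a b = blockSum A a (b + 1) a (b + 1) := by
  induction b, hab using Nat.le_induction with
  | base => simp [edgesWithin, hdiag]
  | succ b hab ih =>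
    have hrow := blockSum_split_left (A := A) (p := a) (m := b + 1) (q := b + 1 + 1) (r := a)
      (s := b + 1 + 1) (by omega) (by omega)
    have hcol := blockSum_split_right (A := A) (p := a) (q := b + 1) (r := a) (m := b + 1)
      (s := b + 1 + 1) (by omega) (by omega)
    have hlast := blockSum_split_right (A := A) (p := b + 1) (q := b + 1 + 1) (r := a)
      (m := b + 1) (s := b + 1 + 1) (by omega) (by omega)
    have htop := blockSum_split_left (A := A) (p := a) (m := b) (q := b + 1) (r := b + 1)
      (s := b + 1 + 1) hab (by omega)
    rw [blockSum_single] at htop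
    rw [blockSum_comm hA (b + 1) (b + 1 + 1) a (b + 1), blockSum_single, hdiag] at hlast
    rw [edgesWithin_split hab (Nat.le_add_right b 1), edgesWithin_self_succ]
    omega

theorem apply_le_edgesWithin (hab : a < b) : A a b ≤ edgesWithin A a b := by
  rcases (show a + 1 ≤ b from hab).eq_or_lt with rfl | hab'
  · exact edgesWithin_self_succ.ge
  · rw [edgesWithin_split (Nat.le_add_right a 1) hab, ← blockSum_single (A := A)]
    exact (blockSum_mono le_rfl le_rfl hab' le_rfl).trans (Nat.le_add_left _ _)

theorem edgesWithin_mirror (hA : ∀ i j, A i j = A j i) (hdiag : ∀ i, A i i = 0) (hab : a ≤ b)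
    (hb : b < n) : edgesWithin (mirror n A) (n - 1 - b) (n - 1 - a) = edgesWithin A a b := by
  have := blockSum_mirror (A := A) (p := a) (r := a) (q := b + 1) (s := b + 1) hb hb
  rw [show n - (b + 1) = n - 1 - b by omega, show n - a = n - 1 - a + 1 by omega,
    ← two_mul_edgesWithin (A := mirror n A) (fun _ _ => hA _ _) (fun _ => hdiag _) (by omega),
    ← two_mul_edgesWithin hA hdiag hab] at this
  exact Nat.eq_of_mul_eq_mul_left two_pos this

end edgesWithin

section triangle

variable {n : ℕ} {A : ℕ → ℕ → ℕ} {a x b : ℕ}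

theorem apply_le_coverCount {u : ℕ} (hau : a < u) (hub : u < b) :
    A a b ≤ coverCount A a b u := by
  rw [← blockSum_single (A := A)]
  exact blockSum_mono le_rfl hau (by omega) le_rfl

theorem outSum_left_side (hxb : x < b) (hb : b < n) (p q : ℕ) :
    outSum n A a x p q =
      blockSum A p q b (b + 1) + blockSum A p q (x + 1) b + outSum n A a b p q := by
  rw [outSum, outSum, blockSum_split_right (r := x + 1) (m := b) hxb (by omega),
    blockSum_split_right (r := b) (m := b + 1) (by omega) hb]
  omega

theorem coverCount_left_side {u : ℕ} (hau : a < u) (hux : u < x) (hxb : x < b) :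
    coverCount A a b u - A a b = coverCount A a x u + (blockSum A (a + 1) u b (b + 1) +
      blockSum A (a + 1) u (x + 1) b) + blockSum A a (a + 1) (x + 1) b := by
  rw [coverCount, coverCount, blockSum_split_right (m := x + 1) (s := b + 1) (by omega) (by omega),
    blockSum_split_right (r := x + 1) (m := b) (s := b + 1) (by omega) (by omega),
    blockSum_split_left (p := a) (m := a + 1) (r := x + 1) (by omega) (by omega),
    blockSum_split_left (p := a) (m := a + 1) (r := b) (by omega) (by omega), blockSum_single]
  omega

theorem coverCount_apex (hax : a < x) (hxb : x < b) :
    coverCount A a b x - A a b = blockSum A (a + 1) x b (b + 1) + blockSum A a (a + 1) (x + 1) b +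
      blockSum A (a + 1) x (x + 1) b := by
  rw [coverCount, blockSum_split_right (m := b) (by omega) (by omega),
    blockSum_split_left (p := a) (m := a + 1) (r := x + 1) (by omega) (by omega),
    blockSum_split_left (p := a) (m := a + 1) (r := b) (by omega) (by omega), blockSum_single]
  omega

theorem chordPorts_append (p m l : ℕ) :
    chordPorts n A a b p (m + l) = chordPorts n A a b p m ++ chordPorts n A a b (p + m) l := by
  rw [chordPorts, chordPorts, chordPorts, ← List.filter_append, ← List.map_append,
    List.range'_append_1]

theorem chordPorts_one (p : ℕ) : chordPorts n A a b p 1 =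
    if outSum n A a b p (p + 1) = 0 then [] else [chordPort n A a b p] := by
  by_cases h : outSum n A a b p (p + 1) = 0 <;> simp [chordPorts, chordPort, h]

theorem leftPorts_succ (p m : ℕ) : leftPorts n A a x b p (m + 1) =
    ⟨coverCount A a x p, A p b, blockSum A p (p + 1) (x + 1) b, outSum n A a b p (p + 1)⟩ ::
      leftPorts n A a x b (p + 1) m := by
  rw [leftPorts, leftPorts, List.range'_succ, List.map_cons]

theorem peakCrossing_leftPorts_le {p m pre M : ℕ} (h : ∀ i, p ≤ i → i < p + m → A i b ≠ 0 →
    coverCount A a x i + pre + blockSum A p i (x + 1) b + outSum n A a b (i + 1) (p + m) ≤ M) :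
    peakCrossing (leftPorts n A a x b p m) pre ≤ M := by
  induction m generalizing p pre with
  | zero => exact Nat.zero_le M
  | succ m ih =>
    rw [show p + (m + 1) = p + 1 + m by omega] at h
    have hlater : peakCrossing (leftPorts n A a x b (p + 1) m)
        (pre + blockSum A p (p + 1) (x + 1) b) ≤ M := by
      refine ih fun i hi hi' hib => ?_
      have := h i (by omega) hi' hib
      rw [blockSum_split_left (m := p + 1) (by omega) hi] at this
      omega
    rw [leftPorts_succ, peakCrossing_cons, exitSum_leftPorts]
    split_ifs with hcorner
    · exact hlater
    · have := h p le_rfl (by omega) hcorner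
      rw [blockSum_eq_zero_of_le_left le_rfl] at this
      exact max_le this hlater

theorem map_port_properPorts_leftPorts (hxb : x < b) (hb : b < n) {p m : ℕ} (hap : a < p)
    (hpm : p + m = x) : (properPorts (leftPorts n A a x b p m)).map SplitPort.port =
      shiftPorts (A a x) (chordPorts n A a x p m) := by
  induction m generalizing p with
  | zero => rfl
  | succ m ih =>
    have hout := outSum_left_side (A := A) (a := a) (p := p) (q := p + 1) hxb hb
    rw [blockSum_single] at hout
    rw [add_comm m 1, chordPorts_append, chordPorts_one, add_comm 1 m, leftPorts_succ,
      properPorts_cons, ← hout]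
    split_ifs with h
    · exact ih (by omega) (by omega)
    · rw [List.map_cons, ih (by omega) (by omega), SplitPort.port, ← hout, chordPort]
      simp [shiftPorts, Nat.sub_add_cancel (apply_le_coverCount hap (show p < x by omega))]

theorem chordPorts_left_side (hxb : x < b) {p m : ℕ} (hap : a < p) (hpm : p + m = x) :
    chordPorts n A a b p m = shiftPorts (blockSum A a (a + 1) (x + 1) b)
      (outPorts (leftPorts n A a x b p m)
        (blockSum A (a + 1) p b (b + 1) + blockSum A (a + 1) p (x + 1) b)) := by
  induction m generalizing p with
  | zero => rfl
  | succ m ih =>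
    have hcorner := blockSum_split_left (A := A) (p := a + 1) (m := p) (q := p + 1) (r := b)
      (s := b + 1) hap (by omega)
    have hfar := blockSum_split_left (A := A) (p := a + 1) (m := p) (q := p + 1) (r := x + 1)
      (s := b) hap (by omega)
    rw [blockSum_single] at hcorner
    rw [add_comm m 1, chordPorts_append, chordPorts_one, add_comm 1 m, leftPorts_succ,
      outPorts_cons, ih (p := p + 1) (by omega) (by omega), hcorner, hfar, chordPort,
      coverCount_left_side hap (by omega) hxb, add_add_add_comm]
    split_ifs <;> rfl

theorem range'_mirror {p m : ℕ} (h : p + m ≤ n) :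
    List.range' (n - (p + m)) m = ((List.range' p m).map (n - 1 - ·)).reverse := by
  refine List.ext_getElem (by simp) fun i h₁ h₂ => ?_
  simp only [List.length_range'] at h₁
  simp only [List.getElem_range', List.getElem_reverse, List.getElem_map, List.length_map,
    List.length_range']
  omega

theorem coverCount_mirror (hA : ∀ i j, A i j = A j i) {u : ℕ} (hau : a ≤ u) (hub : u ≤ b)
    (hb : b < n) :
    coverCount (mirror n A) (n - 1 - b) (n - 1 - a) (n - 1 - u) = coverCount A a b u := by
  have := blockSum_mirror (A := A) (p := u + 1) (q := b + 1) (r := a) (s := u) hb (by omega)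
  rw [coverCount, coverCount, blockSum_comm hA, ← this]
  congr 1 <;> omega

theorem chordPort_mirror (hA : ∀ i j, A i j = A j i) {u : ℕ} (hau : a < u) (hub : u < b)
    (hb : b < n) :
    chordPort n (mirror n A) (n - 1 - b) (n - 1 - a) (n - 1 - u) = chordPort n A a b u := by
  have hout := outSum_mirror (A := A) (p := u) (q := u + 1) (hau.trans hub).le hb (by omega)
  rw [show n - (u + 1) = n - 1 - u by omega, show n - u = n - 1 - u + 1 by omega] at hout
  rw [chordPort, hout, coverCount_mirror hA hau.le hub.le hb, mirror,
    show n - 1 - (n - 1 - b) = b by omega, show n - 1 - (n - 1 - a) = a by omega, hA b a, chordPort]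

theorem chordPorts_mirror (hA : ∀ i j, A i j = A j i) (hb : b < n) {p m : ℕ} (ha : a < p)
    (hp : p + m ≤ b) :
    chordPorts n (mirror n A) (n - 1 - b) (n - 1 - a) (n - (p + m)) m =
      (chordPorts n A a b p m).reverse := by
  rw [chordPorts, chordPorts, range'_mirror (hp.trans hb.le), List.map_reverse, List.filter_reverse,
    List.map_map]
  congr 2
  refine List.map_congr_left fun u hu => chordPort_mirror hA ?_ ?_ hb
  all_goals
    rw [List.mem_range'_1] at hu
    omega

theorem leftPorts_mirror (hA : ∀ i j, A i j = A j i) (hax : a < x) (hb : b < n) {p m : ℕ}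
    (hp : x < p) (hpm : p + m ≤ b) :
    leftPorts n (mirror n A) (n - 1 - b) (n - 1 - x) (n - 1 - a) (n - (p + m)) m =
      rightPorts n A a x b p m := by
  rw [leftPorts, rightPorts, range'_mirror (hpm.trans hb.le), List.map_reverse, List.map_map]
  refine congrArg List.reverse (List.map_congr_left fun j hj => ?_)
  rw [List.mem_range'_1] at hj
  have hout := outSum_mirror (A := A) (a := a) (b := b) (p := j) (q := j + 1) (by omega) hb
    (by omega)
  have hfar := blockSum_mirror (A := A) (n := n) (p := j) (q := j + 1) (r := a + 1) (s := x)
    (by omega) (by omega)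
  rw [show n - (j + 1) = n - 1 - j by omega, show n - j = n - 1 - j + 1 by omega] at hout hfar
  rw [show n - (a + 1) = n - 1 - a by omega, show n - x = n - 1 - x + 1 by omega] at hfar
  simp only [Function.comp_apply, hout, hfar, coverCount_mirror hA (a := x) (b := b) (u := j)
    (by omega) (by omega) hb, blockSum_comm hA j, mirror, hA _ a,
    show n - 1 - (n - 1 - j) = j by omega, show n - 1 - (n - 1 - a) = a by omega]

theorem leftRecord_mirror (hA : ∀ i j, A i j = A j i) (hdiag : ∀ i, A i i = 0) (hax : a < x)
    (hxb : x < b) (hb : b < n) :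
    leftRecord n (mirror n A) (n - 1 - b) (n - 1 - x) (n - 1 - a) = rightRecord n A a x b := by
  have hports := leftPorts_mirror (p := x + 1) (m := b - x - 1) hA hax hb (by omega) (by omega)
  rw [show n - (x + 1 + (b - x - 1)) = n - 1 - b + 1 by omega] at hports
  rw [leftRecord, rightRecord, edgesWithin_mirror hA hdiag hxb.le hb, ← hports,
    show n - 1 - x - (n - 1 - b) - 1 = b - x - 1 by omega]

theorem chordPorts_right_side (hA : ∀ i j, A i j = A j i) (hax : a < x) (hxb : x < b)
    (hb : b < n) : chordPorts n A a b (x + 1) (b - x - 1) =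
      (shiftPorts (blockSum A (a + 1) x b (b + 1))
        (outPorts (rightPorts n A a x b (x + 1) (b - x - 1)) 0)).reverse := by
  have hchord := chordPorts_mirror (a := a) (p := x + 1) (m := b - x - 1) hA hb (by omega)
    (by omega)
  have hports := leftPorts_mirror (p := x + 1) (m := b - x - 1) hA hax hb (by omega) (by omega)
  have hside := chordPorts_left_side (n := n) (A := mirror n A) (a := n - 1 - b) (x := n - 1 - x)
    (b := n - 1 - a) (p := n - 1 - b + 1) (m := b - x - 1) (by omega) (by omega) (by omega)
  have hcorner := blockSum_mirror (A := A) (p := b) (q := b + 1) (r := a + 1) (s := x) hb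
    (by omega)
  rw [show n - b = n - 1 - b + 1 by omega, show n - (b + 1) = n - 1 - b by omega,
    show n - (a + 1) = n - 1 - a by omega, show n - x = n - 1 - x + 1 by omega,
    blockSum_comm hA] at hcorner
  rw [show n - (x + 1 + (b - x - 1)) = n - 1 - b + 1 by omega] at hchord hports
  rw [blockSum_eq_zero_of_le_left le_rfl, blockSum_eq_zero_of_le_left le_rfl, hports, hcorner,
    hchord] at hside
  rw [← hside, List.reverse_reverse]

theorem chordPorts_eq_append (hA : ∀ i j, A i j = A j i) (hax : a < x) (hxb : x < b) (hb : b < n) :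
    chordPorts n A a b (a + 1) (b - a - 1) =
      shiftPorts (blockSum A a (a + 1) (x + 1) b)
        (outPorts (leftPorts n A a x b (a + 1) (x - a - 1)) 0) ++
      (chordPorts n A a b x 1 ++ (shiftPorts (blockSum A (a + 1) x b (b + 1))
        (outPorts (rightPorts n A a x b (x + 1) (b - x - 1)) 0)).reverse) := by
  have hleft := chordPorts_left_side (n := n) (A := A) (p := a + 1) (m := x - a - 1) hxb
    a.lt_succ_self (by omega)
  rw [blockSum_eq_zero_of_le_left le_rfl, blockSum_eq_zero_of_le_left le_rfl] at hleft
  rw [← chordPorts_right_side hA hax hxb hb, ← hleft, ← chordPorts_append x 1,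
    show b - a - 1 = x - a - 1 + (1 + (b - x - 1)) by omega, chordPorts_append (a + 1),
    show a + 1 + (x - a - 1) = x by omega]

theorem chordRecord_eq_join (hA : ∀ i j, A i j = A j i) (hax : a < x) (hxb : x < b) (hb : b < n) :
    chordRecord n A a b =
      (leftRecord n A a x b).join (rightRecord n A a x b) (outSum n A a b x (x + 1)) := by
  have hapex := coverCount_apex (A := A) hax hxb
  have hle := apply_le_coverCount (A := A) hax hxb
  have hsplit : edgesWithin A a b = _ + _ + coverCount A a b x := edgesWithin_split hax.le hxb.le
  rw [chordRecord, chordPorts_eq_append hA hax hxb hb, chordPorts_one, chordPort, hapex]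
  simp only [SplitRecord.join, leftRecord, rightRecord, SplitRecord.ofPorts, cornerSum_leftPorts,
    cornerSum_rightPorts, farSum_leftPorts, show a + 1 + (x - a - 1) = x by omega,
    show x + 1 + (b - x - 1) = b by omega]
  congr 1
  · omega
  · omega
  · congr 2
    cases outSum n A a b x (x + 1) <;> rfl

end triangle

/-! ### Triangles in a drawing -/

section triangle

variable {n k : ℕ} {A : ℕ → ℕ → ℕ} {a x b : ℕ}

theorem IsOuterAdj.coverCount_le (hA : IsOuterAdj n k A) {u : ℕ} (hau : a < u) (hub : u < b)
    (hb : b < n) (h : outSum n A a b u (u + 1) ≠ 0) : coverCount A a b u ≤ k := by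
  rcases Nat.eq_zero_or_pos (blockSum A u (u + 1) 0 a) with hleft | hleft
  · obtain ⟨i, v, hi, hi', hv, hv', huv⟩ := exists_of_blockSum_pos (A := A) (p := u) (q := u + 1)
      (r := b + 1) (s := n) (by rw [outSum] at h; omega)
    obtain rfl : i = u := by omega
    refine le_trans ?_ (hA.cross i v (by omega) hv' huv)
    rw [crossCount, coverCount, blockSum_comm hA.symm]
    exact (blockSum_mono le_rfl (by omega) (Nat.zero_le a) le_rfl).trans (Nat.le_add_right _ _)
  · obtain ⟨i, v, hi, hi', _, hv', huv⟩ := exists_of_blockSum_pos hleft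
    obtain rfl : i = u := by omega
    refine le_trans ?_ (hA.cross v i (by omega) (by omega) (by rwa [hA.symm]))
    exact (blockSum_mono (by omega) le_rfl le_rfl (by omega)).trans (Nat.le_add_left _ _)

theorem IsOuterAdj.passing_le_of_mem_chordPorts (hA : IsOuterAdj n k A) (hb : b < n) {p m : ℕ}
    (ha : a < p) (hp : p + m ≤ b) {q : Port} (hq : q ∈ chordPorts n A a b p m) :
    q.passing ≤ k := by
  simp only [chordPorts, List.mem_filter, List.mem_map, List.mem_range'_1, ne_eq,
    decide_eq_true_eq] at hq
  obtain ⟨⟨u, hu, rfl⟩, hweight⟩ := hq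
  exact (Nat.sub_le _ _).trans (hA.coverCount_le (by omega) (by omega) hb hweight)

theorem IsOuterAdj.passing_add_le_of_mem_leftRecord (hA : IsOuterAdj n k A) (hax : a < x)
    (hxb : x < b) (hb : b < n) {q : Port} (hq : q ∈ (leftRecord n A a x b).ports) :
    q.passing + blockSum A a (a + 1) (x + 1) b ≤ k := by
  refine hA.passing_le_of_mem_chordPorts (a := a) (p := a + 1) (m := b - a - 1) hb (by omega)
    (by omega) (q := ⟨q.weight, _⟩) ?_
  rw [chordPorts_eq_append hA.symm hax hxb hb]
  exact List.mem_append_left _ (List.mem_map_of_mem hq)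

theorem IsOuterAdj.passing_add_le_of_mem_rightRecord (hA : IsOuterAdj n k A) (hax : a < x)
    (hxb : x < b) (hb : b < n) {q : Port} (hq : q ∈ (rightRecord n A a x b).ports) :
    q.passing + blockSum A (a + 1) x b (b + 1) ≤ k := by
  refine hA.passing_le_of_mem_chordPorts (a := a) (p := a + 1) (m := b - a - 1) hb (by omega)
    (by omega) (q := ⟨q.weight, _⟩) ?_
  rw [chordPorts_eq_append hA.symm hax hxb hb]
  exact List.mem_append_right _ (List.mem_append_right _
    (List.mem_reverse.2 (List.mem_map_of_mem hq)))

theorem IsOuterAdj.coverCount_corner_le (hA : IsOuterAdj n k A) (hxb : x < b) (hb : b < n) {i : ℕ}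
    (hai : a < i) (hix : i < x) (hib : A i b ≠ 0) :
    coverCount A a x i + blockSum A (a + 1) i (x + 1) b + outSum n A a b (i + 1) x +
      (blockSum A a (a + 1) (x + 1) b + outSum n A a b x (x + 1) + outSum n A a b (x + 1) b)
        ≤ k := by
  have hcross := hA.cross i b (by omega) hb hib
  rw [crossCount_eq_outSum (a := a) (b := b) hai.le le_rfl hb,
    outSum_split (p := i + 1) (m := x) (q := b) (by omega) hxb.le,
    outSum_split (p := x) (m := x + 1) (q := b) (by omega) hxb,
    blockSum_comm hA.symm (i + 1) b a i,
    blockSum_split_right (m := x + 1) (s := b) (by omega) hxb,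
    blockSum_split_left (p := a) (m := a + 1) (r := x + 1) (by omega) (by omega)] at hcross
  rw [coverCount]
  omega

theorem IsOuterAdj.peak_leftRecord_le (hA : IsOuterAdj n k A) (hax : a < x) (hxb : x < b)
    (hb : b < n) : (leftRecord n A a x b).peak ≤ k := by
  refine peakCrossing_leftPorts_le fun i hi hi' hib => ?_
  rw [show a + 1 + (x - a - 1) = x by omega] at hi' ⊢
  have := hA.coverCount_corner_le (a := a) hxb hb hi hi' hib
  omega

theorem IsOuterAdj.peak_leftRecord_add_le (hA : IsOuterAdj n k A) (hax : a < x) (hxb : x < b)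
    (hb : b < n) (h : blockSum A (a + 1) x b (b + 1) ≠ 0) :
    (leftRecord n A a x b).peak + blockSum A a (a + 1) (x + 1) b + outSum n A a b x (x + 1) +
      outSum n A a b (x + 1) b ≤ k := by
  obtain ⟨i, j, hai, hix, hj, hj', hij⟩ := exists_of_blockSum_pos (Nat.pos_of_ne_zero h)
  obtain rfl : j = b := by omega
  have := hA.coverCount_corner_le (a := a) hxb hb hai hix hij
  rw [add_assoc, add_assoc, ← add_assoc (blockSum _ _ _ _ _)]
  refine Nat.add_le_of_le_sub (by omega) (peakCrossing_leftPorts_le fun i hi hi' hib => ?_)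
  rw [show a + 1 + (x - a - 1) = x by omega] at hi' ⊢
  have := hA.coverCount_corner_le (a := a) hxb hb hi hi' hib
  omega

theorem IsOuterAdj.peak_rightRecord_add_le (hA : IsOuterAdj n k A) (hax : a < x) (hxb : x < b)
    (hb : b < n) (h : blockSum A a (a + 1) (x + 1) b ≠ 0) :
    (rightRecord n A a x b).peak + blockSum A (a + 1) x b (b + 1) + outSum n A a b x (x + 1) +
      outSum n A a b (a + 1) x ≤ k := by
  have hout (p q : ℕ) (hq : q ≤ n) :=
    outSum_mirror (A := A) (p := p) (hax.trans hxb).le hb hq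
  have hapex := hout x (x + 1) (by omega)
  have hexit := hout (a + 1) x (by omega)
  have hcorner := blockSum_mirror (A := A) (p := b) (q := b + 1) (r := a + 1) (s := x) hb
    (by omega)
  have hcorner' := blockSum_mirror (A := A) (p := x + 1) (q := b) (r := a) (s := a + 1)
    (n := n) (by omega) (by omega)
  have hleft := hA.mirror.peak_leftRecord_add_le (a := n - 1 - b) (x := n - 1 - x)
    (b := n - 1 - a) (by omega) (by omega) (by omega)
  rw [show n - (b + 1) = n - 1 - b by omega, show n - b = n - 1 - b + 1 by omega,
    show n - (a + 1) = n - 1 - a by omega, show n - x = n - 1 - x + 1 by omega,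
    blockSum_comm hA.symm b] at hcorner
  rw [show n - (x + 1) = n - 1 - x by omega, show n - b = n - 1 - b + 1 by omega,
    show n - (a + 1) = n - 1 - a by omega, show n - a = n - 1 - a + 1 by omega,
    blockSum_comm hA.symm (x + 1)] at hcorner'
  rw [show n - (x + 1) = n - 1 - x by omega, show n - x = n - 1 - x + 1 by omega] at hapex
  rw [show n - (a + 1) = n - 1 - a by omega, show n - x = n - 1 - x + 1 by omega] at hexit
  rw [leftRecord_mirror hA.symm hA.diag hax hxb hb, hcorner, hcorner', hapex, hexit] at hleft
  exact hleft h

theorem IsOuterAdj.coverCount_far_le (hA : IsOuterAdj n k A) (hb : b < n) {i j : ℕ}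
    (hai : a < i) (hix : i < x) (hxj : x < j) (hjb : j < b) (hij : A i j ≠ 0) :
    coverCount A a x i + coverCount A x b j + outSum n A a b x (x + 1) ≤ k := by
  refine le_trans ?_ (hA.cross i j (by omega) (by omega) hij)
  have hsplit := outSum_split (n := n) (A := A) (a := a) (b := b) (p := i + 1) (m := x) (q := j)
    (by omega) hxj.le
  have hapex := outSum_split (n := n) (A := A) (a := a) (b := b) (p := x) (m := x + 1) (q := j)
    (by omega) hxj
  have hleft : coverCount A a x i ≤ blockSum A a i (i + 1) j :=
    blockSum_mono le_rfl le_rfl le_rfl hxj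
  have hright : coverCount A x b j ≤ blockSum A (i + 1) j (j + 1) (b + 1) :=
    blockSum_mono hix le_rfl le_rfl le_rfl
  rw [crossCount_eq_outSum (a := a) (b := b) (by omega) (by omega) hb,
    blockSum_comm hA.symm (i + 1) j a i]
  omega

theorem IsOuterAdj.sum_load_le (hA : IsOuterAdj n k A) (hb : b < n) :
    ∑ i ∈ Ico (a + 1) x, blockSum A i (i + 1) (x + 1) b * coverCount A a x i +
      ∑ j ∈ Ico (x + 1) b, blockSum A (a + 1) x j (j + 1) * coverCount A x b j +
      blockSum A (a + 1) x (x + 1) b * outSum n A a b x (x + 1) ≤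
    k * blockSum A (a + 1) x (x + 1) b := by
  have hrow (i : ℕ) : blockSum A i (i + 1) (x + 1) b = ∑ j ∈ Ico (x + 1) b, A i j := by
    simp [blockSum]
  have hcol (j : ℕ) : blockSum A (a + 1) x j (j + 1) = ∑ i ∈ Ico (a + 1) x, A i j := by
    simp [blockSum]
  simp only [hrow, hcol, sum_mul]
  rw [sum_comm (s := Ico (x + 1) b)]
  simp only [blockSum, sum_mul, mul_sum, ← sum_add_distrib]
  refine sum_le_sum fun i hi => sum_le_sum fun j hj => ?_
  rw [← mul_add, ← mul_add, mul_comm k]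
  rw [mem_Ico] at hi hj
  by_cases hij : A i j = 0
  · rw [hij, zero_mul, zero_mul]
  · exact Nat.mul_le_mul_left _ (hA.coverCount_far_le hb hi.1 hi.2 hj.1 hj.2 hij)

theorem blockSum_le_width_mul_width (hA : ∀ i j, A i j ≤ 1) (p q r s : ℕ) :
    blockSum A p q r s ≤ (∑ i ∈ Ico p q, bif Nat.beq (blockSum A i (i + 1) r s) 0 then 0 else 1) *
      ∑ j ∈ Ico r s, bif Nat.beq (blockSum A p q j (j + 1)) 0 then 0 else 1 := by
  rw [blockSum, sum_mul_sum]
  refine sum_le_sum fun i hi => sum_le_sum fun j hj => ?_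
  rw [mem_Ico] at hi hj
  simp only [Bool.cond_eq_ite, Nat.beq_eq]
  by_cases hij : A i j = 0
  · rw [hij]
    exact Nat.zero_le _
  · rw [if_neg fun h => hij (eq_zero_of_blockSum_eq_zero h i.le_refl i.lt_succ_self hj.1 hj.2),
      if_neg fun h => hij (eq_zero_of_blockSum_eq_zero h hi.1 hi.2 j.le_refl j.lt_succ_self)]
    exact hA i j

end triangle

section record

variable {n k : ℕ} {A : ℕ → ℕ → ℕ} {a x b : ℕ}

theorem leftRecord_corner (hax : a < x) :
    (leftRecord n A a x b).corner = blockSum A (a + 1) x b (b + 1) := by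
  simp only [leftRecord, SplitRecord.ofPorts, cornerSum_leftPorts,
    show a + 1 + (x - a - 1) = x by omega]

theorem leftRecord_far (hax : a < x) :
    (leftRecord n A a x b).far = blockSum A (a + 1) x (x + 1) b := by
  simp only [leftRecord, SplitRecord.ofPorts, farSum_leftPorts,
    show a + 1 + (x - a - 1) = x by omega]

theorem leftRecord_exit (hax : a < x) :
    (leftRecord n A a x b).exit = outSum n A a b (a + 1) x := by
  simp only [leftRecord, SplitRecord.ofPorts, exitSum_leftPorts,
    show a + 1 + (x - a - 1) = x by omega]

theorem rightRecord_corner (hxb : x < b) :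
    (rightRecord n A a x b).corner = blockSum A a (a + 1) (x + 1) b := by
  simp only [rightRecord, SplitRecord.ofPorts, cornerSum_rightPorts,
    show x + 1 + (b - x - 1) = b by omega]

theorem rightRecord_far (hxb : x < b) :
    (rightRecord n A a x b).far = blockSum A (a + 1) x (x + 1) b := by
  simp only [rightRecord, SplitRecord.ofPorts, farSum_rightPorts,
    show x + 1 + (b - x - 1) = b by omega]

theorem rightRecord_exit (hxb : x < b) :
    (rightRecord n A a x b).exit = outSum n A a b (x + 1) b := by
  simp only [rightRecord, SplitRecord.ofPorts, exitSum_rightPorts,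
    show x + 1 + (b - x - 1) = b by omega]

theorem IsOuterAdj.load_add_le (hA : IsOuterAdj n k A) (hax : a < x) (hxb : x < b) (hb : b < n) :
    (leftRecord n A a x b).load + (rightRecord n A a x b).load +
      blockSum A (a + 1) x (x + 1) b * outSum n A a b x (x + 1) ≤
    k * blockSum A (a + 1) x (x + 1) b := by
  simp only [leftRecord, rightRecord, SplitRecord.ofPorts, farLoad_leftPorts, farLoad_rightPorts,
    show a + 1 + (x - a - 1) = x by omega, show x + 1 + (b - x - 1) = b by omega]
  exact hA.sum_load_le hb

theorem far_le_width_mul_width (hA : ∀ i j, A i j ≤ 1) (hax : a < x) (hxb : x < b) :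
    blockSum A (a + 1) x (x + 1) b ≤
      (leftRecord n A a x b).width * (rightRecord n A a x b).width := by
  simp only [leftRecord, rightRecord, SplitRecord.ofPorts, farWidth_leftPorts,
    farWidth_rightPorts, show a + 1 + (x - a - 1) = x by omega,
    show x + 1 + (b - x - 1) = b by omega]
  exact blockSum_le_width_mul_width hA _ _ _ _

theorem isFeasible_leftRecord (hA : IsOuterAdj n 5 A) (hax : a < x) (hxb : x < b) (hb : b < n) :
    (leftRecord n A a x b).IsFeasible where
  exit := weight_outPorts ..
  peak := hA.peak_leftRecord_le hax hxb hb
  load := by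
    rw [leftRecord_far hax]
    have := hA.load_add_le hax hxb hb
    omega
  ports _ hq := (Nat.le_add_right _ _).trans (hA.passing_add_le_of_mem_leftRecord hax hxb hb hq)

theorem isFeasible_rightRecord (hA : IsOuterAdj n 5 A) (hax : a < x) (hxb : x < b) (hb : b < n) :
    (rightRecord n A a x b).IsFeasible := by
  rw [← leftRecord_mirror hA.symm hA.diag hax hxb hb]
  exact isFeasible_leftRecord hA.mirror (by omega) (by omega) (by omega)

theorem joinable_leftRecord_rightRecord (hA : IsOuterAdj n 5 A) (hax : a < x) (hxb : x < b)
    (hb : b < n) (hab : crossCount n A a b ≤ 5) :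
    (leftRecord n A a x b).Joinable (rightRecord n A a x b) (outSum n A a b x (x + 1)) where
  far := by rw [leftRecord_far hax, rightRecord_far hxb]
  exit := by
    rw [leftRecord_exit hax, rightRecord_exit hxb, ← outSum_split (by omega) (by omega),
      ← outSum_split (by omega) hxb]
    exact hab
  peak_left h := by
    rw [leftRecord_corner hax] at h
    rw [rightRecord_corner hxb, rightRecord_exit hxb]
    exact hA.peak_leftRecord_add_le hax hxb hb h
  peak_right h := by
    rw [rightRecord_corner hxb] at h
    rw [leftRecord_corner hax, leftRecord_exit hax]
    exact hA.peak_rightRecord_add_le hax hxb hb h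
  load := by
    rw [leftRecord_far hax]
    exact hA.load_add_le hax hxb hb
  width := by
    rw [leftRecord_far hax]
    exact far_le_width_mul_width hA.le_one hax hxb
  apex h := by
    rw [leftRecord_corner hax, rightRecord_corner hxb, leftRecord_far hax,
      ← coverCount_apex hax hxb]
    exact (Nat.sub_le _ _).trans (hA.coverCount_le hax hxb hb h)
  ports_left q hq := by
    rw [rightRecord_corner hxb]
    exact hA.passing_add_le_of_mem_leftRecord hax hxb hb hq
  ports_right q hq := by
    rw [leftRecord_corner hax]
    exact hA.passing_add_le_of_mem_rightRecord hax hxb hb hq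

end record

/-- Removing the vertices behind `{a, b}` from a minimal counterexample to the edge bound, and
adding the edge `{a, b}`, would not give a smaller counterexample. -/
def IsIrremovable (n : ℕ) (A : ℕ → ℕ → ℕ) (a b : ℕ) : Prop :=
  a + 1 < b → 389 * (b - a - 1) + 98 < 98 * (edgesWithin A a b + crossCount n A a b)

/-- The chord `{a, b}` is described by a record in `S`. -/
def IsCovered (S : List SideRecord) (n : ℕ) (A : ℕ → ℕ → ℕ) (a b : ℕ) : Prop :=
  ∃ s ∈ S, s.Covers (chordRecord n A a b)

section covered

variable {S : List SideRecord} {n : ℕ} {A : ℕ → ℕ → ℕ} {a x b : ℕ}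

theorem IsIrremovable.not_isRemovable (h : IsIrremovable n A a b) {s : SideRecord} (hab : a < b)
    (hs : s.Covers (chordRecord n A a b)) : ¬ s.IsRemovable (A a b) := by
  rintro ⟨hsize, hremovable⟩
  have hweight := hs.ports.weight_eq
  rw [weight_chordRecord hab] at hweight
  have hinner := hs.inner
  have hedge := apply_le_edgesWithin (A := A) hab
  rw [hs.size] at hsize hremovable
  simp only [chordRecord] at hsize hremovable hinner
  have := h (by omega)
  omega

theorem exists_mem_allSplits_covers_leftRecord (hA : IsOuterAdj n 5 A) (hax : a < x) (hxb : x < b)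
    (hb : b < n) (hcovered : IsCovered S n A a x) (hirr : IsIrremovable n A a x)
    (hedge : x = a + 1 → A a x = 1) : ∃ r ∈ allSplits S, r.Covers (leftRecord n A a x b) := by
  obtain ⟨s, hs, hsa⟩ := hcovered
  have hport := map_port_properPorts_leftPorts (A := A) (p := a + 1) (m := x - a - 1) hxb hb
    a.lt_succ_self (by omega)
  have hproper : ∀ e ∈ properPorts (leftPorts n A a x b (a + 1) (x - a - 1)),
      e.corner ≤ 1 ∧ e.passing ≤ 5 := by
    simp only [properPorts, leftPorts, List.mem_filter, List.mem_map, List.mem_range'_1, ne_eq,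
      decide_eq_true_eq]
    rintro _ ⟨⟨i, hi, rfl⟩, hweight⟩
    refine ⟨hA.le_one i b, hA.coverCount_le (by omega) (by omega) (hxb.trans hb) ?_⟩
    rw [outSum_left_side hxb hb, blockSum_single]
    exact hweight
  have hsize : s.size = x - a - 1 := hsa.size
  obtain ⟨r, hr, hrs⟩ := exists_mem_allSplits_covers hs (hA.le_one a x)
    (fun h => hedge (by omega)) (hirr.not_isRemovable hax hsa)
    (hport ▸ hsa.ports.shiftPorts (A a x)) (fun e he => (hproper e he).1)
    (fun e he => (hproper e he).2)
  rw [ofPorts_properPorts] at hrs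
  have hinner : edgesWithin A a x - A a x ≤ s.inner := hsa.inner
  exact ⟨r, hr, hrs.trans { SplitRecord.Covers.refl _ with
    size := hsize
    inner := by simp only [leftRecord, SplitRecord.ofPorts]; omega }⟩

theorem exists_mem_allSplits_covers_rightRecord (hA : IsOuterAdj n 5 A) (hax : a < x) (hxb : x < b)
    (hb : b < n) (hcovered : IsCovered S n (mirror n A) (n - 1 - b) (n - 1 - x))
    (hirr : IsIrremovable n (mirror n A) (n - 1 - b) (n - 1 - x)) (hedge : b = x + 1 → A x b = 1) :
    ∃ r ∈ allSplits S, r.Covers (rightRecord n A a x b) := by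
  rw [← leftRecord_mirror hA.symm hA.diag hax hxb hb]
  refine exists_mem_allSplits_covers_leftRecord hA.mirror (by omega) (by omega) (by omega) hcovered
    hirr fun h => ?_
  rw [mirror, hA.symm, show n - 1 - (n - 1 - b) = b by omega,
    show n - 1 - (n - 1 - x) = x by omega]
  exact hedge (by omega)

theorem isAdmissible_chordRecord (hS : IsTriangleClosed S) (hA : IsOuterAdj n 5 A) (hax : a < x)
    (hxb : x < b) (hb : b < n) (hab : crossCount n A a b ≤ 5) {r r' : SplitRecord}
    (hr : r ∈ allSplits S) (hr' : r' ∈ allSplits S) (hleft : r.Covers (leftRecord n A a x b))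
    (hright : r'.Covers (rightRecord n A a x b)) : (chordRecord n A a b).IsAdmissible S := by
  rw [chordRecord_eq_join hA.symm hax hxb hb]
  exact hS.isAdmissible_join hr hr' hleft hright (isFeasible_leftRecord hA hax hxb hb)
    (isFeasible_rightRecord hA hax hxb hb) (joinable_leftRecord_rightRecord hA hax hxb hb hab)

end covered

/-! ### Minimal counterexamples -/

/-- The graph with the edges of the outer cycle added. -/
def fillCycle (n : ℕ) (A : ℕ → ℕ → ℕ) (i j : ℕ) : ℕ :=
  if i = j + 1 ∨ j = i + 1 ∨ i = 0 ∧ j + 1 = n ∨ j = 0 ∧ i + 1 = n then 1 else A i j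

/-- The labels of the vertices that remain after removing `t` vertices after `a`. -/
def skip (a t i : ℕ) : ℕ := if i ≤ a then i else i + t

section reduction

variable {n m t k : ℕ} {A B : ℕ → ℕ → ℕ} {a b p q u : ℕ}

theorem blockSum_le_blockSum (h : ∀ i j, A i j ≤ B i j) (p q r s : ℕ) :
    blockSum A p q r s ≤ blockSum B p q r s :=
  sum_le_sum fun _ _ => sum_le_sum fun _ _ => h _ _

theorem edgesWithin_le_edgesWithin (h : ∀ i j, A i j ≤ B i j) (a b : ℕ) :
    edgesWithin A a b ≤ edgesWithin B a b :=
  sum_le_sum fun _ _ => blockSum_le_blockSum h ..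

theorem edgesWithin_add_apply_le (h : ∀ i j, A i j ≤ B i j) (hau : a ≤ u) (hub : u < b) :
    edgesWithin A a b + B u (u + 1) ≤ edgesWithin B a b + A u (u + 1) := by
  have hsplit (C : ℕ → ℕ → ℕ) : edgesWithin C a b = edgesWithin C a u +
      (C u (u + 1) + edgesWithin C (u + 1) b + blockSum C u (u + 1) (u + 2) (b + 1)) +
        blockSum C a u (u + 1) (b + 1) := by
    rw [edgesWithin_split hau hub.le, edgesWithin_split (Nat.le_add_right u 1) hub,
      edgesWithin_self_succ]
  have hleft := edgesWithin_le_edgesWithin h a u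
  have hright := edgesWithin_le_edgesWithin h (u + 1) b
  have hrow := blockSum_le_blockSum h u (u + 1) (u + 2) (b + 1)
  have hover := blockSum_le_blockSum h a u (u + 1) (b + 1)
  rw [hsplit A, hsplit B]
  omega

theorem IsOuterAdj.le_fillCycle (hA : IsOuterAdj n k A) (i j : ℕ) : A i j ≤ fillCycle n A i j := by
  rw [fillCycle]
  split_ifs
  · exact hA.le_one i j
  · exact le_rfl

theorem crossCount_fillCycle {i j : ℕ} (hj : j < n) :
    crossCount n (fillCycle n A) i j = crossCount n A i j := by
  simp only [crossCount, blockSum]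
  congr 1 <;> refine sum_congr rfl fun u hu => sum_congr rfl fun v hv => if_neg ?_ <;>
    rw [mem_Ico] at hu hv <;> omega

theorem crossCount_self_succ (i : ℕ) : crossCount n A i (i + 1) = 0 := by
  rw [crossCount, blockSum_eq_zero_of_le_left le_rfl, blockSum_eq_zero_of_le_left le_rfl]

theorem crossCount_zero_of_le {j : ℕ} (hj : n ≤ j + 1) : crossCount n A 0 j = 0 := by
  rw [crossCount, blockSum_eq_zero_of_le_right le_rfl, blockSum_eq_zero_of_le_right hj]

theorem IsOuterAdj.fillCycle (hA : IsOuterAdj n k A) (hn : 2 ≤ n) :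
    IsOuterAdj n k (fillCycle n A) where
  le_one i j := by
    rw [OuterPlanar.fillCycle]
    split_ifs
    · exact le_rfl
    · exact hA.le_one i j
  symm i j := by
    rw [OuterPlanar.fillCycle, OuterPlanar.fillCycle, hA.symm i j]
    exact if_congr (by omega) rfl rfl
  diag i := by
    rw [OuterPlanar.fillCycle, if_neg (by omega), hA.diag]
  cross i j hij hj h := by
    rw [crossCount_fillCycle hj]
    rw [OuterPlanar.fillCycle] at h
    split_ifs at h with hcycle
    · obtain rfl | ⟨rfl, rfl⟩ : j = i + 1 ∨ i = 0 ∧ n = j + 1 := by omega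
      · exact (crossCount_self_succ i).trans_le (Nat.zero_le k)
      · exact (crossCount_zero_of_le le_rfl).trans_le (Nat.zero_le k)
    · exact hA.cross i j hij hj h

theorem strictMono_skip : StrictMono (skip a t) := fun i j h => by
  simp only [skip]
  split_ifs <;> omega

theorem IsOuterAdj.comp_skip (hA : IsOuterAdj (n + t) k A) :
    IsOuterAdj n k fun i j => A (skip a t i) (skip a t j) where
  le_one _ _ := hA.le_one _ _
  symm _ _ := hA.symm _ _
  diag _ := hA.diag _
  cross i j hij hj h := by
    have hmono : StrictMono (skip a t) := strictMono_skip
    have hlt (v : ℕ) (hv : v < n) : skip a t v < n + t := by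
      simp only [skip]
      split_ifs <;> omega
    refine le_trans (Nat.add_le_add (blockSum_comp_le hmono.injective ?_ ?_)
      (blockSum_comp_le hmono.injective ?_ ?_)) (hA.cross _ _ (hmono hij) (hlt j hj) h)
    · exact fun u h₁ h₂ => ⟨hmono h₁, hmono h₂⟩
    · exact fun u _ h₂ => ⟨Nat.zero_le _, hmono h₂⟩
    · exact fun u h₁ h₂ => ⟨hmono h₁, hmono h₂⟩
    · exact fun u h₁ h₂ => ⟨hmono h₁, hlt u h₂⟩

theorem blockSum_square (hA : ∀ i j, A i j = A j i) (hpm : p ≤ m) (hmq : m ≤ q) :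
    blockSum A p q p q = blockSum A p m p m + 2 * blockSum A p m m q + blockSum A m q m q := by
  rw [blockSum_split_left hpm hmq, blockSum_split_right hpm hmq, blockSum_split_right hpm hmq,
    blockSum_comm hA m q p m]
  omega

theorem blockSum_comp_skip (ham : a < m) (hA : ∀ i j, A i j = A j i) :
    blockSum (fun i j => A (skip a t i) (skip a t j)) 0 m 0 m =
      blockSum A 0 (a + 1) 0 (a + 1) + 2 * blockSum A 0 (a + 1) (a + 1 + t) (m + t) +
        blockSum A (a + 1 + t) (m + t) (a + 1 + t) (m + t) := by
  have hbefore (f : ℕ → ℕ) : ∑ i ∈ Ico 0 (a + 1), f (skip a t i) = ∑ i ∈ Ico 0 (a + 1), f i :=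
    sum_congr rfl fun i hi => by rw [skip, if_pos (Nat.lt_succ_iff.1 (mem_Ico.1 hi).2)]
  have hafter (f : ℕ → ℕ) : ∑ i ∈ Ico (a + 1) m, f (skip a t i) =
      ∑ i ∈ Ico (a + 1 + t) (m + t), f i := by
    rw [← sum_Ico_add']
    exact sum_congr rfl fun i hi => by rw [skip, if_neg (Nat.not_le.2 (mem_Ico.1 hi).1)]
  rw [blockSum_square (m := a + 1) (fun _ _ => hA _ _) (Nat.zero_le _) ham]
  simp only [blockSum]
  rw [hbefore fun i => ∑ j ∈ Ico 0 (a + 1), A i (skip a t j),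
    hbefore fun i => ∑ j ∈ Ico _ m, A i (skip a t j),
    hafter fun i => ∑ j ∈ Ico _ m, A i (skip a t j)]
  simp only [hbefore (A _), hafter (A _)]

theorem IsOuterAdj.blockSum_add_two_mul (hA : IsOuterAdj n k A) (hab : a < b) (hb : b < n) :
    blockSum A 0 n 0 n + 2 * A a b = blockSum A 0 (a + 1) 0 (a + 1) +
      2 * blockSum A 0 (a + 1) b n + blockSum A b n b n +
        (2 * crossCount n A a b + blockSum A a (b + 1) a (b + 1)) := by
  have hsquare {p m q : ℕ} := blockSum_square (p := p) (m := m) (q := q) hA.symm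
  rw [hsquare (p := 0) (m := a + 1) (q := n) (by omega) (by omega),
    hsquare (p := a + 1) (m := b) (q := n) (by omega) (by omega),
    hsquare (p := a) (m := a + 1) (q := b + 1) (by omega) (by omega),
    hsquare (p := a + 1) (m := b) (q := b + 1) (by omega) (by omega),
    blockSum_split_right (p := 0) (q := a + 1) (r := a + 1) (m := b) (s := n) (by omega) (by omega),
    blockSum_split_right (p := a) (q := a + 1) (r := a + 1) (m := b) (s := b + 1)
      (by omega) (by omega),
    blockSum_split_right (p := a + 1) (q := b) (r := b) (m := b + 1) (s := n) (by omega) (by omega),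
    blockSum_split_left (p := 0) (m := a) (q := a + 1) (r := a + 1) (s := b) (by omega) (by omega),
    crossCount, blockSum_comm hA.symm (a + 1) b 0 a]
  simp only [blockSum_single, hA.diag]
  omega

theorem IsOuterAdj.edgesWithin_add_apply_eq (hA : IsOuterAdj (m + t) k A) (ham : a + 1 < m) :
    edgesWithin A 0 (m + t - 1) + A a (a + 1 + t) =
      edgesWithin (fun i j => A (skip a t i) (skip a t j)) 0 (m - 1) +
        (edgesWithin A a (a + 1 + t) + crossCount (m + t) A a (a + 1 + t)) := by
  have hsum := hA.blockSum_add_two_mul (a := a) (b := a + 1 + t) (by omega) (by omega)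
  have hskip := blockSum_comp_skip (t := t) (Nat.lt_of_succ_lt ham) hA.symm
  have hwhole := two_mul_edgesWithin hA.symm hA.diag (Nat.zero_le (m + t - 1))
  have hrest := two_mul_edgesWithin (A := fun i j => A (skip a t i) (skip a t j))
    (fun _ _ => hA.symm _ _) (fun _ => hA.diag _) (Nat.zero_le (m - 1))
  have hbehind := two_mul_edgesWithin hA.symm hA.diag (a := a) (b := a + 1 + t) (by omega)
  rw [Nat.sub_add_cancel (by omega)] at hwhole hrest
  omega

end reduction

/-- Outer `5`-planar graphs on `m` vertices have at most `389 / 98 * (m - 2)` edges. -/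
def EdgeBound (m : ℕ) : Prop :=
  ∀ A, IsOuterAdj m 5 A → 98 * edgesWithin A 0 (m - 1) ≤ 389 * (m - 2)

/-- The properties of a minimal counterexample to the edge bound that contains the outer cycle. -/
structure IsCritical (n : ℕ) (A : ℕ → ℕ → ℕ) : Prop extends IsOuterAdj n 5 A where
  cycle : ∀ i, i + 1 < n → A i (i + 1) = 1
  irremovable : ∀ a b, a < b → b < n → b - a + 1 < n → IsIrremovable n A a b

section critical

variable {S : List SideRecord} {n : ℕ} {A : ℕ → ℕ → ℕ} {a b : ℕ}

theorem isIrremovable_of_edgeBound (hA : IsOuterAdj n 5 A)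
    (hmin : ∀ m, 3 ≤ m → m < n → EdgeBound m)
    (hlarge : 389 * (n - 2) < 98 * edgesWithin A 0 (n - 1)) (hb : b < n)
    (hroot : b - a + 1 < n) : IsIrremovable n A a b := by
  intro hab
  obtain ⟨t, rfl⟩ : ∃ t, b = a + 1 + t := ⟨b - (a + 1), by omega⟩
  obtain ⟨m, rfl⟩ : ∃ m, n = m + t := ⟨n - t, by omega⟩
  have hskip : IsOuterAdj m 5 fun i j => A (skip a t i) (skip a t j) := hA.comp_skip
  have hbound := hmin m (by omega) (by omega) _ (hskip.fillCycle (by omega))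
  have hsum := hA.edgesWithin_add_apply_eq (a := a) (by omega)
  have hfill := edgesWithin_add_apply_le hskip.le_fillCycle (Nat.zero_le a) (b := m - 1) (by omega)
  have hedge : skip a t a = a ∧ skip a t (a + 1) = a + 1 + t := by simp [skip]
  rw [hedge.1, hedge.2, show fillCycle m _ a (a + 1) = 1 by simp [fillCycle]] at hfill
  omega

theorem isCritical_fillCycle (hA : IsOuterAdj n 5 A) (hn : 2 ≤ n)
    (hmin : ∀ m, 3 ≤ m → m < n → EdgeBound m)
    (hlarge : 389 * (n - 2) < 98 * edgesWithin A 0 (n - 1)) : IsCritical n (fillCycle n A) where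
  toIsOuterAdj := hA.fillCycle hn
  cycle i _ := by simp [fillCycle]
  irremovable a b _ hb hroot :=
    isIrremovable_of_edgeBound (hA.fillCycle hn) hmin
      (hlarge.trans_le (Nat.mul_le_mul_left _ (edgesWithin_le_edgesWithin hA.le_fillCycle ..)))
      hb hroot

theorem IsCritical.mirror (hA : IsCritical n A) : IsCritical n (mirror n A) where
  toIsOuterAdj := hA.toIsOuterAdj.mirror
  cycle i hi := by
    rw [OuterPlanar.mirror, hA.symm, show n - 1 - i = n - 1 - (i + 1) + 1 by omega]
    exact hA.cycle _ (by omega)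
  irremovable a b hab hb hroot h := by
    obtain ⟨c, hc, rfl⟩ : ∃ c < n, b = n - 1 - c := ⟨n - 1 - b, by omega, by omega⟩
    obtain ⟨d, hd, rfl⟩ : ∃ d < n, a = n - 1 - d := ⟨n - 1 - a, by omega, by omega⟩
    have hirr := hA.irremovable c d (by omega) hd (by omega) (by omega)
    rw [edgesWithin_mirror hA.symm hA.diag (by omega) hd, crossCount_mirror (by omega) hd]
    omega

theorem IsCritical.isAdmissible_chordRecord (hA : IsCritical n A) (hS : IsTriangleClosed S)
    (hab : a + 1 < b) (hb : b < n) (hcross : crossCount n A a b ≤ 5)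
    (hcovered : ∀ B c d, IsCritical n B → c < d → d < n → d - c < b - a → crossCount n B c d ≤ 5 →
      IsCovered S n B c d) : (chordRecord n A a b).IsAdmissible S := by
  obtain ⟨x, hax, hxb, hleft, hright⟩ := hA.exists_apex hab hb hcross
  obtain ⟨r, hr, hrcovers⟩ := exists_mem_allSplits_covers_leftRecord hA.toIsOuterAdj hax hxb hb
    (hcovered A a x hA hax (by omega) (by omega) hleft)
    (hA.irremovable a x hax (by omega) (by omega))
    fun h => h ▸ hA.cycle a (by omega)
  obtain ⟨s, hs, hscovers⟩ := exists_mem_allSplits_covers_rightRecord hA.toIsOuterAdj hax hxb hb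
    (hcovered _ _ _ hA.mirror (by omega) (by omega) (by omega)
      ((crossCount_mirror hxb hb).trans_le hright))
    (hA.mirror.irremovable _ _ (by omega) (by omega) (by omega))
    fun h => h ▸ hA.cycle x (by omega)
  exact OuterPlanar.isAdmissible_chordRecord hS hA.toIsOuterAdj hax hxb hb hcross hr hs hrcovers
    hscovers

theorem IsCritical.isCovered_of_isAdmissible (hA : IsCritical n A) (hab : a + 1 < b) (hb : b < n)
    (hroot : b - a + 1 < n) (h : (chordRecord n A a b).IsAdmissible S) : IsCovered S n A a b := by
  have hirr := hA.irremovable a b (by omega) hb hroot hab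
  have hedge := hA.le_one a b
  have hweight := weight_chordRecord (n := n) (A := A) (Nat.lt_of_succ_lt hab)
  rcases h with hsparse | ⟨hzero, hsize, hinner⟩ | hcovered
  · rw [SideRecord.IsSparse, hweight] at hsparse
    simp only [chordRecord] at hsparse
    omega
  · rw [hweight] at hzero
    simp only [chordRecord] at hsize hinner
    omega
  · exact hcovered.2

theorem IsCritical.isCovered (hS : IsTriangleClosed S) (hnil : ⟨0, 0, []⟩ ∈ S)
    (hA : IsCritical n A) (hab : a < b) (hb : b < n) (hroot : b - a + 1 < n)
    (hcross : crossCount n A a b ≤ 5) : IsCovered S n A a b := by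
  induction h : b - a using Nat.strong_induction_on generalizing A a b with
  | _ t ih =>
    obtain rfl | hab' : b = a + 1 ∨ a + 1 < b := by omega
    · have hrecord : chordRecord n A a (a + 1) = ⟨0, 0, []⟩ := by
        simp [chordRecord, edgesWithin_self_succ, chordPorts]
      refine ⟨_, hnil, ?_⟩
      rw [hrecord]
      exact ⟨rfl, le_rfl, .nil⟩
    · refine hA.isCovered_of_isAdmissible hab' hb hroot
        (hA.isAdmissible_chordRecord hS hab' hb hcross fun B c d hB hcd hd hlt hcross => ?_)
      exact ih (d - c) (by omega) hB hcd hd (by omega) hcross rfl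

theorem IsOuterAdj.edgesWithin_le_nineteen (hA : IsOuterAdj 7 5 A) : edgesWithin A 0 6 ≤ 19 := by
  have hcross (i j : ℕ) (hij : i < j := by omega) (hj : j < 7 := by omega) : A i j = 0 ∨
      blockSum A 0 i (i + 1) j + blockSum A (i + 1) j (j + 1) 7 ≤ 5 := by
    rw [or_iff_not_imp_left, blockSum_comm hA.symm]
    exact hA.cross i j hij hj
  -- The chords with two vertices on one side: each is crossed by six edges of the complete graph,
  -- so that it is missing or one of these is.
  have h₀₃ := hcross 0 3
  have h₁₄ := hcross 1 4
  have h₂₅ := hcross 2 5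
  have h₃₆ := hcross 3 6
  have h₀₄ := hcross 0 4
  have h₁₅ := hcross 1 5
  have h₂₆ := hcross 2 6
  have hrow (i : ℕ) : A i 1 ≤ 1 ∧ A i 2 ≤ 1 ∧ A i 3 ≤ 1 ∧ A i 4 ≤ 1 ∧ A i 5 ≤ 1 ∧ A i 6 ≤ 1 :=
    ⟨hA.le_one i 1, hA.le_one i 2, hA.le_one i 3, hA.le_one i 4, hA.le_one i 5, hA.le_one i 6⟩
  have hrow₀ := hrow 0
  have hrow₁ := hrow 1
  have hrow₂ := hrow 2
  have hrow₃ := hrow 3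
  have hrow₄ := hrow 4
  have hrow₅ := hrow 5
  simp only [edgesWithin, blockSum, sum_Ico_eq_sum_range, sum_range_succ, sum_range_zero,
    Nat.reduceAdd, Nat.reduceSub]
    at h₀₃ h₁₄ h₂₅ h₃₆ h₀₄ h₁₅ h₂₆ ⊢
  omega

theorem edgeBound (hS : IsTriangleClosed S) (hnil : ⟨0, 0, []⟩ ∈ S) (hn : 3 ≤ n) :
    EdgeBound n := by
  induction n using Nat.strong_induction_on with
  | _ n ih =>
    intro A hA
    by_contra! hlarge
    have hB := isCritical_fillCycle hA (by omega) (fun m hm hmn => ih m hmn hm) hlarge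
    have hle := edgesWithin_le_edgesWithin hA.le_fillCycle 0 (n - 1)
    have hcross : crossCount n (fillCycle n A) 0 (n - 1) = 0 := crossCount_zero_of_le (by omega)
    have hweight :=
      weight_chordRecord (n := n) (A := fillCycle n A) (a := 0) (b := n - 1) (by omega)
    have hedge := hB.le_one 0 (n - 1)
    rw [hcross] at hweight
    rcases hB.isAdmissible_chordRecord hS (a := 0) (b := n - 1) (by omega) (by omega) (by omega)
      fun B c d hB hcd hd hlt h => hB.isCovered hS hnil hcd hd (by omega) h
      with hsparse | ⟨-, hsize, -⟩ | hcovered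
    · rw [SideRecord.IsSparse, hweight] at hsparse
      simp only [chordRecord] at hsparse
      omega
    · simp only [chordRecord] at hsize
      obtain rfl : n = 7 := by omega
      have : edgesWithin (fillCycle 7 A) 0 (7 - 1) ≤ 19 := hB.edgesWithin_le_nineteen
      omega
    · exact hcovered.1 hweight

end critical

/-! ### Graphs -/

section layout

variable {n k : ℕ} [NeZero n]

open Classical in
/-- The adjacency function of `G` on the positions `0, …, n - 1`, where `σ` gives the position of
each vertex. -/
noncomputable def layoutAdj (σ : Fin n ≃ Fin n) (G : SimpleGraph (Fin n)) (i j : ℕ) : ℕ :=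
  if G.Adj (σ.symm (Fin.ofNat n i)) (σ.symm (Fin.ofNat n j)) then 1 else 0

variable (σ : Fin n ≃ Fin n) (G : SimpleGraph (Fin n))

theorem layoutAdj_le_one (i j : ℕ) : layoutAdj σ G i j ≤ 1 := by
  rw [layoutAdj]
  split_ifs <;> omega

theorem layoutAdj_comm (i j : ℕ) : layoutAdj σ G i j = layoutAdj σ G j i := by
  classical exact if_congr (G.adj_comm _ _) rfl rfl

theorem layoutAdj_self (i : ℕ) : layoutAdj σ G i i = 0 := by simp [layoutAdj]

variable {σ G}

theorem layoutAdj_ne_zero {i j : ℕ} :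
    layoutAdj σ G i j ≠ 0 ↔ G.Adj (σ.symm (Fin.ofNat n i)) (σ.symm (Fin.ofNat n j)) := by
  simp [layoutAdj]

theorem ncard_edgeSet_eq_edgesWithin :
    G.edgeSet.ncard = edgesWithin (layoutAdj σ G) 0 (n - 1) := by
  classical
  refine Nat.eq_of_mul_eq_mul_left two_pos ?_
  rw [two_mul_edgesWithin (layoutAdj_comm σ G) (layoutAdj_self σ G) (Nat.zero_le _),
    Nat.sub_add_cancel NeZero.one_le, ← G.coe_edgeFinset, Set.ncard_coe_finset,
    ← G.sum_degrees_eq_twice_card_edges, blockSum, ← range_eq_Ico, sum_range,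
    ← Equiv.sum_comp σ.symm]
  refine sum_congr rfl fun i _ => ?_
  rw [sum_range, ← G.card_neighborFinset_eq_degree, G.neighborFinset_eq_filter, card_filter,
    ← Equiv.sum_comp σ.symm]
  simp [layoutAdj]

theorem val_ofNat_of_lt {i : ℕ} (h : i < n) : (Fin.ofNat n i).val = i := Nat.mod_eq_of_lt h

theorem symm_ofNat_inj {i j : ℕ} (hi : i < n) (hj : j < n) :
    σ.symm (Fin.ofNat n i) = σ.symm (Fin.ofNat n j) ↔ i = j := by
  rw [σ.symm.injective.eq_iff, Fin.ext_iff, val_ofNat_of_lt hi, val_ofNat_of_lt hj]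

theorem cycBtw_ofNat_iff {i j p : ℕ} (hij : i < j) (hj : j < n) (hp : p < n) (hpi : p ≠ i) :
    cycBtw n (Fin.ofNat n i) (Fin.ofNat n j) (Fin.ofNat n p) ↔ i < p ∧ p < j := by
  have hmod (q : ℕ) (hiq : i ≤ q) (hq : q < n) : (q + n - i) % n = q - i := by
    rw [show q + n - i = q - i + n by omega, Nat.add_mod_right, Nat.mod_eq_of_lt (by omega)]
  rw [cycBtw, val_ofNat_of_lt (hij.trans hj), val_ofNat_of_lt hj, val_ofNat_of_lt hp,
    hmod j hij.le hj]
  rcases lt_or_gt_of_ne hpi with h | h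
  · rw [Nat.mod_eq_of_lt (show p + n - i < n by omega)]
    omega
  · rw [hmod p h.le hp]
    omega

theorem crossing_of_interleave {i j p q : ℕ} (hip : i < p) (hpj : p < j) (hj : j < n) (hq : q < n)
    (h : q < i ∨ j < q) :
    crossing n σ s(σ.symm (Fin.ofNat n i), σ.symm (Fin.ofNat n j))
      s(σ.symm (Fin.ofNat n p), σ.symm (Fin.ofNat n q)) := by
  refine ⟨_, _, _, _, rfl, rfl, ?_, ?_, ?_, ?_, ?_, ?_, ?_⟩
  iterate 6 exact (symm_ofNat_inj (by omega) (by omega)).not.2 (by omega)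
  simp only [Equiv.apply_symm_apply]
  rw [cycBtw_ofNat_iff (hip.trans hpj) hj (by omega) (by omega),
    cycBtw_ofNat_iff (hip.trans hpj) hj hq (by omega)]
  omega

theorem crossCount_layoutAdj_le {i j : ℕ} (hj : j < n) :
    crossCount n (layoutAdj σ G) i j ≤ ({f ∈ G.edgeSet | crossing n σ
      s(σ.symm (Fin.ofNat n i), σ.symm (Fin.ofNat n j)) f}).ncard := by
  rw [crossCount_eq_card (layoutAdj_le_one σ G), ← Set.ncard_coe_finset]
  refine Set.ncard_le_ncard_of_injOn
    (fun x => s(σ.symm (Fin.ofNat n x.1), σ.symm (Fin.ofNat n x.2))) ?_ ?_ (Set.toFinite _)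
  · rintro ⟨p, q⟩ hx
    simp only [coe_filter, mem_product, mem_union, mem_Ico, Set.mem_ofPred_eq] at hx
    exact ⟨layoutAdj_ne_zero.1 hx.2,
      crossing_of_interleave (by omega) (by omega) hj (by omega) (by omega)⟩
  · rintro ⟨p, q⟩ hx ⟨u, v⟩ hy heq
    simp only [coe_filter, mem_product, mem_union, mem_Ico, Set.mem_ofPred_eq] at hx hy
    simp only [Sym2.eq_iff] at heq
    rw [symm_ofNat_inj (by omega) (by omega), symm_ofNat_inj (by omega) (by omega),
      symm_ofNat_inj (by omega) (by omega), symm_ofNat_inj (by omega) (by omega)] at heq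
    rw [Prod.mk.injEq]
    omega

theorem isOuterAdj_layoutAdj (h : OuterKPlanarOrd n k σ G) : IsOuterAdj n k (layoutAdj σ G) where
  le_one := layoutAdj_le_one σ G
  symm := layoutAdj_comm σ G
  diag := layoutAdj_self σ G
  cross _ _ _ hj hadj := (crossCount_layoutAdj_le hj).trans (h s(_, _) (layoutAdj_ne_zero.1 hadj))

end layout

/-- Records dominating those of the chords of a minimal counterexample, found by iterating the
joining of sides from the record `⟨0, 0, []⟩` of a side of the polygon. -/
def sideTable : List SideRecord := [
  ⟨0, 0, []⟩, ⟨1, 2, [⟨2, 0⟩]⟩, ⟨1, 2, [⟨3, 0⟩]⟩, ⟨1, 2, [⟨4, 0⟩]⟩, ⟨1, 2, [⟨5, 0⟩]⟩,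
  ⟨2, 4, [⟨4, 0⟩]⟩, ⟨2, 4, [⟨5, 0⟩]⟩, ⟨2, 4, [⟨1, 0⟩, ⟨3, 0⟩]⟩, ⟨2, 4, [⟨1, 0⟩, ⟨4, 0⟩]⟩,
  ⟨2, 4, [⟨2, 0⟩, ⟨2, 0⟩]⟩, ⟨2, 4, [⟨2, 0⟩, ⟨3, 0⟩]⟩, ⟨2, 4, [⟨3, 0⟩, ⟨1, 0⟩]⟩,
  ⟨2, 4, [⟨3, 0⟩, ⟨2, 0⟩]⟩, ⟨2, 4, [⟨4, 0⟩, ⟨1, 0⟩]⟩, ⟨2, 5, [⟨3, 1⟩]⟩, ⟨2, 5, [⟨4, 1⟩]⟩,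
  ⟨2, 5, [⟨1, 1⟩, ⟨2, 1⟩]⟩, ⟨2, 5, [⟨1, 1⟩, ⟨3, 1⟩]⟩, ⟨2, 5, [⟨1, 1⟩, ⟨4, 1⟩]⟩,
  ⟨2, 5, [⟨2, 1⟩, ⟨1, 1⟩]⟩, ⟨2, 5, [⟨2, 1⟩, ⟨2, 1⟩]⟩, ⟨2, 5, [⟨2, 1⟩, ⟨3, 1⟩]⟩,
  ⟨2, 5, [⟨3, 1⟩, ⟨1, 1⟩]⟩, ⟨2, 5, [⟨3, 1⟩, ⟨2, 1⟩]⟩, ⟨2, 5, [⟨4, 1⟩, ⟨1, 1⟩]⟩,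
  ⟨3, 7, [⟨2, 0⟩, ⟨3, 0⟩]⟩, ⟨3, 7, [⟨3, 0⟩, ⟨2, 0⟩]⟩, ⟨3, 8, [⟨1, 0⟩, ⟨4, 1⟩]⟩,
  ⟨3, 8, [⟨4, 1⟩, ⟨1, 0⟩]⟩, ⟨3, 7, [⟨1, 0⟩, ⟨1, 1⟩, ⟨3, 0⟩]⟩, ⟨3, 7, [⟨1, 0⟩, ⟨2, 1⟩, ⟨2, 0⟩]⟩,
  ⟨3, 7, [⟨1, 0⟩, ⟨3, 1⟩, ⟨1, 0⟩]⟩, ⟨3, 7, [⟨2, 0⟩, ⟨1, 1⟩, ⟨2, 0⟩]⟩,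
  ⟨3, 7, [⟨2, 0⟩, ⟨2, 1⟩, ⟨1, 0⟩]⟩, ⟨3, 7, [⟨3, 0⟩, ⟨1, 1⟩, ⟨1, 0⟩]⟩, ⟨3, 9, [⟨3, 2⟩]⟩,
  ⟨3, 8, [⟨4, 2⟩]⟩, ⟨3, 8, [⟨1, 1⟩, ⟨3, 1⟩]⟩, ⟨3, 8, [⟨2, 1⟩, ⟨2, 1⟩]⟩, ⟨3, 8, [⟨2, 1⟩, ⟨3, 1⟩]⟩,
  ⟨3, 8, [⟨3, 1⟩, ⟨1, 1⟩]⟩, ⟨3, 8, [⟨3, 1⟩, ⟨2, 1⟩]⟩, ⟨3, 9, [⟨1, 2⟩, ⟨2, 2⟩]⟩,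
  ⟨3, 9, [⟨1, 2⟩, ⟨3, 2⟩]⟩, ⟨3, 9, [⟨2, 2⟩, ⟨1, 2⟩]⟩, ⟨3, 9, [⟨2, 2⟩, ⟨2, 2⟩]⟩,
  ⟨3, 9, [⟨2, 2⟩, ⟨3, 2⟩]⟩, ⟨3, 9, [⟨3, 2⟩, ⟨1, 2⟩]⟩, ⟨3, 9, [⟨3, 2⟩, ⟨2, 2⟩]⟩,
  ⟨3, 8, [⟨1, 1⟩, ⟨1, 2⟩, ⟨2, 1⟩]⟩, ⟨3, 8, [⟨1, 1⟩, ⟨1, 2⟩, ⟨3, 1⟩]⟩,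
  ⟨3, 8, [⟨1, 1⟩, ⟨2, 2⟩, ⟨1, 1⟩]⟩, ⟨3, 8, [⟨1, 1⟩, ⟨2, 2⟩, ⟨2, 1⟩]⟩,
  ⟨3, 8, [⟨1, 1⟩, ⟨3, 2⟩, ⟨1, 1⟩]⟩, ⟨3, 8, [⟨2, 1⟩, ⟨1, 2⟩, ⟨1, 1⟩]⟩,
  ⟨3, 8, [⟨2, 1⟩, ⟨1, 2⟩, ⟨2, 1⟩]⟩, ⟨3, 8, [⟨2, 1⟩, ⟨2, 2⟩, ⟨1, 1⟩]⟩,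
  ⟨3, 8, [⟨3, 1⟩, ⟨1, 2⟩, ⟨1, 1⟩]⟩, ⟨3, 9, [⟨1, 2⟩, ⟨1, 3⟩, ⟨1, 2⟩]⟩,
  ⟨3, 9, [⟨1, 2⟩, ⟨1, 3⟩, ⟨2, 2⟩]⟩, ⟨3, 9, [⟨1, 2⟩, ⟨2, 3⟩, ⟨1, 2⟩]⟩,
  ⟨3, 9, [⟨2, 2⟩, ⟨1, 3⟩, ⟨1, 2⟩]⟩, ⟨3, 9, [⟨2, 2⟩, ⟨1, 3⟩, ⟨2, 2⟩]⟩, ⟨4, 11, [⟨1, 0⟩, ⟨4, 0⟩]⟩,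
  ⟨4, 11, [⟨4, 0⟩, ⟨1, 0⟩]⟩, ⟨4, 11, [⟨2, 0⟩, ⟨3, 1⟩]⟩, ⟨4, 11, [⟨3, 1⟩, ⟨2, 0⟩]⟩,
  ⟨4, 12, [⟨2, 1⟩, ⟨2, 1⟩]⟩, ⟨4, 11, [⟨1, 0⟩, ⟨2, 2⟩, ⟨2, 0⟩]⟩, ⟨4, 11, [⟨1, 0⟩, ⟨3, 2⟩, ⟨1, 0⟩]⟩,
  ⟨4, 11, [⟨2, 0⟩, ⟨2, 2⟩, ⟨1, 0⟩]⟩, ⟨4, 12, [⟨1, 1⟩, ⟨3, 2⟩]⟩, ⟨4, 12, [⟨2, 1⟩, ⟨3, 2⟩]⟩,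
  ⟨4, 12, [⟨3, 2⟩, ⟨1, 1⟩]⟩, ⟨4, 12, [⟨3, 2⟩, ⟨2, 1⟩]⟩, ⟨4, 11, [⟨1, 0⟩, ⟨1, 2⟩, ⟨3, 1⟩]⟩,
  ⟨4, 11, [⟨2, 0⟩, ⟨1, 3⟩, ⟨2, 0⟩]⟩, ⟨4, 11, [⟨3, 1⟩, ⟨1, 2⟩, ⟨1, 0⟩]⟩,
  ⟨4, 12, [⟨2, 1⟩, ⟨1, 2⟩, ⟨2, 1⟩]⟩, ⟨4, 11, [⟨1, 0⟩, ⟨1, 2⟩, ⟨2, 2⟩, ⟨1, 0⟩]⟩,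
  ⟨4, 11, [⟨1, 0⟩, ⟨2, 2⟩, ⟨1, 2⟩, ⟨1, 0⟩]⟩, ⟨4, 13, [⟨1, 2⟩, ⟨2, 3⟩]⟩, ⟨4, 13, [⟨1, 3⟩, ⟨2, 2⟩]⟩,
  ⟨4, 13, [⟨2, 2⟩, ⟨1, 3⟩]⟩, ⟨4, 13, [⟨2, 2⟩, ⟨2, 3⟩]⟩, ⟨4, 13, [⟨2, 3⟩, ⟨1, 2⟩]⟩,
  ⟨4, 13, [⟨2, 3⟩, ⟨2, 2⟩]⟩, ⟨4, 12, [⟨1, 1⟩, ⟨1, 3⟩, ⟨2, 1⟩]⟩, ⟨4, 12, [⟨1, 1⟩, ⟨2, 3⟩, ⟨1, 1⟩]⟩,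
  ⟨4, 12, [⟨1, 1⟩, ⟨2, 3⟩, ⟨2, 1⟩]⟩, ⟨4, 12, [⟨2, 1⟩, ⟨1, 3⟩, ⟨1, 1⟩]⟩,
  ⟨4, 12, [⟨2, 1⟩, ⟨2, 3⟩, ⟨1, 1⟩]⟩, ⟨4, 11, [⟨1, 0⟩, ⟨1, 2⟩, ⟨1, 2⟩, ⟨2, 1⟩]⟩,
  ⟨4, 11, [⟨2, 1⟩, ⟨1, 2⟩, ⟨1, 2⟩, ⟨1, 0⟩]⟩, ⟨4, 14, [⟨1, 3⟩, ⟨1, 3⟩]⟩,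
  ⟨4, 13, [⟨1, 2⟩, ⟨1, 3⟩, ⟨1, 2⟩]⟩, ⟨4, 12, [⟨1, 1⟩, ⟨1, 3⟩, ⟨3, 3⟩]⟩,
  ⟨4, 12, [⟨3, 3⟩, ⟨1, 3⟩, ⟨1, 1⟩]⟩, ⟨4, 11, [⟨1, 2⟩, ⟨1, 3⟩, ⟨1, 2⟩, ⟨2, 0⟩]⟩,
  ⟨4, 11, [⟨2, 0⟩, ⟨1, 2⟩, ⟨1, 3⟩, ⟨1, 2⟩]⟩, ⟨4, 12, [⟨1, 1⟩, ⟨1, 3⟩, ⟨1, 3⟩, ⟨1, 1⟩]⟩,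
  ⟨4, 12, [⟨1, 1⟩, ⟨1, 4⟩, ⟨1, 2⟩, ⟨2, 1⟩]⟩, ⟨4, 12, [⟨2, 1⟩, ⟨1, 2⟩, ⟨1, 4⟩, ⟨1, 1⟩]⟩,
  ⟨4, 13, [⟨1, 2⟩, ⟨1, 4⟩, ⟨2, 3⟩]⟩, ⟨4, 13, [⟨2, 3⟩, ⟨1, 4⟩, ⟨1, 2⟩]⟩,
  ⟨4, 12, [⟨1, 1⟩, ⟨1, 3⟩, ⟨1, 4⟩, ⟨2, 3⟩]⟩, ⟨4, 12, [⟨1, 1⟩, ⟨1, 3⟩, ⟨2, 4⟩, ⟨1, 3⟩]⟩,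
  ⟨4, 12, [⟨1, 1⟩, ⟨2, 3⟩, ⟨1, 4⟩, ⟨1, 3⟩]⟩, ⟨4, 12, [⟨1, 3⟩, ⟨1, 4⟩, ⟨2, 3⟩, ⟨1, 1⟩]⟩,
  ⟨4, 12, [⟨1, 3⟩, ⟨2, 4⟩, ⟨1, 3⟩, ⟨1, 1⟩]⟩, ⟨4, 12, [⟨2, 3⟩, ⟨1, 4⟩, ⟨1, 3⟩, ⟨1, 1⟩]⟩,
  ⟨5, 15, [⟨2, 1⟩, ⟨3, 1⟩]⟩, ⟨5, 15, [⟨3, 1⟩, ⟨2, 1⟩]⟩, ⟨5, 15, [⟨2, 0⟩, ⟨1, 2⟩, ⟨2, 0⟩]⟩,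
  ⟨5, 15, [⟨1, 0⟩, ⟨2, 3⟩, ⟨2, 0⟩]⟩, ⟨5, 15, [⟨2, 0⟩, ⟨2, 3⟩, ⟨1, 0⟩]⟩, ⟨5, 16, [⟨2, 1⟩, ⟨2, 3⟩]⟩,
  ⟨5, 16, [⟨2, 3⟩, ⟨2, 1⟩]⟩, ⟨5, 15, [⟨1, 0⟩, ⟨1, 2⟩, ⟨1, 3⟩, ⟨2, 0⟩]⟩,
  ⟨5, 15, [⟨1, 0⟩, ⟨1, 2⟩, ⟨2, 3⟩, ⟨1, 0⟩]⟩, ⟨5, 15, [⟨1, 0⟩, ⟨1, 3⟩, ⟨1, 2⟩, ⟨2, 0⟩]⟩,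
  ⟨5, 15, [⟨1, 0⟩, ⟨2, 3⟩, ⟨1, 2⟩, ⟨1, 0⟩]⟩, ⟨5, 15, [⟨2, 0⟩, ⟨1, 2⟩, ⟨1, 3⟩, ⟨1, 0⟩]⟩,
  ⟨5, 15, [⟨2, 0⟩, ⟨1, 3⟩, ⟨1, 2⟩, ⟨1, 0⟩]⟩, ⟨5, 17, [⟨1, 2⟩, ⟨2, 4⟩]⟩, ⟨5, 17, [⟨2, 4⟩, ⟨1, 2⟩]⟩,
  ⟨5, 16, [⟨1, 2⟩, ⟨3, 4⟩]⟩, ⟨5, 16, [⟨3, 4⟩, ⟨1, 2⟩]⟩, ⟨5, 16, [⟨1, 1⟩, ⟨1, 3⟩, ⟨2, 2⟩]⟩,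
  ⟨5, 16, [⟨1, 1⟩, ⟨2, 4⟩, ⟨1, 1⟩]⟩, ⟨5, 16, [⟨1, 3⟩, ⟨1, 3⟩, ⟨2, 0⟩]⟩,
  ⟨5, 16, [⟨2, 0⟩, ⟨1, 3⟩, ⟨1, 3⟩]⟩, ⟨5, 16, [⟨2, 2⟩, ⟨1, 3⟩, ⟨1, 1⟩]⟩,
  ⟨5, 15, [⟨1, 1⟩, ⟨1, 2⟩, ⟨3, 3⟩]⟩, ⟨5, 15, [⟨1, 3⟩, ⟨1, 2⟩, ⟨3, 1⟩]⟩,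
  ⟨5, 15, [⟨3, 1⟩, ⟨1, 2⟩, ⟨1, 3⟩]⟩, ⟨5, 15, [⟨3, 3⟩, ⟨1, 2⟩, ⟨1, 1⟩]⟩,
  ⟨5, 15, [⟨1, 1⟩, ⟨3, 5⟩, ⟨1, 1⟩]⟩, ⟨5, 17, [⟨1, 2⟩, ⟨1, 4⟩, ⟨1, 2⟩]⟩,
  ⟨5, 16, [⟨1, 4⟩, ⟨1, 4⟩, ⟨3, 0⟩]⟩, ⟨5, 16, [⟨2, 1⟩, ⟨1, 3⟩, ⟨2, 4⟩]⟩,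
  ⟨5, 16, [⟨2, 4⟩, ⟨1, 3⟩, ⟨2, 1⟩]⟩, ⟨5, 16, [⟨3, 0⟩, ⟨1, 4⟩, ⟨1, 4⟩]⟩,
  ⟨5, 15, [⟨1, 1⟩, ⟨1, 2⟩, ⟨1, 3⟩, ⟨1, 2⟩, ⟨1, 1⟩]⟩, ⟨5, 16, [⟨1, 4⟩, ⟨2, 5⟩, ⟨2, 1⟩]⟩,
  ⟨5, 16, [⟨2, 1⟩, ⟨2, 5⟩, ⟨1, 4⟩]⟩, ⟨5, 16, [⟨1, 1⟩, ⟨1, 3⟩, ⟨1, 4⟩, ⟨1, 2⟩]⟩,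
  ⟨5, 16, [⟨1, 2⟩, ⟨1, 4⟩, ⟨1, 3⟩, ⟨1, 1⟩]⟩, ⟨5, 16, [⟨1, 1⟩, ⟨1, 3⟩, ⟨1, 5⟩, ⟨2, 4⟩]⟩,
  ⟨5, 16, [⟨1, 1⟩, ⟨1, 3⟩, ⟨2, 5⟩, ⟨1, 4⟩]⟩, ⟨5, 16, [⟨1, 4⟩, ⟨1, 5⟩, ⟨1, 3⟩, ⟨2, 1⟩]⟩,
  ⟨5, 16, [⟨1, 4⟩, ⟨2, 5⟩, ⟨1, 3⟩, ⟨1, 1⟩]⟩, ⟨5, 16, [⟨2, 1⟩, ⟨1, 3⟩, ⟨1, 5⟩, ⟨1, 4⟩]⟩,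
  ⟨5, 16, [⟨2, 4⟩, ⟨1, 5⟩, ⟨1, 3⟩, ⟨1, 1⟩]⟩, ⟨6, 19, [⟨2, 1⟩, ⟨3, 1⟩]⟩, ⟨6, 19, [⟨3, 1⟩, ⟨2, 1⟩]⟩,
  ⟨6, 19, [⟨2, 1⟩, ⟨1, 2⟩, ⟨2, 1⟩]⟩, ⟨6, 19, [⟨1, 4⟩, ⟨4, 1⟩]⟩, ⟨6, 19, [⟨4, 1⟩, ⟨1, 4⟩]⟩,
  ⟨6, 19, [⟨1, 1⟩, ⟨1, 3⟩, ⟨3, 1⟩]⟩, ⟨6, 19, [⟨1, 1⟩, ⟨2, 3⟩, ⟨2, 1⟩]⟩,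
  ⟨6, 19, [⟨2, 1⟩, ⟨2, 3⟩, ⟨1, 1⟩]⟩, ⟨6, 19, [⟨3, 1⟩, ⟨1, 3⟩, ⟨1, 1⟩]⟩, ⟨6, 20, [⟨1, 5⟩, ⟨3, 1⟩]⟩,
  ⟨6, 20, [⟨2, 1⟩, ⟨2, 5⟩]⟩, ⟨6, 20, [⟨2, 5⟩, ⟨2, 1⟩]⟩, ⟨6, 20, [⟨3, 1⟩, ⟨1, 5⟩]⟩,
  ⟨6, 20, [⟨1, 1⟩, ⟨1, 5⟩, ⟨2, 1⟩]⟩, ⟨6, 20, [⟨2, 1⟩, ⟨1, 5⟩, ⟨1, 1⟩]⟩,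
  ⟨6, 19, [⟨1, 5⟩, ⟨1, 2⟩, ⟨3, 0⟩]⟩, ⟨6, 19, [⟨3, 0⟩, ⟨1, 2⟩, ⟨1, 5⟩]⟩,
  ⟨6, 19, [⟨1, 1⟩, ⟨1, 3⟩, ⟨1, 2⟩, ⟨2, 1⟩]⟩, ⟨6, 19, [⟨2, 1⟩, ⟨1, 2⟩, ⟨1, 3⟩, ⟨1, 1⟩]⟩,
  ⟨6, 19, [⟨1, 3⟩, ⟨2, 5⟩, ⟨2, 0⟩]⟩, ⟨6, 19, [⟨2, 0⟩, ⟨1, 3⟩, ⟨2, 5⟩]⟩,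
  ⟨6, 19, [⟨2, 0⟩, ⟨2, 5⟩, ⟨1, 3⟩]⟩, ⟨6, 19, [⟨2, 5⟩, ⟨1, 3⟩, ⟨2, 0⟩]⟩,
  ⟨6, 19, [⟨1, 0⟩, ⟨2, 1⟩, ⟨1, 5⟩, ⟨1, 3⟩]⟩, ⟨6, 19, [⟨1, 1⟩, ⟨2, 3⟩, ⟨1, 3⟩, ⟨1, 2⟩]⟩,
  ⟨6, 19, [⟨1, 2⟩, ⟨1, 3⟩, ⟨2, 3⟩, ⟨1, 1⟩]⟩, ⟨6, 19, [⟨1, 3⟩, ⟨1, 5⟩, ⟨2, 1⟩, ⟨1, 0⟩]⟩,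
  ⟨6, 19, [⟨1, 4⟩, ⟨1, 4⟩, ⟨1, 1⟩, ⟨2, 1⟩]⟩, ⟨6, 19, [⟨2, 1⟩, ⟨1, 1⟩, ⟨1, 4⟩, ⟨1, 4⟩]⟩,
  ⟨6, 19, [⟨1, 1⟩, ⟨1, 2⟩, ⟨1, 4⟩, ⟨2, 4⟩]⟩, ⟨6, 19, [⟨1, 1⟩, ⟨1, 2⟩, ⟨2, 5⟩, ⟨1, 3⟩]⟩,
  ⟨6, 19, [⟨1, 3⟩, ⟨1, 5⟩, ⟨1, 3⟩, ⟨2, 0⟩]⟩, ⟨6, 19, [⟨1, 3⟩, ⟨2, 5⟩, ⟨1, 2⟩, ⟨1, 1⟩]⟩,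
  ⟨6, 19, [⟨2, 0⟩, ⟨1, 3⟩, ⟨1, 5⟩, ⟨1, 3⟩]⟩, ⟨6, 19, [⟨2, 4⟩, ⟨1, 4⟩, ⟨1, 2⟩, ⟨1, 1⟩]⟩,
  ⟨6, 19, [⟨1, 1⟩, ⟨1, 3⟩, ⟨1, 4⟩, ⟨1, 3⟩, ⟨1, 1⟩]⟩, ⟨6, 20, [⟨1, 1⟩, ⟨1, 4⟩, ⟨1, 5⟩, ⟨1, 3⟩]⟩,
  ⟨6, 20, [⟨1, 3⟩, ⟨1, 5⟩, ⟨1, 4⟩, ⟨1, 1⟩]⟩, ⟨7, 23, [⟨2, 1⟩, ⟨1, 3⟩, ⟨2, 1⟩]⟩,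
  ⟨7, 23, [⟨1, 5⟩, ⟨1, 2⟩, ⟨3, 2⟩]⟩, ⟨7, 23, [⟨3, 2⟩, ⟨1, 2⟩, ⟨1, 5⟩]⟩,
  ⟨7, 23, [⟨1, 1⟩, ⟨2, 4⟩, ⟨1, 4⟩, ⟨1, 2⟩]⟩, ⟨7, 23, [⟨1, 2⟩, ⟨1, 4⟩, ⟨2, 4⟩, ⟨1, 1⟩]⟩,
  ⟨7, 23, [⟨1, 5⟩, ⟨1, 2⟩, ⟨1, 3⟩, ⟨2, 1⟩]⟩, ⟨7, 23, [⟨2, 1⟩, ⟨1, 3⟩, ⟨1, 2⟩, ⟨1, 5⟩]⟩]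

theorem isTriangleClosed_sideTable : IsTriangleClosed sideTable :=
  isTriangleClosed_of_isTriangleClosedB (by decide +kernel)

end OuterPlanar

/-- An `n`-vertex outer `5`-planar graph has at most `(389/98)(n-2)` edges. -/
theorem outer_five_planar_edge_bound_improved (n : ℕ) (hn : 3 ≤ n) (G : SimpleGraph (Fin n))
    (hG : IsOuterKPlanar n 5 G) :
    (G.edgeSet.ncard : ℝ) ≤ (389 / 98) * ((n : ℝ) - 2) := by
  have : NeZero n := ⟨by omega⟩
  obtain ⟨σ, hσ⟩ := hG
  have hbound := OuterPlanar.edgeBound OuterPlanar.isTriangleClosed_sideTable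
    (List.mem_cons_self ..) hn _ (OuterPlanar.isOuterAdj_layoutAdj hσ)
  rw [← OuterPlanar.ncard_edgeSet_eq_edgesWithin] at hbound
  have hnat : 98 * G.edgeSet.ncard + 389 * 2 ≤ 389 * n := by omega
  have hreal : 98 * (G.edgeSet.ncard : ℝ) + 389 * 2 ≤ 389 * n := by exact_mod_cast hnat
  linarith
end

section
/- Let G be a simple graph with n vertices and m edges such that m ≥ (73/16)·n. Then for every cyclic ordering of the vertices of G, the number of unordered pairs of edges of G whose endpoints interleave in that cyclic order is at least (1837568/19061833)·m³/n² (≈ (1/10.37)·m³/n²). Equivalently, the outer (convex) crossing number satisfies cr_o(G) ≥ (1837568/19061833)·m³/n². -/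
/-!
Call a chord of the convex polygon light if at most five edges cross it. If every edge is light,
then the polygon can be triangulated by light chords (`exists_apex`). Each triangle is crossed in
only a few ways, and a credit attached to every chord, depending on the number of edges crossing it
and on the number of their endpoints on one side, lets the edges and crossings be counted triangle
by triangle (`credit_triangle`): `6 m ≤ 18 n + cr`. Deleting an edge which is crossed at least six
times preserves this inequality, so it holds for every graph. Applied to the subgraph induced by a
random vertex set, where each vertex is kept with probability `9 n / (2 m)`, it gives
`cr ≥ (8 / 81) m ^ 3 / n ^ 2`.
-/

namespace OuterDrawing

open Finset

section EdgeCount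

variable {α : Type*} (G : SimpleGraph α)

open Classical in
/-- The number `e(P, Q)` of edges of `G` joining `P` to `Q`, for disjoint `P` and `Q`. -/
noncomputable def edgeCount (P Q : Finset α) : ℕ := #(G.interedges P Q)

open Classical in
/-- The vertices of `P` with a neighbour in `Q`. -/
noncomputable def boundary (P Q : Finset α) : Finset α := {x ∈ P | ∃ y ∈ Q, G.Adj x y}

variable {G} {P P' Q Q' : Finset α} {x y : α}

theorem mem_boundary : x ∈ boundary G P Q ↔ x ∈ P ∧ ∃ y ∈ Q, G.Adj x y := by
  simp only [boundary, mem_filter]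

theorem edgeCount_comm (P Q : Finset α) : edgeCount G P Q = edgeCount G Q P := by
  classical
  have := G.symm
  exact Rel.card_interedges_comm P Q

theorem edgeCount_le_of_forall_adj
    (h : ∀ x ∈ P, ∀ y ∈ Q, G.Adj x y → x ∈ P' ∧ y ∈ Q') : edgeCount G P Q ≤ edgeCount G P' Q' := by
  classical
  refine card_le_card fun e he => ?_
  obtain ⟨hx, hy, hadj⟩ := (SimpleGraph.mem_interedges_iff G).1 he
  obtain ⟨hx', hy'⟩ := h _ hx _ hy hadj
  exact (SimpleGraph.mem_interedges_iff G).2 ⟨hx', hy', hadj⟩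

theorem edgeCount_mono (hP : P ⊆ P') (hQ : Q ⊆ Q') : edgeCount G P Q ≤ edgeCount G P' Q' :=
  edgeCount_le_of_forall_adj fun _ hx _ hy _ => ⟨hP hx, hQ hy⟩

theorem edgeCount_union_left [DecidableEq α] (h : Disjoint P P') (Q : Finset α) :
    edgeCount G (P ∪ P') Q = edgeCount G P Q + edgeCount G P' Q := by
  classical
  rw [edgeCount, edgeCount, edgeCount,
    ← card_union_of_disjoint (SimpleGraph.interedges_disjoint_left G h Q)]
  congr 1
  ext
  simp only [SimpleGraph.mem_interedges_iff, mem_union]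
  tauto

theorem edgeCount_union_right [DecidableEq α] (P : Finset α) (h : Disjoint Q Q') :
    edgeCount G P (Q ∪ Q') = edgeCount G P Q + edgeCount G P Q' := by
  simp only [edgeCount_comm P, edgeCount_union_left h]

theorem boundary_mono (hP : P ⊆ P') (hQ : Q ⊆ Q') : boundary G P Q ⊆ boundary G P' Q' := by
  intro x hx
  obtain ⟨hxP, y, hy, h⟩ := mem_boundary.1 hx
  exact mem_boundary.2 ⟨hP hxP, y, hQ hy, h⟩

theorem boundary_union_left [DecidableEq α] (P P' Q : Finset α) :
    boundary G (P ∪ P') Q = boundary G P Q ∪ boundary G P' Q := by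
  ext
  simp only [mem_boundary, mem_union, or_and_right]

theorem interedges_subset_product_boundary [DecidableRel G.Adj] :
    G.interedges P Q ⊆ boundary G P Q ×ˢ boundary G Q P := by
  rintro ⟨x, y⟩ h
  obtain ⟨hx, hy, hadj⟩ := (SimpleGraph.mem_interedges_iff G).1 h
  exact mem_product.2 ⟨mem_boundary.2 ⟨hx, y, hy, hadj⟩, mem_boundary.2 ⟨hy, x, hx, hadj.symm⟩⟩

theorem edgeCount_le_card_boundary_mul :
    edgeCount G P Q ≤ #(boundary G P Q) * #(boundary G Q P) := by
  classical
  exact (card_le_card interedges_subset_product_boundary).trans (card_product _ _).le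

theorem card_boundary_le_edgeCount : #(boundary G P Q) ≤ edgeCount G P Q := by
  classical
  refine card_le_card_of_surjOn Prod.fst fun x hx => ?_
  obtain ⟨hxP, y, hy, h⟩ := mem_boundary.1 hx
  exact ⟨(x, y), (SimpleGraph.mem_interedges_iff G).2 ⟨hxP, hy, h⟩, rfl⟩

theorem boundary_subset : boundary G P Q ⊆ P := fun _ hx => (mem_boundary.1 hx).1

theorem card_boundary_singleton_left_le : #(boundary G {x} Q) ≤ 1 :=
  (card_le_card boundary_subset).trans (card_singleton x).le

theorem card_boundary_singleton_right : #(boundary G P {x}) = edgeCount G P {x} :=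
  card_boundary_le_edgeCount.antisymm (edgeCount_le_card_boundary_mul.trans
    (mul_le_of_le_one_right (Nat.zero_le _) card_boundary_singleton_left_le))

theorem min_one_edgeCount_le_card_boundary : min 1 (edgeCount G P Q) ≤ #(boundary G P Q) := by
  rcases Nat.eq_zero_or_pos (edgeCount G P Q) with h | h
  · exact (min_le_right _ _).trans (h.trans_le (Nat.zero_le _))
  · exact (min_le_left _ _).trans
      (Nat.pos_of_mul_pos_right (h.trans_le edgeCount_le_card_boundary_mul))

end EdgeCount

section DisjointParts

variable {α ι : Type*} {G : SimpleGraph α}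

/-- The unordered pair of unordered pairs underlying `t`. It identifies the pairs of edges that are
counted more than once by a sum over quadruples of parts. -/
def pairUp (t : (ι × ι) × ι × ι) : Sym2 (Sym2 ι) := s(s(t.1.1, t.1.2), s(t.2.1, t.2.2))

theorem sum_edgeCount_mul_edgeCount_le {R : ι → Finset α}
    (hR : Pairwise (Function.onFun Disjoint R)) {T : Finset ((ι × ι) × ι × ι)}
    (hinj : Set.InjOn pairUp (T : Set ((ι × ι) × ι × ι)))
    (hT : ∀ t ∈ T, t.1.1 ≠ t.1.2 ∧ t.2.1 ≠ t.2.2 ∧ s(t.1.1, t.1.2) ≠ s(t.2.1, t.2.2))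
    {C : Finset (Sym2 (Sym2 α))}
    (hC : ∀ t ∈ T, ∀ x ∈ R t.1.1, ∀ y ∈ R t.1.2, ∀ z ∈ R t.2.1, ∀ w ∈ R t.2.2,
      G.Adj x y → G.Adj z w → s(s(x, y), s(z, w)) ∈ C) :
    ∑ t ∈ T, edgeCount G (R t.1.1) (R t.1.2) * edgeCount G (R t.2.1) (R t.2.2) ≤ #C := by
  classical
  have label {x : α} {i j : ι} (hi : x ∈ R i) (hj : x ∈ R j) : i = j :=
    by_contra fun h => disjoint_left.1 (hR h) hi hj
  simp only [edgeCount, ← card_product]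
  rw [← card_sigma]
  refine card_le_card_of_injOn (fun q => pairUp q.2) ?_ ?_
  · rintro ⟨t, ⟨x, y⟩, z, w⟩ hq
    simp only [coe_sigma, Set.mem_sigma_iff, mem_coe, mem_product,
      SimpleGraph.mem_interedges_iff] at hq
    exact hC t hq.1 x hq.2.1.1 y hq.2.1.2.1 z hq.2.2.1 w hq.2.2.2.1 hq.2.1.2.2 hq.2.2.2.2
  · rintro ⟨⟨⟨i, j⟩, k, l⟩, ⟨x, y⟩, z, w⟩ hq ⟨⟨⟨i', j'⟩, k', l'⟩, ⟨x', y'⟩, z', w'⟩ hq' h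
    simp only [coe_sigma, Set.mem_sigma_iff, mem_coe, mem_product,
      SimpleGraph.mem_interedges_iff] at hq hq'
    obtain ⟨ht, ⟨hx, hy, -⟩, hz, hw, -⟩ := hq
    obtain ⟨ht', ⟨hx', hy', -⟩, hz', hw', -⟩ := hq'
    have := hT _ ht
    have := @hinj _ ht _ ht'
    simp only [pairUp, Sym2.eq_iff] at *
    grind

theorem card_le_sum_edgeCount {R : ι → Finset α} {T : Finset (ι × ι)}
    {E : Finset (Sym2 α)}
    (hE : ∀ e ∈ E, ∃ t ∈ T, ∃ x ∈ R t.1, ∃ y ∈ R t.2, G.Adj x y ∧ e = s(x, y)) :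
    #E ≤ ∑ t ∈ T, edgeCount G (R t.1) (R t.2) := by
  classical
  have hsub : E ⊆ (T.biUnion fun t => G.interedges (R t.1) (R t.2)).image fun e => s(e.1, e.2) := by
    intro e he
    obtain ⟨t, ht, x, hx, y, hy, hadj, rfl⟩ := hE e he
    exact mem_image.2 ⟨(x, y), mem_biUnion.2 ⟨t, ht, G.mem_interedges_iff.2 ⟨hx, hy, hadj⟩⟩, rfl⟩
  exact (card_le_card hsub).trans (card_image_le.trans card_biUnion_le)

end DisjointParts

section Crossings

variable {α : Type*} [Fintype α] [LinearOrder α]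

open Classical in
/-- The pairs of crossing edges when the vertices of `G` lie on a circle in increasing order. -/
noncomputable def crossings (G : SimpleGraph α) : Finset (Sym2 (Sym2 α)) :=
  {z | ∃ a b c d, a < b ∧ b < c ∧ c < d ∧ G.Adj a c ∧ G.Adj b d ∧ z = s(s(a, c), s(b, d))}

variable {G : SimpleGraph α} {z : Sym2 (Sym2 α)}

theorem mem_crossings : z ∈ crossings G ↔ ∃ a b c d, a < b ∧ b < c ∧ c < d ∧
    G.Adj a c ∧ G.Adj b d ∧ z = s(s(a, c), s(b, d)) := by
  simp only [crossings, mem_filter, mem_univ, true_and]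

variable [LocallyFiniteOrder α]

/-- The vertices not between `u` and `v`, i.e. those on the other side of the chord `uv`. -/
def outside (u v : α) : Finset α := (Icc u v)ᶜ

open Classical in
/-- The edges in the part of the drawing cut off by the chord `uv`, except `uv` itself. -/
noncomputable def innerEdges (G : SimpleGraph α) (u v : α) : Finset (Sym2 α) :=
  {e | e ∈ G.edgeSet ∧ e ≠ s(u, v) ∧ ∀ x ∈ e, x ∈ Icc u v}

open Classical in
/-- The crossings that involve an edge of `innerEdges G u v`. The other edge may leave the part of
the drawing cut off by the chord `uv`. -/
noncomputable def innerCrossings (G : SimpleGraph α) (u v : α) : Finset (Sym2 (Sym2 α)) :=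
  {z ∈ crossings G | ∃ e ∈ z, e ∈ innerEdges G u v}

variable {u p v x y w : α} {e f : Sym2 α}

@[grind =]
theorem mem_outside : x ∈ outside u v ↔ x < u ∨ v < x := by
  grind [outside, mem_compl]

theorem mk_mem_innerEdges : s(x, y) ∈ innerEdges G u v ↔
    G.Adj x y ∧ s(x, y) ≠ s(u, v) ∧ x ∈ Icc u v ∧ y ∈ Icc u v := by
  simp only [innerEdges, mem_filter, mem_univ, true_and, SimpleGraph.mem_edgeSet, Sym2.ball]

theorem mk_mem_innerCrossings : s(e, f) ∈ innerCrossings G u v ↔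
    s(e, f) ∈ crossings G ∧ (e ∈ innerEdges G u v ∨ f ∈ innerEdges G u v) := by
  simp only [innerCrossings, mem_filter, Sym2.mem_iff, exists_eq_or_imp, exists_eq_left]

theorem mk_mem_crossings {z : α} (hxy : G.Adj x y) (hzw : G.Adj z w) (hz : z ∈ Ioo x y)
    (hw : w ∈ outside x y) : s(s(x, y), s(z, w)) ∈ crossings G := by
  obtain ⟨hxz, hzy⟩ := mem_Ioo.1 hz
  rcases mem_outside.1 hw with hwx | hyw
  · rw [Sym2.eq_swap, Sym2.eq_swap (a := z)]
    exact mem_crossings.2 ⟨w, x, z, y, hwx, hxz, hzy, hzw.symm, hxy, rfl⟩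
  · exact mem_crossings.2 ⟨x, z, y, w, hxz, hzy, hyw, hxy, hzw, rfl⟩

/-- The six parts into which the vertices `u < p < v` of a triangle split the vertex set:
`outer, u, (u, p), p, (p, v), v`. -/
inductive Region | outer | left | first | apex | second | right
  deriving DecidableEq

/-- The vertices in each part of the vertex set determined by the triangle `u < p < v`. -/
def region (u p v : α) : Region → Finset α
  | .outer => outside u v
  | .left => {u}
  | .first => Ioo u p
  | .apex => {p}
  | .second => Ioo p v
  | .right => {v}

theorem pairwise_disjoint_region (hp : p ∈ Ioo u v) :
    Pairwise (Function.onFun Disjoint (region u p v)) := by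
  intro i j hij
  refine disjoint_left.2 fun x hx hy => ?_
  cases i <;> cases j <;> grind [region]

/-- The number of edges between two parts of the vertex set determined by the triangle
`u < p < v`. -/
noncomputable def regionEdgeCount (G : SimpleGraph α) (u p v : α) (i j : Region) : ℕ :=
  edgeCount G (region u p v i) (region u p v j)

open Region in
/-- The pairs of types of edges whose crossings are counted at the triangle `u < p < v`, the type of
an edge being the pair of regions that it joins. They cross for every choice of endpoints in these
regions, and neither edge lies in a part cut off by `up` or `pv`. -/
def crossingTypes : Finset ((Region × Region) × Region × Region) :=
  {((left, apex), first, right), ((left, apex), first, outer), ((left, apex), first, second),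
   ((apex, right), second, left), ((apex, right), second, outer), ((apex, right), second, first),
   ((first, right), apex, outer), ((first, right), second, outer), ((first, right), second, left),
   ((left, second), apex, outer), ((left, second), first, outer), ((first, second), apex, outer)}

theorem disjoint_innerCrossings :
    Disjoint (innerCrossings G u p) (innerCrossings G p v) := by
  refine disjoint_left.2 fun z hz hz' => ?_
  obtain ⟨a, b, c, d, hab, hbc, hcd, hac, hbd, rfl⟩ := mem_crossings.1 (mem_filter.1 hz).1
  grind [mk_mem_innerCrossings, mk_mem_innerEdges]

theorem innerEdges_mono {u' v' : α} (hu : u' ≤ u) (hv : v ≤ v') :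
    innerEdges G u v ⊆ innerEdges G u' v' := by
  intro e
  induction e with
  | _ x y =>
    rw [mk_mem_innerEdges, mk_mem_innerEdges, Ne, Ne, Sym2.eq_iff, Sym2.eq_iff]
    grind [SimpleGraph.Adj.ne]

theorem innerCrossings_mono {u' v' : α} (hu : u' ≤ u) (hv : v ≤ v') :
    innerCrossings G u v ⊆ innerCrossings G u' v' :=
  monotone_filter_right _ fun _ _ ⟨e, he, hin⟩ => ⟨e, he, innerEdges_mono hu hv hin⟩

theorem notMem_innerEdges_of_crossingTypes {t : (Region × Region) × Region × Region}
    (ht : t ∈ crossingTypes) (hp : p ∈ Ioo u v)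
    (hx : x ∈ region u p v t.1.1) (hy : y ∈ region u p v t.1.2) {z : α}
    (hz : z ∈ region u p v t.2.1) (hw : w ∈ region u p v t.2.2) :
    s(x, y) ∉ innerEdges G u p ∧ s(x, y) ∉ innerEdges G p v ∧
      s(z, w) ∉ innerEdges G u p ∧ s(z, w) ∉ innerEdges G p v := by
  simp only [mk_mem_innerEdges, Ne, Sym2.eq_iff]
  fin_cases ht <;> grind [region]

theorem mem_innerCrossings_of_crossingTypes {t : (Region × Region) × Region × Region}
    (ht : t ∈ crossingTypes) (hp : p ∈ Ioo u v)
    (hx : x ∈ region u p v t.1.1) (hy : y ∈ region u p v t.1.2) {z : α}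
    (hz : z ∈ region u p v t.2.1) (hw : w ∈ region u p v t.2.2)
    (hxy : G.Adj x y) (hzw : G.Adj z w) : s(s(x, y), s(z, w)) ∈ innerCrossings G u v := by
  have hzx : z ∈ Ioo x y ∧ w ∈ outside x y := by fin_cases ht <;> grind [region]
  have hinner : s(x, y) ∈ innerEdges G u v := by
    rw [mk_mem_innerEdges, Ne, Sym2.eq_iff]
    fin_cases ht <;> grind [region]
  exact mk_mem_innerCrossings.2 ⟨mk_mem_crossings hxy hzw hzx.1 hzx.2, .inl hinner⟩

variable (G) in
theorem card_innerCrossings_add_sum_crossingTypes_le (hp : p ∈ Ioo u v) :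
    #(innerCrossings G u p) + #(innerCrossings G p v) + ∑ t ∈ crossingTypes,
      regionEdgeCount G u p v t.1.1 t.1.2 * regionEdgeCount G u p v t.2.1 t.2.2 ≤
        #(innerCrossings G u v) := by
  classical
  obtain ⟨hup, hpv⟩ := mem_Ioo.1 hp
  have hsub : innerCrossings G u p ∪ innerCrossings G p v ⊆ innerCrossings G u v :=
    union_subset (innerCrossings_mono le_rfl hpv.le) (innerCrossings_mono hup.le le_rfl)
  rw [← card_union_of_disjoint disjoint_innerCrossings, ← card_sdiff_add_card_eq_card hsub,
    add_comm]
  gcongr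
  refine sum_edgeCount_mul_edgeCount_le (pairwise_disjoint_region hp) (by decide) (by decide)
    fun t ht x hx y hy z hz w hw hxy hzw => ?_
  have := mem_innerCrossings_of_crossingTypes ht hp hx hy hz hw hxy hzw
  have := notMem_innerEdges_of_crossingTypes (G := G) ht hp hx hy hz hw
  grind [mk_mem_innerCrossings]

end Crossings

section Apex

variable {α : Type*} [LinearOrder α] [LocallyFiniteOrder α] {G : SimpleGraph α}
  {u p q r v : α} {k : ℕ}

variable (G) in
theorem edgeCount_Ioo_eq_add (hp : p ∈ Ioo u v) (Q : Finset α) :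
    edgeCount G (Ioo u v) Q =
      edgeCount G (Ioo u p) Q + edgeCount G {p} Q + edgeCount G (Ioo p v) Q := by
  have h : Ioo u v = Ioo u p ∪ {p} ∪ Ioo p v := by ext; grind
  rw [h, edgeCount_union_left, edgeCount_union_left] <;> grind [disjoint_left]

variable (G) in
theorem exists_median (h : (Ioo u v).Nonempty) (Q : Finset α) : ∃ p ∈ Ioo u v,
    edgeCount G (Ioo u p) Q ≤ edgeCount G {p} Q + edgeCount G (Ioo p v) Q ∧
    edgeCount G (Ioo p v) Q ≤ edgeCount G (Ioo u p) Q + edgeCount G {p} Q := by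
  set S := {p ∈ Ioo u v | edgeCount G (Ioo p v) Q ≤ edgeCount G (Ioo u p) Q + edgeCount G {p} Q}
  have hS : S.Nonempty := by
    obtain ⟨m, hm, hmax⟩ := exists_max_image (Ioo u v) id h
    have hempty : Ioo m v = ∅ := by
      refine eq_empty_of_forall_notMem fun x hx => ?_
      have := hmax x
      grind
    exact ⟨m, mem_filter.2 ⟨hm, by simp [hempty, edgeCount]⟩⟩
  obtain ⟨p, hpS, hmin⟩ := exists_min_image S id hS
  obtain ⟨hp, hle⟩ := mem_filter.1 hpS
  refine ⟨p, hp, ?_, hle⟩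
  rcases (Ioo u p).eq_empty_or_nonempty with hempty | hne
  · simp [hempty, edgeCount]
  obtain ⟨m, hm, hmax⟩ := exists_max_image (Ioo u p) id hne
  have hmS : m ∉ S := by have := hmin m; grind
  have hempty : Ioo m p = ∅ := by
    refine eq_empty_of_forall_notMem fun x hx => ?_
    have := hmax x
    grind
  have h₁ := edgeCount_Ioo_eq_add G hm Q
  have h₂ := edgeCount_Ioo_eq_add G (u := m) (v := v) (p := p) (by grind) Q
  have h₃ : edgeCount G (Ioo m p) Q = 0 := by simp [hempty, edgeCount]
  have : ¬ edgeCount G (Ioo m v) Q ≤ edgeCount G (Ioo u m) Q + edgeCount G {m} Q := by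
    grind
  omega

/-- No edge in the part of the drawing cut off by `uv` passes over the vertex `p` from `[u, q]` to
`[r, v]`, except possibly `qr` and `uv`. Here `qr` passes over `p`, or `q = p = r`. -/
structure IsSeparator (G : SimpleGraph α) (u v p q r : α) : Prop where
  le_left : u ≤ q
  right_le : r ≤ v
  eq_or_lt : q = p ∧ p = r ∨ q < p ∧ p < r
  maximal : ∀ x y, G.Adj x y → u ≤ x → x ≤ q → x < p → p < y → r ≤ y → y ≤ v →
    x = q ∧ y = r ∨ x = u ∧ y = v

variable (G) in
theorem exists_isSeparator (hp : p ∈ Ioo u v) : ∃ q r, IsSeparator G u v p q r ∧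
    (q = p ∧ r = p ∨ q < p ∧ p < r ∧ G.Adj q r ∧ (u < q ∨ r < v)) := by
  classical
  set S : Finset (α × α) := {e ∈ Ico u p ×ˢ Ioc p v | G.Adj e.1 e.2 ∧ (u < e.1 ∨ e.2 < v)}
  rcases S.eq_empty_or_nonempty with hS | hS
  · refine ⟨p, p, ⟨by grind, by grind, .inl ⟨rfl, rfl⟩, ?_⟩, .inl ⟨rfl, rfl⟩⟩
    intro x y hadj
    have : (x, y) ∉ S := by grind
    grind
  · obtain ⟨⟨q, r⟩, hqr, hmax⟩ := exists_max_image S (fun e => #(Icc e.1 e.2)) hS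
    have hqr' := (mem_filter.1 hqr).2
    refine ⟨q, r, ⟨by grind, by grind, by grind, ?_⟩, .inr (by grind)⟩
    intro x y hadj hu hxq hxp hpy hry hyv
    by_contra hne
    have : Icc q r = Icc x y :=
      eq_of_subset_of_card_le (Icc_subset_Icc hxq hry) (hmax (x, y) (by grind))
    have : x ∈ Icc q r := by grind
    have : y ∈ Icc q r := by grind
    grind

variable [Fintype α]

/-- The number of edges crossing the chord `uv`, which need not be an edge. -/
noncomputable def crossingDegree (G : SimpleGraph α) (u v : α) : ℕ :=
  edgeCount G (Ioo u v) (outside u v)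

namespace IsSeparator

theorem crossingDegree_left_le (h : IsSeparator G u v p q r) : crossingDegree G u q ≤
    edgeCount G (Ioo u p) (outside u v) + edgeCount G (Ioo q r) (Ico u q) := by
  obtain ⟨hu, hv, _, hmax⟩ := h
  have hout : outside u q = outside u v ∪ Ioc q v := by ext; grind
  rw [crossingDegree, hout, edgeCount_union_right, edgeCount_comm (Ioo q r)]
  · refine add_le_add (edgeCount_mono (by grind) Subset.rfl) ?_
    exact edgeCount_le_of_forall_adj fun x hx y hy hadj => by grind
  · grind [disjoint_left]

theorem crossingDegree_right_le (h : IsSeparator G u v p q r) : crossingDegree G r v ≤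
    edgeCount G (Ioo p v) (outside u v) + edgeCount G (Ioo q r) (Ioc r v) := by
  obtain ⟨hu, hv, _, hmax⟩ := h
  have hout : outside r v = outside u v ∪ Ico u r := by ext; grind
  rw [crossingDegree, hout, edgeCount_union_right, edgeCount_comm (Ioo r v) (Ico u r)]
  · refine add_le_add (edgeCount_mono (by grind) Subset.rfl) ?_
    exact edgeCount_le_of_forall_adj fun x hx y hy hadj => by grind
  · grind [disjoint_left]

theorem crossingDegree_left_right_le (h : IsSeparator G u v p q r) (hqp : q < p) (hpr : p < r) :
    crossingDegree G u r ≤ edgeCount G (Ioo u p) (outside u v) + edgeCount G {p} (outside u v) +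
      edgeCount G (Ioo p r) (outside u v) + edgeCount G (Ioo q r) (Ioc r v) := by
  obtain ⟨hu, hv, -, hmax⟩ := h
  have hout : outside u r = outside u v ∪ Ioc r v := by ext; grind
  rw [crossingDegree, hout, edgeCount_union_right, edgeCount_Ioo_eq_add G (p := p) (by grind)]
  · gcongr
    exact edgeCount_le_of_forall_adj fun x hx y hy hadj => by grind
  · grind [disjoint_left]

theorem crossingDegree_right_left_le (h : IsSeparator G u v p q r) (hqp : q < p) (hpr : p < r) :
    crossingDegree G q v ≤ edgeCount G (Ioo q p) (outside u v) + edgeCount G {p} (outside u v) +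
      edgeCount G (Ioo p v) (outside u v) + edgeCount G (Ioo q r) (Ico u q) := by
  obtain ⟨hu, hv, -, hmax⟩ := h
  have hout : outside q v = outside u v ∪ Ico u q := by ext; grind
  rw [crossingDegree, hout, edgeCount_union_right, edgeCount_Ioo_eq_add G (p := p) (by grind),
    edgeCount_comm _ (Ico u q), edgeCount_comm _ (Ico u q)]
  · gcongr
    exact edgeCount_le_of_forall_adj fun x hx y hy hadj => by grind
  · grind [disjoint_left]

theorem crossingDegree_eq (h : IsSeparator G u v p q r) (hqp : q < p) (hpr : p < r) :
    crossingDegree G q r = edgeCount G (Ioo q p) (outside u v) + edgeCount G {p} (outside u v) +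
      edgeCount G (Ioo p r) (outside u v) + edgeCount G (Ioo q r) (Ico u q) +
      edgeCount G (Ioo q r) (Ioc r v) := by
  obtain ⟨hu, hv, -, -⟩ := h
  have hout : outside q r = outside u v ∪ Ico u q ∪ Ioc r v := by ext; grind
  rw [crossingDegree, hout, edgeCount_union_right, edgeCount_union_right,
    edgeCount_Ioo_eq_add G (p := p) (by grind)] <;> grind [disjoint_left]

end IsSeparator

-- The median `p` of the edges crossing `uv` is an apex if no edge passes over it. Otherwise one of
-- the ends of the longest edge passing over it is.
theorem exists_apex (hG : ∀ x y, G.Adj x y → crossingDegree G x y ≤ k)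
    (huv : crossingDegree G u v ≤ k) (hne : (Ioo u v).Nonempty) :
    ∃ p ∈ Ioo u v, crossingDegree G u p ≤ k ∧ crossingDegree G p v ≤ k := by
  obtain ⟨p, hp, hL, hR⟩ := exists_median G hne (outside u v)
  obtain ⟨q, r, h, hcases⟩ := exists_isSeparator G hp
  have hsplit := edgeCount_Ioo_eq_add G hp (outside u v)
  rw [← crossingDegree] at hsplit
  have hleft := h.crossingDegree_left_le
  have hright := h.crossingDegree_right_le
  rcases hcases with ⟨rfl, rfl⟩ | ⟨hqp, hpr, hqr, hproper⟩
  · have hzero (Q : Finset α) : edgeCount G (Ioo r r) Q = 0 := by simp [edgeCount]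
    exact ⟨r, hp, by grind, by grind⟩
  have := h.crossingDegree_eq hqp hpr
  have := h.crossingDegree_left_right_le hqp hpr
  have := h.crossingDegree_right_left_le hqp hpr
  have := hG _ _ hqr
  by_cases hr : r < v ∧ edgeCount G (Ioo u p) (outside u v) + edgeCount G {p} (outside u v) +
      edgeCount G (Ioo p r) (outside u v) + edgeCount G (Ioo q r) (Ioc r v) ≤ k
  · exact ⟨r, by grind, by omega, by omega⟩
  · have hq : edgeCount G (Ioo q p) (outside u v) + edgeCount G {p} (outside u v) +
        edgeCount G (Ioo p v) (outside u v) + edgeCount G (Ioo q r) (Ico u q) ≤ k := by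
      rcases h.right_le.eq_or_lt with rfl | hrv
      · omega
      · have := not_and.1 hr hrv
        omega
    have huq : u < q := by
      refine h.le_left.lt_of_ne ?_
      rintro rfl
      exact hr ⟨hproper.resolve_left (lt_irrefl _), by omega⟩
    exact ⟨q, by grind, by omega, by omega⟩

end Apex

section Potential

/-- The credit held by a chord crossed by `x` edges that have `r` endpoints on its cut-off side. The
values were found by computer search, so that `credit_triangle` holds. -/
def credit (x : ℕ) : ℕ → ℕ
  | 0 => 0
  | 1 => min 6 (x + 3)
  | r => ((r + 1) * (x + 1) + 5) / 2

theorem credit_mono (x : ℕ) : Monotone (credit x) := by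
  refine monotone_nat_of_le_succ fun r => ?_
  match r with
  | 0 => exact Nat.zero_le _
  | 1 => simp only [credit]; omega
  | r + 2 =>
    simp only [credit]
    gcongr 1
    nlinarith

-- The sides `1, 2, 3` are the base `uv` and the legs `up`, `pv`. Of the edges crossing the
-- triangle, `cᵢ` cross the side `i` and end at the opposite corner and `yᵢⱼ` cross the sides `i`
-- and `j`; the latter have `gᵢⱼ` ends beyond the leg involved, or beyond the leg `i` if both sides
-- are legs. All quantifiers are bounded, so that `decide` can evaluate the statement.
set_option synthInstance.maxSize 4000 in
theorem credit_triangle : ∀ y₁₂ ≤ 5, ∀ y₁₃ ≤ 5 - y₁₂, ∀ y₂₃ ≤ 5 - max y₁₂ y₁₃,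
    ∀ c₁ ≤ 5 - (y₁₂ + y₁₃), ∀ c₂ ≤ 5 - (y₁₂ + y₂₃), ∀ c₃ ≤ 5 - (y₁₃ + y₂₃),
    ∀ g₁₂ ∈ Icc (min 1 y₁₂) y₁₂, ∀ g₁₃ ∈ Icc (min 1 y₁₃) y₁₃,
    ∀ g₂₃ ≤ y₂₃, ∀ g₃₂ ≤ y₂₃, y₂₃ ≤ g₂₃ * g₃₂ →
    6 * (c₂ + c₃ + y₂₃) + credit (c₁ + y₁₂ + y₁₃) (min c₁ 1 + g₁₂ + g₁₃) ≤
      6 + (c₂ + y₁₂ + y₂₃) + (c₃ + y₁₃ + y₂₃) +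
      (c₁ * c₂ + c₁ * c₃ + c₂ * c₃ + c₁ * y₂₃ + c₂ * y₁₃ + c₃ * y₁₂) +
      credit (c₂ + y₁₂ + y₂₃) (max c₂ (max g₁₂ g₂₃)) +
      credit (c₃ + y₁₃ + y₂₃) (max c₃ (max g₁₃ g₃₂)) := by
  decide +kernel

end Potential

section Induction

variable {α : Type*} [Fintype α] [LinearOrder α] [LocallyFiniteOrder α] {G : SimpleGraph α}
  {u p v : α}

open Region in
/-- The types of the edges in the part cut off by `uv`, other than `uv` itself, that do not lie
strictly beyond one of the sides `up` and `pv` of the triangle `u < p < v`. -/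
def edgeTypes : Finset (Region × Region) :=
  {(left, apex), (apex, right), (first, right), (left, second), (first, second)}

theorem exists_edgeTypes {x y : α} (hp : p ∈ Ioo u v) (hxy : x < y)
    (he : s(x, y) ∈ innerEdges G u v) (hup : s(x, y) ∉ innerEdges G u p)
    (hpv : s(x, y) ∉ innerEdges G p v) :
    ∃ t ∈ edgeTypes, x ∈ region u p v t.1 ∧ y ∈ region u p v t.2 := by
  simp only [mk_mem_innerEdges, Ne, Sym2.eq_iff] at he hup hpv
  simp only [edgeTypes, mem_insert, mem_singleton, exists_eq_or_imp, exists_eq_left, region]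
  grind

variable (G) in
theorem card_innerEdges_le (hp : p ∈ Ioo u v) : #(innerEdges G u v) ≤
    #(innerEdges G u p) + #(innerEdges G p v) +
      ∑ t ∈ edgeTypes, regionEdgeCount G u p v t.1 t.2 := by
  classical
  have hcover : #(innerEdges G u v \ (innerEdges G u p ∪ innerEdges G p v)) ≤
      ∑ t ∈ edgeTypes, regionEdgeCount G u p v t.1 t.2 := by
    refine card_le_sum_edgeCount fun e he => ?_
    induction e with
    | _ x y =>
      simp only [mem_sdiff, mem_union, not_or] at he
      have hadj := (mk_mem_innerEdges.1 he.1).1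
      rcases hadj.ne.lt_or_gt with hxy | hyx
      · obtain ⟨t, ht, hx, hy⟩ := exists_edgeTypes hp hxy he.1 he.2.1 he.2.2
        exact ⟨t, ht, x, hx, y, hy, hadj, rfl⟩
      · rw [Sym2.eq_swap] at he ⊢
        obtain ⟨t, ht, hy, hx⟩ := exists_edgeTypes hp hyx he.1 he.2.1 he.2.2
        exact ⟨t, ht, y, hy, x, hx, hadj.symm, rfl⟩
  have := card_union_le (innerEdges G u p) (innerEdges G p v)
  have := card_le_card_sdiff_add_card (s := innerEdges G u v)
    (t := innerEdges G u p ∪ innerEdges G p v)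
  omega

open Region in
theorem sum_edgeTypes (E : Region → Region → ℕ) : ∑ t ∈ edgeTypes, E t.1 t.2 =
    E left apex + E apex right + E first right + E left second + E first second := by
  rw [edgeTypes]
  repeat rw [sum_insert (by decide)]
  rw [sum_singleton]
  ring

open Region in
theorem sum_crossingTypes {E : Region → Region → ℕ} (hE : ∀ i j, E i j = E j i) :
    ∑ t ∈ crossingTypes, E t.1.1 t.1.2 * E t.2.1 t.2.2 =
      E left apex * (E first right + E first outer + E first second) +
      E apex right * (E left second + E second outer + E first second) +
      (E apex outer * E first right + E apex outer * E left second +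
        E first right * E left second + E apex outer * E first second +
        E first right * E second outer + E left second * E first outer) := by
  rw [crossingTypes]
  repeat rw [sum_insert (by decide)]
  rw [sum_singleton, hE second left, hE second first]
  ring

theorem regionEdgeCount_comm (i j : Region) :
    regionEdgeCount G u p v i j = regionEdgeCount G u p v j i :=
  edgeCount_comm _ _

variable (G) in
open Region in
theorem crossingDegree_base (hp : p ∈ Ioo u v) : crossingDegree G u v =
    regionEdgeCount G u p v apex outer + regionEdgeCount G u p v first outer +
      regionEdgeCount G u p v second outer := by
  rw [crossingDegree, edgeCount_Ioo_eq_add G hp]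
  simp only [regionEdgeCount, region]
  ring

variable (G) in
open Region in
theorem crossingDegree_left (hp : p ∈ Ioo u v) : crossingDegree G u p =
    regionEdgeCount G u p v first right + regionEdgeCount G u p v first outer +
      regionEdgeCount G u p v first second := by
  have hout : outside u p = {v} ∪ outside u v ∪ Ioo p v := by ext; grind
  rw [crossingDegree, hout, edgeCount_union_right, edgeCount_union_right]
  · rfl
  all_goals grind [disjoint_left]

variable (G) in
open Region in
theorem crossingDegree_right (hp : p ∈ Ioo u v) : crossingDegree G p v =
    regionEdgeCount G u p v left second + regionEdgeCount G u p v second outer +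
      regionEdgeCount G u p v first second := by
  have hout : outside p v = {u} ∪ outside u v ∪ Ioo u p := by ext; grind
  rw [crossingDegree, hout, edgeCount_union_right, edgeCount_union_right,
    regionEdgeCount_comm left, regionEdgeCount_comm first]
  · rfl
  all_goals grind [disjoint_left]

/-- The endpoints strictly between `u` and `v` of the edges crossing the chord `uv`. -/
noncomputable def chordBoundary (G : SimpleGraph α) (u v : α) : Finset α :=
  boundary G (Ioo u v) (outside u v)

variable (G) in
open Region in
theorem card_chordBoundary_base_le (hp : p ∈ Ioo u v) : #(chordBoundary G u v) ≤
    min (regionEdgeCount G u p v apex outer) 1 + #(boundary G (Ioo u p) (outside u v)) +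
      #(boundary G (Ioo p v) (outside u v)) := by
  have hIoo : Ioo u v = {p} ∪ Ioo u p ∪ Ioo p v := by ext; grind
  rw [chordBoundary, hIoo, boundary_union_left, boundary_union_left]
  refine (card_union_le _ _).trans (Nat.add_le_add_right ((card_union_le _ _).trans ?_) _)
  exact Nat.add_le_add_right (le_min card_boundary_le_edgeCount card_boundary_singleton_left_le) _

variable (G) in
open Region in
theorem le_card_chordBoundary_left (hp : p ∈ Ioo u v) : max (regionEdgeCount G u p v first right)
    (max #(boundary G (Ioo u p) (outside u v)) #(boundary G (Ioo u p) (Ioo p v))) ≤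
      #(chordBoundary G u p) := by
  have hmono {Q} (hQ : Q ⊆ outside u p) : #(boundary G (Ioo u p) Q) ≤ #(chordBoundary G u p) :=
    card_le_card (boundary_mono Subset.rfl hQ)
  refine max_le ?_ (max_le (hmono (by grind)) (hmono (by grind)))
  exact card_boundary_singleton_right.symm.trans_le (hmono (by grind))

variable (G) in
open Region in
theorem le_card_chordBoundary_right (hp : p ∈ Ioo u v) : max (regionEdgeCount G u p v left second)
    (max #(boundary G (Ioo p v) (outside u v)) #(boundary G (Ioo p v) (Ioo u p))) ≤
      #(chordBoundary G p v) := by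
  have hmono {Q} (hQ : Q ⊆ outside p v) : #(boundary G (Ioo p v) Q) ≤ #(chordBoundary G p v) :=
    card_le_card (boundary_mono Subset.rfl hQ)
  refine max_le ?_ (max_le (hmono (by grind)) (hmono (by grind)))
  rw [regionEdgeCount_comm]
  exact card_boundary_singleton_right.symm.trans_le (hmono (by grind))

/-- The credit held by the chord `uv`, whose cut-off side is the one between `u` and `v`. -/
noncomputable def chordCredit (G : SimpleGraph α) (u v : α) : ℕ :=
  credit (crossingDegree G u v) #(chordBoundary G u v)

theorem regionEdgeCount_le_one {i j : Region} (hi : #(region u p v i) = 1)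
    (hj : #(region u p v j) = 1) : regionEdgeCount G u p v i j ≤ 1 := by
  classical
  exact (G.card_interedges_le_mul _ _).trans_eq (by rw [hi, hj])

open Region in
theorem chordCredit_triangle (hp : p ∈ Ioo u v) (h : crossingDegree G u v ≤ 5)
    (hleft : crossingDegree G u p ≤ 5) (hright : crossingDegree G p v ≤ 5) :
    6 * ∑ t ∈ edgeTypes, regionEdgeCount G u p v t.1 t.2 + chordCredit G u v ≤
      18 + ∑ t ∈ crossingTypes, regionEdgeCount G u p v t.1.1 t.1.2 *
        regionEdgeCount G u p v t.2.1 t.2.2 + chordCredit G u p + chordCredit G p v := by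
  have hbase := crossingDegree_base G hp
  have hl := crossingDegree_left G hp
  have hr := crossingDegree_right G hp
  have htriangle := credit_triangle (regionEdgeCount G u p v first outer) (by omega)
    (regionEdgeCount G u p v second outer) (by omega)
    (regionEdgeCount G u p v first second) (by omega)
    (regionEdgeCount G u p v apex outer) (by omega)
    (regionEdgeCount G u p v first right) (by omega)
    (regionEdgeCount G u p v left second) (by omega)
    #(boundary G (Ioo u p) (outside u v))
    (mem_Icc.2 ⟨min_one_edgeCount_le_card_boundary, card_boundary_le_edgeCount⟩)
    #(boundary G (Ioo p v) (outside u v))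
    (mem_Icc.2 ⟨min_one_edgeCount_le_card_boundary, card_boundary_le_edgeCount⟩)
    #(boundary G (Ioo u p) (Ioo p v)) card_boundary_le_edgeCount
    #(boundary G (Ioo p v) (Ioo u p))
    (card_boundary_le_edgeCount.trans_eq (edgeCount_comm _ _)) edgeCount_le_card_boundary_mul
  have hbaseCredit := credit_mono (crossingDegree G u v) (card_chordBoundary_base_le G hp)
  have hleftCredit := credit_mono (crossingDegree G u p) (le_card_chordBoundary_left G hp)
  have hrightCredit := credit_mono (crossingDegree G p v) (le_card_chordBoundary_right G hp)
  have hside {a x : ℕ} (ha : a ≤ 1) (hx : x ≤ 5) : 6 * a + x ≤ 6 + a * x := by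
    interval_cases a <;> omega
  have hleftSide := hside (a := regionEdgeCount G u p v left apex)
    (regionEdgeCount_le_one (card_singleton u) (card_singleton p)) hleft
  have hrightSide := hside (a := regionEdgeCount G u p v apex right)
    (regionEdgeCount_le_one (card_singleton p) (card_singleton v)) hright
  rw [sum_edgeTypes, sum_crossingTypes regionEdgeCount_comm, ← hl, ← hr]
  rw [← hbase, ← hl, ← hr] at htriangle
  unfold chordCredit
  omega

theorem innerEdges_eq_empty (h : Ioo u v = ∅) : innerEdges G u v = ∅ := by
  refine eq_empty_of_forall_notMem fun e => ?_
  induction e with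
  | _ x y =>
    rw [mk_mem_innerEdges, Ne, Sym2.eq_iff]
    have hx : x ∉ Ioo u v := by simp [h]
    have hy : y ∉ Ioo u v := by simp [h]
    grind [SimpleGraph.Adj.ne]

theorem six_mul_card_innerEdges_add_chordCredit_le
    (hG : ∀ x y, G.Adj x y → crossingDegree G x y ≤ 5) (huv : crossingDegree G u v ≤ 5) :
    6 * #(innerEdges G u v) + chordCredit G u v ≤ 18 * #(Ioo u v) + #(innerCrossings G u v) := by
  induction hn : #(Ioo u v) using Nat.strong_induction_on generalizing u v with
  | _ n ih =>
  subst hn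
  rcases (Ioo u v).eq_empty_or_nonempty with hempty | hne
  · simp [innerEdges_eq_empty hempty, chordCredit, chordBoundary, hempty, boundary, credit]
  obtain ⟨p, hp, hup, hpv⟩ := exists_apex hG huv hne
  have hcard : #(Ioo u v) = #(Ioo u p) + #(Ioo p v) + 1 := by
    have h : Ioo u v = cons p (Ioo u p ∪ Ioo p v) (by grind) := by ext; grind
    rw [h, card_cons, card_union_of_disjoint (by grind [disjoint_left])]
  have := ih _ (by omega) hup rfl
  have := ih _ (by omega) hpv rfl
  have := chordCredit_triangle hp huv hup hpv
  have := card_innerEdges_le G hp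
  have := card_innerCrossings_add_sum_crossingTypes_le G hp
  omega

end Induction

section Linear

variable {α : Type*} [Fintype α] [LinearOrder α] {G : SimpleGraph α} {x y : α}

theorem card_crossings_deleteEdges_add_crossingDegree_le [LocallyFiniteOrder α] (h : G.Adj x y) :
    #(crossings (G.deleteEdges {s(x, y)})) + crossingDegree G x y ≤ #(crossings G) := by
  classical
  have hcrossed : crossingDegree G x y ≤ #{z ∈ crossings G | s(x, y) ∈ z} := by
    refine card_le_card_of_injOn (fun f => s(s(x, y), s(f.1, f.2))) ?_ ?_
    · rintro ⟨z, w⟩ hf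
      obtain ⟨hz, hw, hzw⟩ := G.mem_interedges_iff.1 hf
      exact mem_filter.2 ⟨mk_mem_crossings h hzw hz hw, Sym2.mem_mk_left _ _⟩
    · rintro ⟨z, w⟩ hf ⟨z', w'⟩ hf' heq
      have := G.mem_interedges_iff.1 hf
      have := G.mem_interedges_iff.1 hf'
      simp only [Sym2.congr_right, Sym2.eq_iff] at heq
      grind
  have huncrossed : #(crossings (G.deleteEdges {s(x, y)})) ≤ #{z ∈ crossings G | s(x, y) ∉ z} := by
    refine card_le_card fun z hz => ?_
    obtain ⟨a, b, c, d, hab, hbc, hcd, hac, hbd, rfl⟩ := mem_crossings.1 hz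
    rw [SimpleGraph.deleteEdges_adj, Set.mem_singleton_iff] at hac hbd
    refine mem_filter.2 ⟨mem_crossings.2 ⟨a, b, c, d, hab, hbc, hcd, hac.1, hbd.1, rfl⟩, ?_⟩
    rw [Sym2.mem_iff]
    rintro (h | h)
    exacts [hac.2 h.symm, hbd.2 h.symm]
  have := card_filter_add_card_filter_not (s := crossings G) (fun z => s(x, y) ∈ z)
  omega

theorem six_mul_ncard_edgeSet_le_of_crossingDegree_le [LocallyFiniteOrder α]
    (hG : ∀ x y, G.Adj x y → crossingDegree G x y ≤ 5) :
    6 * G.edgeSet.ncard ≤ 18 * Fintype.card α + #(crossings G) := by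
  classical
  cases isEmpty_or_nonempty α
  · simp [Set.eq_empty_of_isEmpty]
  obtain ⟨u, hu⟩ := Finite.exists_min (id : α → α)
  obtain ⟨v, hv⟩ := Finite.exists_max (id : α → α)
  have hIcc (x : α) : x ∈ Icc u v := mem_Icc.2 ⟨hu x, hv x⟩
  have hdeg : crossingDegree G u v = 0 := by
    rw [crossingDegree, edgeCount_comm, outside, eq_univ_of_forall hIcc, compl_univ]
    simp [edgeCount]
  have hpotential := six_mul_card_innerEdges_add_chordCredit_le hG (hdeg.trans_le (Nat.zero_le 5))
  have hedges : G.edgeSet.ncard ≤ #(innerEdges G u v) + 1 := by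
    have hsub : G.edgeSet ⊆ ↑(insert s(u, v) (innerEdges G u v)) := by
      intro e he
      by_cases h : e = s(u, v) <;> simp [h, innerEdges, he, hIcc]
    have := Set.ncard_le_ncard hsub
    rw [Set.ncard_coe_finset] at this
    exact this.trans (card_insert_le _ _)
  have hvertices : #(Ioo u v) < Fintype.card α := card_lt_univ_of_notMem left_notMem_Ioo
  have hcrossings : #(innerCrossings G u v) ≤ #(crossings G) := card_filter_le _ _
  omega

theorem six_mul_ncard_edgeSet_le (G : SimpleGraph α) :
    6 * G.edgeSet.ncard ≤ 18 * Fintype.card α + #(crossings G) := by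
  let _ : LocallyFiniteOrder α := Fintype.toLocallyFiniteOrder
  induction hm : G.edgeSet.ncard using Nat.strong_induction_on generalizing G with
  | _ m ih =>
    subst hm
    by_cases hG : ∀ x y, G.Adj x y → crossingDegree G x y ≤ 5
    · exact six_mul_ncard_edgeSet_le_of_crossingDegree_le hG
    push Not at hG
    obtain ⟨x, y, hxy, hdeg⟩ := hG
    have hcard : (G.deleteEdges {s(x, y)}).edgeSet.ncard + 1 = G.edgeSet.ncard := by
      rw [SimpleGraph.edgeSet_deleteEdges]
      exact Set.ncard_sdiff_singleton_add_one hxy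
    have := ih _ (by omega) (G.deleteEdges {s(x, y)}) rfl
    have := card_crossings_deleteEdges_add_crossingDegree_le hxy
    omega

end Linear

section Sampling

variable {α : Type*} [Fintype α] {x : ℝ}

/-- The probability of `S` as a random vertex set that contains each vertex independently with
probability `x`. -/
def sampleWeight (x : ℝ) (S : Finset α) : ℝ := x ^ #S * (1 - x) ^ (Fintype.card α - #S)

theorem sampleWeight_nonneg (h₀ : 0 ≤ x) (h₁ : x ≤ 1) (S : Finset α) : 0 ≤ sampleWeight x S :=
  mul_nonneg (pow_nonneg h₀ _) (pow_nonneg (sub_nonneg.2 h₁) _)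

variable [DecidableEq α]

theorem sum_sampleWeight_superset (x : ℝ) (A : Finset α) :
    ∑ S with A ⊆ S, sampleWeight x S = x ^ #A := by
  have h := prod_add (fun _ => x) (fun i => if i ∈ A then 0 else 1 - x) (univ : Finset α)
  have hprod : ∏ i : α, (x + if i ∈ A then 0 else 1 - x) = x ^ #A := by
    have (i : α) : (x + if i ∈ A then 0 else 1 - x) = if i ∈ A then x else 1 := by
      split_ifs <;> ring
    simp only [this, prod_ite_mem, univ_inter, prod_const]
  rw [← hprod, h, powerset_univ, sum_filter]
  refine sum_congr rfl fun S _ => ?_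
  split_ifs with hAS
  · rw [prod_const, sampleWeight, ← card_univ, ← card_sdiff_of_subset (subset_univ S),
      prod_congr rfl fun i hi => if_neg fun hiA => (mem_sdiff.1 hi).2 (hAS hiA), prod_const]
  · obtain ⟨i, hiA, hiS⟩ := not_subset.1 hAS
    have hzero : ∏ i ∈ univ \ S, (if i ∈ A then 0 else 1 - x) = 0 :=
      prod_eq_zero (mem_sdiff.2 ⟨mem_univ i, hiS⟩) (if_pos hiA)
    rw [hzero, mul_zero]

theorem sum_sampleWeight_mul_card {β : Type*} {F : Finset β} {supp : β → Finset α} {k : ℕ}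
    (x : ℝ) (h : ∀ b ∈ F, #(supp b) = k) :
    ∑ S, sampleWeight x S * #{b ∈ F | supp b ⊆ S} = x ^ k * #F := by
  calc ∑ S, sampleWeight x S * #{b ∈ F | supp b ⊆ S}
      = ∑ b ∈ F, ∑ S with supp b ⊆ S, sampleWeight x S := by
        simp only [card_filter, Nat.cast_sum, mul_sum, sum_filter]
        rw [sum_comm]
        simp
    _ = ∑ _b ∈ F, x ^ k := sum_congr rfl fun b hb => by rw [sum_sampleWeight_superset, h b hb]
    _ = x ^ k * #F := by rw [sum_const, nsmul_eq_mul, mul_comm]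

end Sampling

section Graph

variable {α : Type*} [LinearOrder α] {G : SimpleGraph α}

/-- The endpoints of the two edges in a pair of edges. -/
def endpoints (z : Sym2 (Sym2 α)) : Finset α := z.toFinset.biUnion Sym2.toFinset

theorem endpoints_mk (a b c d : α) : endpoints s(s(a, b), s(c, d)) = {a, b, c, d} := by
  ext
  simp only [endpoints, mem_biUnion, Sym2.mem_toFinset, Sym2.mem_iff, exists_eq_or_imp,
    exists_eq_left, mem_insert, mem_singleton]
  tauto

variable [Fintype α]

theorem card_endpoints_of_mem_crossings {z : Sym2 (Sym2 α)} (hz : z ∈ crossings G) :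
    #(endpoints z) = 4 := by
  obtain ⟨a, b, c, d, hab, hbc, hcd, -, -, rfl⟩ := mem_crossings.1 hz
  rw [endpoints_mk]
  grind

open Classical in
theorem six_mul_card_edges_within_le (G : SimpleGraph α) (S : Finset α) :
    6 * #{e ∈ G.edgeFinset | e.toFinset ⊆ S} ≤
      18 * #S + #{z ∈ crossings G | endpoints z ⊆ S} := by
  have hedges : #{e ∈ G.edgeFinset | e.toFinset ⊆ S} ≤ (G.induce (S : Set α)).edgeSet.ncard := by
    rw [← Set.ncard_coe_finset]
    refine (Set.ncard_le_ncard (t := Sym2.map Subtype.val '' (G.induce (S : Set α)).edgeSet)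
      fun e he => ?_).trans Set.ncard_image_le
    obtain ⟨hadj, hsub⟩ := mem_filter.1 he
    induction e with
    | _ a b =>
      have ha : a ∈ S := hsub (Sym2.mem_toFinset.2 (Sym2.mem_mk_left a b))
      have hb : b ∈ S := hsub (Sym2.mem_toFinset.2 (Sym2.mem_mk_right a b))
      exact ⟨s(⟨a, ha⟩, ⟨b, hb⟩), (SimpleGraph.mem_edgeFinset (G := G)).1 hadj, rfl⟩
  have hcrossings : #(crossings (G.induce (S : Set α))) ≤
      #{z ∈ crossings G | endpoints z ⊆ S} := by
    refine card_le_card_of_injOn (Sym2.map (Sym2.map Subtype.val)) ?_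
      (Sym2.map.injective (Sym2.map.injective Subtype.val_injective)).injOn
    intro z hz
    obtain ⟨a, b, c, d, hab, hbc, hcd, hac, hbd, rfl⟩ := mem_crossings.1 hz
    refine mem_filter.2 ⟨mem_crossings.2 ⟨a, b, c, d, hab, hbc, hcd, hac, hbd, rfl⟩, ?_⟩
    simp [endpoints_mk, insert_subset_iff]
  have := six_mul_ncard_edgeSet_le (G.induce (S : Set α))
  have hcard : Fintype.card (S : Set α) = #S := Fintype.card_coe S
  omega

theorem six_mul_sq_mul_ncard_edgeSet_le (G : SimpleGraph α) {x : ℝ} (h₀ : 0 ≤ x) (h₁ : x ≤ 1) :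
    6 * (x ^ 2 * G.edgeSet.ncard) ≤ 18 * (x * Fintype.card α) + x ^ 4 * #(crossings G) := by
  classical
  have hvertices := sum_sampleWeight_mul_card (F := univ) (supp := fun v : α => {v}) x
    fun v _ => card_singleton v
  have hedges := sum_sampleWeight_mul_card (F := G.edgeFinset) (supp := Sym2.toFinset) x
    fun e he => Sym2.card_toFinset_of_not_isDiag e (G.not_isDiag_of_mem_edgeFinset he)
  have hcrossings := sum_sampleWeight_mul_card (F := crossings G) (supp := endpoints) x
    fun z => card_endpoints_of_mem_crossings
  simp only [singleton_subset_iff, filter_univ_mem, pow_one, card_univ] at hvertices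
  rw [← SimpleGraph.coe_edgeFinset, Set.ncard_coe_finset, ← hedges, ← hvertices,
    ← hcrossings, mul_sum, mul_sum, ← sum_add_distrib]
  refine sum_le_sum fun S _ => ?_
  have h := mul_le_mul_of_nonneg_left (Nat.cast_le (α := ℝ).2 (six_mul_card_edges_within_le G S))
    (sampleWeight_nonneg h₀ h₁ S)
  push_cast at h
  linarith

theorem cube_div_sq_le_card_crossings (G : SimpleGraph α)
    (hm : (9 / 2 : ℝ) * Fintype.card α ≤ G.edgeSet.ncard) :
    (8 / 81 : ℝ) * (G.edgeSet.ncard : ℝ) ^ 3 / (Fintype.card α : ℝ) ^ 2 ≤ #(crossings G) := by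
  rcases isEmpty_or_nonempty α with h | h
  · simp
  have hn : (0 : ℝ) < Fintype.card α := Nat.cast_pos.2 Fintype.card_pos
  have hmpos : (0 : ℝ) < G.edgeSet.ncard := by linarith
  have h := six_mul_sq_mul_ncard_edgeSet_le G (x := 9 / 2 * Fintype.card α / G.edgeSet.ncard)
    (by positivity) ((div_le_one hmpos).2 hm)
  field_simp at h ⊢
  nlinarith

end Graph

section Cyclic

variable {n : ℕ}

theorem cycBtw_iff_lt {i j k : Fin n} (hj : i < j) (hk : i < k) : cycBtw n i j k ↔ k < j := by
  have hsub {k : Fin n} (hk : i < k) : (k.val + n - i.val) % n = k.val - i.val := by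
    rw [Nat.sub_add_comm hk.le, Nat.add_mod_right, Nat.mod_eq_of_lt (by omega)]
  rw [cycBtw, hsub hk, hsub hj]
  omega

theorem crossing_of_lt {σ : Fin n → Fin n} {a b c d : Fin n} (hab : σ a < σ b) (hbc : σ b < σ c)
    (hcd : σ c < σ d) : crossing n σ s(a, c) s(b, d) := by
  refine ⟨a, c, b, d, rfl, rfl, ?_, ?_, ?_, ?_, ?_, ?_, ?_⟩
  rotate_right
  · rw [cycBtw_iff_lt (hab.trans hbc) hab, cycBtw_iff_lt (hab.trans hbc) (by omega)]
    exact iff_of_true hbc hcd.not_gt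
  all_goals
    rintro rfl
    omega

theorem card_crossings_comap_le (G : SimpleGraph (Fin n)) (σ : Fin n ≃ Fin n) :
    #(crossings (G.comap σ.symm)) ≤ {p : Sym2 (Sym2 (Fin n)) | ∃ e f : Sym2 (Fin n), p = s(e, f) ∧
          e ∈ G.edgeSet ∧ f ∈ G.edgeSet ∧ crossing n (⇑σ) e f}.ncard := by
  rw [← Set.ncard_coe_finset]
  refine Set.ncard_le_ncard_of_injOn (Sym2.map (Sym2.map σ.symm)) ?_
    (Sym2.map.injective (Sym2.map.injective σ.symm.injective)).injOn
  intro z hz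
  obtain ⟨a, b, c, d, hab, hbc, hcd, hac, hbd, rfl⟩ := mem_crossings.1 hz
  exact ⟨_, _, rfl, hac, hbd, crossing_of_lt (by simpa) (by simpa) (by simpa)⟩

end Cyclic

end OuterDrawing

theorem outer_crossing_lemma_general (n : ℕ) (G : SimpleGraph (Fin n))
    (hm : (9 / 2 : ℝ) * (n : ℝ) ≤ (G.edgeSet.ncard : ℝ)) (σ : Fin n ≃ Fin n) :
    (8 / 81 : ℝ) * (G.edgeSet.ncard : ℝ) ^ 3 / (n : ℝ) ^ 2 ≤
      (({p : Sym2 (Sym2 (Fin n)) | ∃ e f : Sym2 (Fin n), p = s(e, f) ∧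
          e ∈ G.edgeSet ∧ f ∈ G.edgeSet ∧ crossing n (⇑σ) e f}).ncard : ℝ) := by
  have hedges : (G.comap σ.symm).edgeSet.ncard = G.edgeSet.ncard :=
    Nat.card_congr (SimpleGraph.Iso.comap σ.symm G).mapEdgeSet
  have h := OuterDrawing.cube_div_sq_le_card_crossings (G.comap σ.symm)
  rw [hedges, Fintype.card_fin] at h
  exact (h hm).trans (Nat.cast_le.2 (OuterDrawing.card_crossings_comap_le G σ))

/-- Outer Crossing Lemma: if `G` is a simple graph with `n` vertices and
`m ≥ (73/16) n` edges, then in every cyclic ordering `σ` of its vertices the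
number of unordered pairs of crossing edges is at least
`(1837568/19061833) m³/n² ≈ (1/10.37) m³/n²`; in particular the outer crossing
number of `G` satisfies this bound. -/
theorem outer_crossing_lemma (n : ℕ) (G : SimpleGraph (Fin n))
    (hm : (73 / 16 : ℝ) * (n : ℝ) ≤ (G.edgeSet.ncard : ℝ)) (σ : Fin n ≃ Fin n) :
    (1837568 / 19061833 : ℝ) * (G.edgeSet.ncard : ℝ) ^ 3 / (n : ℝ) ^ 2 ≤
      (({p : Sym2 (Sym2 (Fin n)) | ∃ e f : Sym2 (Fin n), p = s(e, f) ∧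
          e ∈ G.edgeSet ∧ f ∈ G.edgeSet ∧ crossing n (⇑σ) e f}).ncard : ℝ) := by
  refine le_trans ?_ (outer_crossing_lemma_general n G (le_trans ?_ hm) σ)
  · gcongr ?_ * _ / _
    norm_num
  · gcongr ?_ * _
    norm_num
end
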